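/- arXiv:1807.07802 — 2 statements merged into one kernel-verified Lean document; each statement's English description precedes it below -/
import Mathlib

section
/- Let Γ = (V,E) be a finite simplicial graph with an edge labeling ψ : E → {2,3,4,...}. If Γ has no induced cycle of length greater than 3, and for every complete (induced) subgraph Δ of Γ the Coxeter group C(Δ) is slender, then the Coxeter group C(Γ) is coherent. -/
def Group.Slender (G : Type*) [Group G] : Prop := ∀ H : Subgroup G, H.FG

def Group.FinitelyPresented (G : Type*) [Group G] : Prop :=
  ∃ (n : ℕ) (rels : Set (FreeGroup (Fin n))), rels.Finite ∧ Nonempty (PresentedGroup rels ≃* G)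

def Group.Coherent (G : Type*) [Group G] : Prop :=
  ∀ H : Subgroup G, H.FG → Group.FinitelyPresented H

def SimpleGraph.NoInducedCycleGT3 {V : Type*} (Γ : SimpleGraph V) : Prop :=
  ∀ n : ℕ, 4 ≤ n → IsEmpty (SimpleGraph.cycleGraph n ↪g Γ)

/-- The restriction of a Coxeter matrix to a set of indices
(corresponding to an induced subgraph of the Coxeter graph). -/
def CoxeterMatrix.restrict {V : Type*} (M : CoxeterMatrix V) (S : Set V) : CoxeterMatrix S where
  M a b := M a b
  isSymm := Matrix.IsSymm.ext fun a b => M.isSymm.apply a b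
  diagonal a := M.diagonal a
  off_diagonal a b h := M.off_diagonal a b (fun hc => h (Subtype.ext hc))

/-- `M` is the Coxeter matrix associated to the simplicial graph `Γ` with edge labeling
`ψ : E → {2,3,4,...}` (recorded by the values of `M` on adjacent pairs): non-adjacent
distinct vertices get the label `0` (that is, `∞`: no relation). -/
def CoxeterMatrix.IsMatrixOf {V : Type*} (M : CoxeterMatrix V) (Γ : SimpleGraph V) : Prop :=
  (∀ v w, Γ.Adj v w → 2 ≤ M v w) ∧ (∀ v w, v ≠ w → ¬Γ.Adj v w → M v w = 0)

/-!
A finitely generated group that acts on a tree with coherent vertex groups and slender edge groups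
is finitely presented, because the relations visible on a large enough finite piece of the tree
already present it. In a chordal graph `Γ` two nonadjacent vertices are separated by a clique
(Dirac), and parabolic subgroups embed, so that `C(Γ)` is an amalgamated product of Coxeter groups
on fewer vertices over a slender one, and acts on its Bass–Serre tree: its coherence follows by
induction from the case of a complete graph, in which `C(Γ)` is itself slender.

In a slender Coxeter group no three half-spaces are pairwise disjoint, since by ping-pong the
reflections in them would generate a subgroup that is not slender. The hyperplanes of two roots that
are congruent modulo a suitable integer do not cross, so that such roots, being of finitely many
residues, fall into finitely many parallel classes. An element of the finite-index subgroup that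
preserves these classes is determined by the numbers of hyperplanes of each class that it crosses,
and these numbers are additive, so `C(Γ)` is virtually abelian and all its subgroups are finitely
presented.
-/

namespace CoxeterCoherence

/-! ### Finitely presented groups -/

section FinitelyPresented

open Group Subgroup

theorem finitelyPresented_iff {G : Type*} [Group G] :
    Group.FinitelyPresented G ↔ IsFinitelyPresented G := by
  constructor
  · rintro ⟨n, rels, hrels, ⟨e⟩⟩
    have := hrels.to_subtype
    exact .equiv e
  · intro h
    obtain ⟨n, rels, hrels, ⟨e⟩⟩ := h.exists_mulEquiv_presentedGroup
    exact ⟨n, rels, hrels, ⟨e.symm⟩⟩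

theorem coherent_iff {G : Type*} [Group G] :
    Group.Coherent G ↔ ∀ H : Subgroup G, H.FG → IsFinitelyPresented H := by
  simp only [Group.Coherent, finitelyPresented_iff]

theorem fg_map {G H : Type*} [Group G] [Group H] (f : G →* H) {K : Subgroup G} (hK : K.FG) :
    (K.map f).FG := by
  have := (Group.fg_iff_subgroup_fg K).2 hK
  exact (Group.fg_iff_subgroup_fg _).1 (Group.fg_of_surjective (f.subgroupMap_surjective K))

theorem fg_map_iff_of_injective {G H : Type*} [Group G] [Group H] {f : G →* H}
    (hf : Function.Injective f) {K : Subgroup G} : (K.map f).FG ↔ K.FG := by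
  refine ⟨fun h => ?_, fg_map f⟩
  have := (Group.fg_iff_subgroup_fg _).2 h
  let e := (K.equivMapOfInjective f hf).symm
  exact (Group.fg_iff_subgroup_fg _).1 (Group.fg_of_surjective (f := e.toMonoidHom) e.surjective)

theorem coherent_of_injective {G H : Type*} [Group G] [Group H] {f : G →* H}
    (hf : Function.Injective f) (h : Group.Coherent H) : Group.Coherent G :=
  coherent_iff.2 fun K hK =>
    have := coherent_iff.1 h (K.map f) (fg_map f hK)
    .equiv (K.equivMapOfInjective f hf).symm

theorem slender_of_injective {G H : Type*} [Group G] [Group H] {f : G →* H}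
    (hf : Function.Injective f) (h : Group.Slender H) : Group.Slender G := fun K =>
  (fg_map_iff_of_injective hf).1 (h (K.map f))

theorem subgroupComap_injective {G H : Type*} [Group G] [Group H] {f : G →* H}
    (hf : Function.Injective f) (B : Subgroup H) : Function.Injective (f.subgroupComap B) :=
  fun _ _ hxy => Subtype.ext (hf (congrArg Subtype.val hxy))

theorem isFinitelyNormallyGenerated_ker {F H : Type*} [Group F] [Group H] [Group.FG F]
    [hH : IsFinitelyPresented H] {f : F →* H} (hf : Function.Surjective f) :
    f.ker.IsFinitelyNormallyGenerated := by
  obtain ⟨n, φ, hφ, T, hTfin, hT⟩ := hH.out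
  obtain ⟨X, hX, hXfin⟩ := Group.fg_iff.1 ‹Group.FG F›
  choose y hy using fun i => hf (φ (.of i))
  let ψ := FreeGroup.lift y
  have hfψ : f.comp ψ = φ := by ext i; simp [ψ, hy]
  choose w hw using fun x => hφ (f x)
  let K := normalClosure (ψ '' T ∪ (fun x => (ψ (w x))⁻¹ * x) '' X)
  have hKker : K ≤ f.ker := by
    refine normalClosure_le_normal ?_
    rintro _ (⟨t, ht, rfl⟩ | ⟨x, -, rfl⟩)
    · change (f.comp ψ) t = 1
      rw [hfψ, ← MonoidHom.mem_ker, ← hT]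
      exact subset_normalClosure ht
    · change f ((ψ (w x))⁻¹ * x) = 1
      rw [map_mul, map_inv, ← MonoidHom.comp_apply, hfψ, hw, inv_mul_cancel]
  have hψT : normalClosure T ≤ K.comap ψ :=
    normalClosure_le_normal fun t ht => subset_normalClosure (.inl ⟨t, ht, rfl⟩)
  have hrange : ((QuotientGroup.mk' K).comp ψ).range.comap (QuotientGroup.mk' K) = ⊤ := by
    rw [eq_top_iff, ← hX, closure_le]
    exact fun x hx => ⟨w x, QuotientGroup.eq.2 (subset_normalClosure (.inr ⟨x, hx, rfl⟩))⟩
  refine ⟨_, (hTfin.image _).union (hXfin.image _), le_antisymm hKker fun x hx => ?_⟩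
  obtain ⟨v, hv⟩ : x ∈ ((QuotientGroup.mk' K).comp ψ).range.comap (QuotientGroup.mk' K) :=
    hrange ▸ mem_top x
  have hvx : (ψ v)⁻¹ * x ∈ K := QuotientGroup.eq.1 hv
  have hv1 : φ v = 1 := by
    have := hKker hvx
    rwa [MonoidHom.mem_ker, map_mul, map_inv, MonoidHom.mem_ker.1 hx, mul_one, inv_eq_one,
      ← MonoidHom.comp_apply, hfψ] at this
  have hvK : ψ v ∈ K := hψT (hT ▸ hv1)
  simpa using mul_mem hvK hvx

theorem normal_of_conj_mem_of_closure_eq_top {G : Type*} [Group G] {N : Subgroup G} {X : Set G}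
    (hX : closure X = ⊤) (h : ∀ g ∈ X, ∀ n ∈ N, g * n * g⁻¹ ∈ N)
    (h' : ∀ g ∈ X, ∀ n ∈ N, g⁻¹ * n * g ∈ N) : N.Normal := by
  rw [← normalizer_eq_top_iff, eq_top_iff, ← hX, closure_le]
  refine fun g hg => mem_normalizer_iff.2 fun n => ⟨h g hg n, fun hn => ?_⟩
  simpa [mul_assoc] using h' g hg _ hn

theorem exists_fg_map_eq {G H : Type*} [Group G] [Group H] {f : G →* H}
    (hf : Function.Surjective f) {K : Subgroup H} (hK : K.FG) :
    ∃ L : Subgroup G, L.FG ∧ L.map f = K := by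
  obtain ⟨S, rfl, hS⟩ := (Subgroup.fg_iff K).1 hK
  refine ⟨closure (Function.surjInv hf '' S), (Subgroup.fg_iff _).2 ⟨_, rfl, hS.image _⟩, ?_⟩
  rw [MonoidHom.map_closure, ← Set.image_comp, Function.comp_surjInv, Set.image_id]

theorem fg_of_fg_ker {G Q : Type*} [Group G] [Group Q] [hQ : Group.FG Q] {f : G →* Q}
    (hf : Function.Surjective f) (hker : f.ker.FG) : Group.FG G := by
  obtain ⟨L, hL, hLf⟩ := exists_fg_map_eq hf (Group.fg_def.1 hQ)
  rw [Group.fg_def, ← comap_top f, ← hLf, comap_map_eq]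
  exact hL.sup hker

theorem fg_of_isFinitelyPresented {G : Type*} [Group G] (h : IsFinitelyPresented G) :
    Group.FG G := by
  obtain ⟨n, φ, hφ, -⟩ := h.out
  exact Group.fg_of_surjective hφ

theorem exists_finite_inf_ker_le_normalClosure {F G : Type*} [Group F] [Group G] (p : F →* G)
    {L : Subgroup F} (hL : L.FG) (hp : IsFinitelyPresented (L.map p)) :
    ∃ T : Set F, T.Finite ∧ T ⊆ p.ker ∧ L ⊓ p.ker ≤ normalClosure T := by
  have := (Group.fg_iff_subgroup_fg L).2 hL
  obtain ⟨T, hTfin, hT⟩ := isFinitelyNormallyGenerated_ker (p.subgroupMap_surjective L)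
  refine ⟨L.subtype '' T, hTfin.image _, ?_, ?_⟩
  · rintro _ ⟨t, ht, rfl⟩
    have : t ∈ (p.subgroupMap L).ker := hT ▸ subset_normalClosure ht
    exact congrArg Subtype.val (MonoidHom.mem_ker.1 this)
  · rintro x ⟨hxL, hx⟩
    have hxT : (⟨x, hxL⟩ : L) ∈ normalClosure T := hT ▸ Subtype.ext hx
    exact (normalClosure_le_normal (N := (normalClosure (L.subtype '' T)).subgroupOf L)
      fun t ht => subset_normalClosure (Set.mem_image_of_mem L.subtype ht)) hxT

theorem conj_mem_of_forall_mem_closure {G : Type*} [Group G] {Y : Set G} {N : Subgroup G} (g : G)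
    (h : ∀ y ∈ Y, g * y * g⁻¹ ∈ N) : ∀ y ∈ closure Y, g * y * g⁻¹ ∈ N := fun _ hy =>
  (closure_le (N.comap (MulAut.conj g).toMonoidHom)).2 h hy

theorem sup_normal_of_conj_mem {G : Type*} [Group G] {X Y : Set G} {K : Subgroup G} [K.Normal]
    (hX : closure X = ⊤) (h : ∀ x ∈ X, ∀ y ∈ Y, x * y * x⁻¹ ∈ closure Y ⊔ K)
    (h' : ∀ x ∈ X, ∀ y ∈ Y, x⁻¹ * y * x ∈ closure Y ⊔ K) : (closure Y ⊔ K).Normal := by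
  have conj_mem (g : G) (hg : ∀ y ∈ Y, g * y * g⁻¹ ∈ closure Y ⊔ K) :
      ∀ n ∈ closure Y ⊔ K, g * n * g⁻¹ ∈ closure Y ⊔ K := by
    intro n hn
    obtain ⟨l, hl, k, hk, rfl⟩ := mem_sup_of_normal_right.1 hn
    rw [← conj_mul]
    exact mul_mem (conj_mem_of_forall_mem_closure g hg l hl)
      (le_sup_right (a := closure Y) (Normal.conj_mem ‹_› k hk g))
  refine normal_of_conj_mem_of_closure_eq_top hX (fun x hx => conj_mem x (h x hx)) fun x hx => ?_
  simpa using conj_mem x⁻¹ (by simpa using h' x hx)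

theorem exists_finite_subset_le_sup_normalClosure {F G : Type*} [Group F] [Group G] {p : F →* G}
    {L : Subgroup F} {A : Set F} (hA : A.Finite) (h : ∀ a ∈ A, p a ∈ L.map p) :
    ∃ B : Set F, B.Finite ∧ B ⊆ p.ker ∧ A ⊆ (L ⊔ normalClosure B : Subgroup F) := by
  have exists_lift (a : A) : ∃ z ∈ L, p z = p a := h a a.2
  choose lift hlift hp_lift using exists_lift
  have := hA.to_subtype
  refine ⟨Set.range fun a => (lift a)⁻¹ * a, Set.finite_range _, ?_, fun a ha => ?_⟩
  · rintro _ ⟨a, rfl⟩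
    simp [hp_lift]
  · have : (lift ⟨a, ha⟩)⁻¹ * a ∈ normalClosure (Set.range fun a => (lift a)⁻¹ * a) :=
      subset_normalClosure ⟨⟨a, ha⟩, rfl⟩
    simpa using mul_mem_sup (hlift ⟨a, ha⟩) this

/- With `p : F → G` free and `L ≤ F` a finitely generated lift of `ker f`, finitely many relators
suffice to present `L`, to make `L` normal, and to push the relators of `Q` into `L`. -/
theorem isFinitelyPresented_of_extension {G Q : Type*} [Group G] [Group Q] {f : G →* Q}
    (hf : Function.Surjective f) (hN : IsFinitelyPresented f.ker) (hQ : IsFinitelyPresented Q) :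
    IsFinitelyPresented G := by
  have hNfg : f.ker.FG := (Group.fg_iff_subgroup_fg _).1 (fg_of_isFinitelyPresented hN)
  have := fg_of_isFinitelyPresented hQ
  obtain ⟨α, _, p, hp⟩ :=
    Group.fg_iff_exists_freeGroup_hom_surjective_finite.1 (fg_of_fg_ker hf hNfg)
  obtain ⟨L, hL, hLp⟩ := exists_fg_map_eq hp hNfg
  obtain ⟨T, hTfin, hTker, hLT⟩ := exists_finite_inf_ker_le_normalClosure p hL (hLp ▸ hN)
  obtain ⟨S, hSfin, hS⟩ := isFinitelyNormallyGenerated_ker (f := f.comp p) (hf.comp hp)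
  obtain ⟨Y, rfl, hYfin⟩ := (Subgroup.fg_iff L).1 hL
  have hYker (y) (hy : y ∈ Y) : y ∈ (f.comp p).ker := by
    change p y ∈ f.ker
    exact hLp ▸ mem_map_of_mem p (subset_closure hy)
  let X := Set.range (FreeGroup.of (α := α))
  have hXfin : X.Finite := Set.finite_range _
  let A := S ∪ (Set.image2 (fun x y => x * y * x⁻¹) X Y ∪ Set.image2 (fun x y => x⁻¹ * y * x) X Y)
  have hAfin : A.Finite := hSfin.union ((hXfin.image2 _ hYfin).union (hXfin.image2 _ hYfin))
  have hAker : A ⊆ (f.comp p).ker := by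
    rintro _ (hs | ⟨x, -, y, hy, rfl⟩ | ⟨x, -, y, hy, rfl⟩)
    · exact hS ▸ subset_normalClosure hs
    · exact Normal.conj_mem inferInstance y (hYker y hy) x
    · simpa using Normal.conj_mem inferInstance y (hYker y hy) x⁻¹
  obtain ⟨B, hBfin, hBker, hAB⟩ := exists_finite_subset_le_sup_normalClosure hAfin
    fun a ha => hLp.symm ▸ show p a ∈ f.ker from hAker ha
  let K := normalClosure (T ∪ B)
  have hKp : K ≤ p.ker := normalClosure_le_normal (Set.union_subset hTker hBker)
  have hA : A ⊆ (closure Y ⊔ K : Subgroup _) := hAB.trans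
    (sup_le_sup_left (normalClosure_mono Set.subset_union_right) _)
  have : (closure Y ⊔ K).Normal := sup_normal_of_conj_mem (FreeGroup.closure_range_of α)
    (fun x hx y hy => hA (.inr (.inl ⟨x, hx, y, hy, rfl⟩)))
    (fun x hx y hy => hA (.inr (.inr ⟨x, hx, y, hy, rfl⟩)))
  have hker_le : (f.comp p).ker ≤ closure Y ⊔ K :=
    hS ▸ normalClosure_le_normal fun s hs => hA (.inl hs)
  have hLK : closure Y ⊓ p.ker ≤ K := hLT.trans (normalClosure_mono Set.subset_union_left)
  refine .of_surjective p hp ⟨_, hTfin.union hBfin, le_antisymm hKp fun m hm => ?_⟩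
  obtain ⟨l, hl, k, hk, rfl⟩ := mem_sup_of_normal_right.1
    (hker_le (show f (p m) = 1 by rw [hm, map_one]))
  have hpl : p l = 1 := by simpa [MonoidHom.mem_ker.1 (hKp hk)] using MonoidHom.mem_ker.1 hm
  exact mul_mem (hLK ⟨hl, hpl⟩) hk

end FinitelyPresented

/-! ### Hereditarily finitely presented groups -/

open Group in
/-- A group all of whose subgroups are finitely presented, such as a virtually polycyclic group.
Slender Coxeter groups turn out to have this property, which makes them coherent. -/
def HereditarilyFinitelyPresented (G : Type*) [Group G] : Prop :=
  ∀ H : Subgroup G, IsFinitelyPresented H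

namespace HereditarilyFinitelyPresented

open Group

variable {G : Type*} [Group G]

theorem coherent (h : HereditarilyFinitelyPresented G) : Group.Coherent G :=
  coherent_iff.2 fun H _ => h H

theorem of_injective {G' : Type*} [Group G'] (h : HereditarilyFinitelyPresented G) {f : G' →* G}
    (hf : Function.Injective f) : HereditarilyFinitelyPresented G' := fun H =>
  have := h (H.map f)
  .equiv (H.equivMapOfInjective f hf).symm

theorem isFinitelyPresented (h : HereditarilyFinitelyPresented G) : IsFinitelyPresented G :=
  have := h ⊤
  .equiv Subgroup.topEquiv

theorem of_extension {Q : Type*} [Group Q] (f : G →* Q)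
    (hN : HereditarilyFinitelyPresented f.ker) (hQ : HereditarilyFinitelyPresented Q) :
    HereditarilyFinitelyPresented G := by
  intro H
  let g := (f.comp H.subtype).rangeRestrict
  have hg : g.ker ≤ f.ker.comap H.subtype := fun x hx => congrArg Subtype.val hx
  refine isFinitelyPresented_of_extension (f := g) (MonoidHom.rangeRestrict_surjective _) ?_ (hQ _)
  let j : g.ker →* f.ker := (H.subtype.subgroupComap f.ker).comp (Subgroup.inclusion hg)
  refine (hN.of_injective (f := j) fun x y hxy => ?_).isFinitelyPresented
  exact Subtype.ext (Subtype.ext (congrArg (fun z : f.ker => (z : G)) hxy))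

theorem of_finite (G : Type*) [Group G] [Finite G] : HereditarilyFinitelyPresented G :=
  fun _ => inferInstance

theorem of_isCyclic (G : Type*) [Group G] [IsCyclic G] : HereditarilyFinitelyPresented G := by
  intro H
  obtain ⟨g, hg⟩ := IsCyclic.exists_zpow_surjective (G := H)
  obtain ⟨z, hz⟩ := (isCyclic_iff_exists_zpowers_eq_top (α := (zpowersHom H g).ker)).1 inferInstance
  have : Group.FG (zpowersHom H g).ker := Group.fg_def.2 ⟨{z}, by
    rw [Finset.coe_singleton, ← Subgroup.zpowers_eq_closure, hz]⟩
  exact .of_surjective (zpowersHom H g) (fun x => (hg x).imp fun _ h => h) (.of_FG _)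

theorem prod {G' : Type*} [Group G'] (h : HereditarilyFinitelyPresented G)
    (h' : HereditarilyFinitelyPresented G') : HereditarilyFinitelyPresented (G × G') := by
  refine of_extension (MonoidHom.snd G G') (h.of_injective
    (f := (MonoidHom.fst G G').comp (MonoidHom.snd G G').ker.subtype) ?_) h'
  rintro ⟨⟨x, y⟩, hxy⟩ ⟨⟨x', y'⟩, hxy'⟩ hx
  obtain rfl : y = 1 := hxy
  obtain rfl : y' = 1 := hxy'
  exact Subtype.ext (Prod.ext hx rfl)

theorem pi {ι : Type*} [Finite ι] (h : HereditarilyFinitelyPresented G) :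
    HereditarilyFinitelyPresented (ι → G) := by
  induction ι using Finite.induction_empty_option with
  | of_equiv e ih =>
    refine ih.of_injective (f := MonoidHom.pi fun i => Pi.evalMonoidHom _ (e i)) fun x y hxy => ?_
    exact funext <| e.surjective.forall.2 (congrFun hxy)
  | h_empty => exact of_finite _
  | h_option ih =>
    refine (h.prod ih).of_injective (f := (Pi.evalMonoidHom _ none).prod
      (MonoidHom.pi fun i => Pi.evalMonoidHom _ (some i))) fun x y hxy => funext fun i => ?_
    cases i with
    | none => exact congrArg Prod.fst hxy
    | some i => exact congrFun (congrArg Prod.snd hxy) i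

theorem of_finiteIndex (N : Subgroup G) [N.FiniteIndex] (hN : HereditarilyFinitelyPresented N) :
    HereditarilyFinitelyPresented G := by
  refine of_extension (QuotientGroup.mk' N.normalCore) ?_ (of_finite _)
  rw [QuotientGroup.ker_mk']
  exact hN.of_injective (Subgroup.inclusion_injective N.normalCore_le)

end HereditarilyFinitelyPresented

/-! ### Groups acting on trees -/

section LocallyInjective

variable {V W : Type*} {X : SimpleGraph V} {Y : SimpleGraph W} {f : X →g Y}

theorem isChain_edges_map (hf : ∀ a, Set.InjOn f (X.neighborSet a)) {a b : V} {p : X.Walk a b}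
    (hp : p.IsPath) : (p.map f).edges.IsChain (· ≠ ·) := by
  induction p with
  | nil => simp
  | @cons a b _ hab p ih =>
    cases p with
    | nil => simp
    | @cons _ c _ hbc p =>
      refine .cons_cons (fun heq => ?_) (ih hp.of_cons)
      have hac : a ≠ c := by
        rintro rfl
        simp at hp
      refine hac (hf b hab.symm hbc ?_)
      simpa [(f.map_adj hab).ne, (f.map_adj hab).ne'] using heq

theorem injective_of_injOn_neighborSet (hX : X.Preconnected) (hY : Y.IsAcyclic)
    (hf : ∀ a, Set.InjOn f (X.neighborSet a)) : Function.Injective f := by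
  intro a b hab
  obtain ⟨p, hp⟩ := (hX a b).exists_isPath
  have hpath : ((p.map f).copy rfl hab.symm).IsPath := by
    rw [SimpleGraph.Walk.isPath_copy]
    exact (hY.isPath_iff_isChain _).2 (isChain_edges_map hf hp)
  have hlen := SimpleGraph.Walk.length_eq_zero_iff.2 (SimpleGraph.Walk.isPath_iff_nil.1 hpath)
  exact SimpleGraph.Walk.eq_of_length_eq_zero (by simpa using hlen)

end LocallyInjective

section Transporter

variable {P V : Type*} [Group P] [MulAction P V] {X : SimpleGraph V} {U : Set V}
  {L : U → U → Set P}

/-- A groupoid `L` over a set `U` of vertices, made of elements of a group `P` acting on the graph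
`X`: elements of `L u v` carry `v` to `u`, and they also belong to `L u' v'` whenever they carry
an edge `(v, v')` inside `U` to an edge `(u, u')` inside `U`. -/
structure IsTransporterGroupoid (X : SimpleGraph V) (L : U → U → Set P) : Prop where
  one_mem (u) : 1 ∈ L u u
  mul_mem {u v w x y} : x ∈ L u v → y ∈ L v w → x * y ∈ L u w
  inv_mem {u v x} : x ∈ L u v → x⁻¹ ∈ L v u
  smul_eq {u v x} : x ∈ L u v → x • (v : V) = u
  mem_of_adj {u v u' v' : U} {x} :
    x ∈ L u v → X.Adj u u' → X.Adj v v' → x • (v' : V) = u' → x ∈ L u' v'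

namespace IsTransporterGroupoid

/-- Copies of `U` indexed by `P`, glued along `L`: the vertices of the development of `L`. -/
def vertexSetoid (h : IsTransporterGroupoid X L) : Setoid (P × U) where
  r a b := a.1⁻¹ * b.1 ∈ L a.2 b.2
  iseqv :=
    { refl a := by simpa using h.one_mem a.2
      symm hab := by simpa using h.inv_mem hab
      trans hab hbc := by simpa [mul_assoc] using h.mul_mem hab hbc }

/-- The natural map from the vertices of the development of `L` to `V`. -/
def toVertex (h : IsTransporterGroupoid X L) : Quotient h.vertexSetoid → V :=
  Quotient.lift (fun a => a.1 • (a.2 : V)) fun a b hab => by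
    have : (a.1⁻¹ * b.1) • (b.2 : V) = a.2 := h.smul_eq hab
    rw [← this, smul_smul, mul_inv_cancel_left]

/-- The development of `L`, the graph obtained by gluing copies of the subgraph of `X` induced on
`U`, indexed by `P`, along `L`. -/
def development (h : IsTransporterGroupoid X L) : SimpleGraph (Quotient h.vertexSetoid) where
  Adj a b := ∃ (g : P) (u v : U), X.Adj u v ∧ a = ⟦(g, u)⟧ ∧ b = ⟦(g, v)⟧
  symm := ⟨fun _ _ ⟨g, u, v, huv, ha, hb⟩ => ⟨g, v, u, huv.symm, hb, ha⟩⟩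
  loopless := ⟨by
    rintro _ ⟨g, u, v, huv, rfl, hv⟩
    have := congrArg h.toVertex hv
    exact huv.ne (MulAction.injective g this)⟩

theorem preconnected_development (h : IsTransporterGroupoid X L) (hU : (X.induce U).Preconnected)
    (hL : Subgroup.closure (⋃ (u) (v), L u v) = ⊤) : h.development.Preconnected := by
  have same_copy (g : P) (u v : U) : h.development.Reachable ⟦(g, u)⟧ ⟦(g, v)⟧ :=
    (hU u v).map (⟨fun u => ⟦(g, u)⟧, fun huv => ⟨g, _, _, huv, rfl, rfl⟩⟩ :
      X.induce U →g h.development)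
  have mul_right (g : P) (x) (hx : x ∈ ⋃ (u) (v), L u v) (v : U) :
      h.development.Reachable ⟦(g, v)⟧ ⟦(g * x, v)⟧ := by
    obtain ⟨u', v', hx⟩ := Set.mem_iUnion₂.1 hx
    have : (⟦(g, u')⟧ : Quotient h.vertexSetoid) = ⟦(g * x, v')⟧ :=
      Quotient.sound (show g⁻¹ * (g * x) ∈ L u' v' by rwa [inv_mul_cancel_left])
    exact (same_copy g v u').trans (this ▸ same_copy (g * x) v' v)
  have from_one (g : P) (v : U) : h.development.Reachable ⟦(1, v)⟧ ⟦(g, v)⟧ := by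
    have hg : g ∈ Subgroup.closure (⋃ (u) (v), L u v) := hL ▸ Subgroup.mem_top g
    induction hg using Subgroup.closure_induction_right with
    | one => rfl
    | mul_right g _ x hx ih => exact ih.trans (mul_right g x hx v)
    | mul_inv_cancel g _ x hx ih =>
      exact ih.trans (by simpa using (mul_right (g * x⁻¹) x hx v).symm)
  rintro ⟨g, u⟩ ⟨g', u'⟩
  exact (from_one g u).symm.trans ((same_copy 1 u u').trans (from_one g' u'))

theorem mem_of_smul_eq (h : IsTransporterGroupoid X L) (hX : X.IsAcyclic)
    (hadj : ∀ (g : P) {x y : V}, X.Adj x y → X.Adj (g • x) (g • y))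
    (hU : (X.induce U).Preconnected) (hL : Subgroup.closure (⋃ (u) (v), L u v) = ⊤)
    {g : P} {u v : U} (hg : g • (v : V) = u) : g ∈ L u v := by
  let F : h.development →g X := ⟨h.toVertex, by
    rintro _ _ ⟨g, u, v, huv, rfl, rfl⟩
    exact hadj g huv⟩
  have hF : Function.Injective F := by
    refine injective_of_injOn_neighborSet (h.preconnected_development hU hL) hX ?_
    rintro _ _ ⟨g, u, u', huu', rfl, rfl⟩ _ ⟨g', v, v', hvv', hab, rfl⟩ heq
    have hgg' : g⁻¹ * g' ∈ L u v := Quotient.exact hab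
    refine Quotient.sound (h.mem_of_adj hgg' huu' hvv' ?_)
    rw [mul_smul, inv_smul_eq_iff]
    exact heq.symm
  have : (⟦(1, u)⟧ : Quotient h.vertexSetoid) = ⟦(g, v)⟧ :=
    hF (show (1 : P) • (u : V) = g • (v : V) by rw [one_smul, hg])
  have hgL : (1 : P)⁻¹ * g ∈ L u v := Quotient.exact this
  simpa using hgL

end IsTransporterGroupoid

end Transporter

section GeneratedGroupoid

variable {F ι : Type*} [Group F] {D : ι → ι → Set F}

/-- The smallest family of subsets of `F`, indexed by pairs of objects, that contains the
identities and is stable under multiplication on the right by `D`. When `D` is stable under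
inversion this is the groupoid generated by `D`. -/
inductive GeneratedGroupoid (D : ι → ι → Set F) (u : ι) : ι → F → Prop
  | one : GeneratedGroupoid D u u 1
  | mul_right {v w : ι} {x d : F} :
      GeneratedGroupoid D u v x → d ∈ D v w → GeneratedGroupoid D u w (x * d)

namespace GeneratedGroupoid

theorem of_mem {u v : ι} {d : F} (h : d ∈ D u v) : GeneratedGroupoid D u v d := by
  simpa using one.mul_right h

theorem mul {u v w : ι} {x y : F} (hx : GeneratedGroupoid D u v x)
    (hy : GeneratedGroupoid D v w y) : GeneratedGroupoid D u w (x * y) := by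
  induction hy with
  | one => simpa using hx
  | mul_right _ hd ih => simpa [mul_assoc] using ih.mul_right hd

theorem inv (hD : ∀ u v, ∀ d ∈ D u v, d⁻¹ ∈ D v u) {u v : ι} {x : F}
    (hx : GeneratedGroupoid D u v x) : GeneratedGroupoid D v u x⁻¹ := by
  induction hx with
  | one => simpa using one
  | mul_right _ hd ih => simpa using (of_mem (hD _ _ _ hd)).mul ih

/-- The vertex group at the object `u` of the groupoid generated by `D`. -/
def vertexGroup (hD : ∀ u v, ∀ d ∈ D u v, d⁻¹ ∈ D v u) (u : ι) : Subgroup F where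
  carrier := {x | GeneratedGroupoid D u u x}
  one_mem' := one
  mul_mem' := mul
  inv_mem' := inv hD

theorem fg_vertexGroup [Finite ι] (hD : ∀ u v, ∀ d ∈ D u v, d⁻¹ ∈ D v u)
    (hfin : ∀ u v, (D u v).Finite) (u : ι) : (vertexGroup hD u).FG := by
  have exists_path (v : ι) : ∃ t, ∀ x, GeneratedGroupoid D u v x → GeneratedGroupoid D u v t := by
    by_cases h : ∃ x, GeneratedGroupoid D u v x
    · exact h.imp fun t ht _ _ => ht
    · exact ⟨1, fun x hx => absurd ⟨x, hx⟩ h⟩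
  choose t ht using exists_path
  let Y : Set F := insert (t u)
    ((⋃ (v) (w), (fun d => t v * d * (t w)⁻¹) '' D v w) ∩ vertexGroup hD u)
  have hY : Y.Finite :=
    ((Set.finite_iUnion fun v => Set.finite_iUnion fun w => (hfin v w).image _).inter_of_left
      _).insert _
  have mem_closure {v : ι} {x : F} (hx : GeneratedGroupoid D u v x) :
      x * (t v)⁻¹ ∈ Subgroup.closure Y := by
    induction hx with
    | one => simpa using Subgroup.subset_closure (Set.mem_insert _ _)
    | @mul_right v w x d hx hd ih =>
      have hloop : t v * d * (t w)⁻¹ ∈ vertexGroup hD u :=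
        ((ht v x hx).mul_right hd).mul ((ht w _ (hx.mul_right hd)).inv hD)
      have hmem : t v * d * (t w)⁻¹ ∈ Subgroup.closure Y := Subgroup.subset_closure
        (.inr ⟨Set.mem_iUnion₂.2 ⟨v, w, d, hd, rfl⟩, hloop⟩)
      simpa [mul_assoc] using mul_mem ih hmem
  refine (Subgroup.fg_iff _).2 ⟨Y, le_antisymm ?_ fun x hx => ?_, hY⟩
  · exact (Subgroup.closure_le _).2 (Set.insert_subset (ht u 1 one) Set.inter_subset_right)
  · simpa using mul_mem (mem_closure hx) (Subgroup.subset_closure (Set.mem_insert (t u) _))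

end GeneratedGroupoid

end GeneratedGroupoid

section TreeAction

open Group MulAction Subgroup

variable {H V : Type*} [Group H] [MulAction H V] {X : SimpleGraph V} {U : Set V} {S : Set H}

/-- A generating set `S` of `H` is adapted to a set `U` of vertices if each of its elements carries
some vertex of `U` into `U`, and if `S` witnesses how `H` moves the edges inside `U`: it contains
generators of their stabilizers, and an element carrying one to another whenever `H` does. -/
structure IsAdapted (X : SimpleGraph V) (U : Set V) (S : Set H) : Prop where
  closure_eq_top : closure S = ⊤
  exists_smul_mem : ∀ s ∈ S, ∃ v ∈ U, s • v ∈ U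
  stabilizer_le_closure : ∀ u ∈ U, ∀ v ∈ U, X.Adj u v →
    stabilizer H u ⊓ stabilizer H v ≤ closure {s ∈ S | s • u = u ∧ s • v = v}
  exists_mem_smul_eq : ∀ u ∈ U, ∀ u' ∈ U, ∀ v ∈ U, ∀ v' ∈ U, ∀ g : H,
    g • v = u → g • v' = u' → ∃ s ∈ S, s • v = u ∧ s • v' = u'

theorem exists_finite_isAdapted [hH : Group.FG H] (hX : X.Connected)
    (he : ∀ x y, X.Adj x y → (stabilizer H x ⊓ stabilizer H y).FG) :
    ∃ (U : Set V) (S : Set H), U.Finite ∧ S.Finite ∧ (X.induce U).Connected ∧ IsAdapted X U S := by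
  classical
  obtain ⟨x₀⟩ := hX.nonempty
  obtain ⟨S₀, hS₀, hS₀fin⟩ := Group.fg_iff.1 hH
  obtain ⟨U, hSU, hU⟩ := SimpleGraph.extend_finset_to_connected hX.preconnected
    (Finset.insert_nonempty x₀ (hS₀fin.toFinset.image (· • x₀)))
  have hx₀ : x₀ ∈ U := hSU (Finset.mem_insert_self _ _)
  have hS₀x₀ (s) (hs : s ∈ S₀) : s • x₀ ∈ U :=
    hSU (Finset.mem_insert_of_mem (Finset.mem_image_of_mem _ (by simpa using hs)))
  choose! Y hY hYfin using fun x y hxy => (Subgroup.fg_iff _).1 (he x y hxy)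
  have exists_transporter (e : (V × V) × V × V) : ∃ s : H, ∀ g : H, g • e.2.1 = e.1.1 →
      g • e.2.2 = e.1.2 → s • e.2.1 = e.1.1 ∧ s • e.2.2 = e.1.2 := by
    by_cases h : ∃ g : H, g • e.2.1 = e.1.1 ∧ g • e.2.2 = e.1.2
    · exact h.imp fun s hs _ _ _ => hs
    · exact ⟨1, fun g h₁ h₂ => absurd ⟨g, h₁, h₂⟩ h⟩
  choose t ht using exists_transporter
  let S : Set H := {s ∈ S₀ ∪ ((⋃ u ∈ U, ⋃ v ∈ U, ⋃ (_ : X.Adj u v), Y u v) ∪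
    t '' (((U : Set V) ×ˢ U) ×ˢ ((U : Set V) ×ˢ U))) | ∃ v ∈ U, s • v ∈ U}
  have hfin : S.Finite := by
    refine (hS₀fin.union (.union ?_ (Set.Finite.image _ ?_))).sep _
    · exact U.finite_toSet.biUnion fun u _ => U.finite_toSet.biUnion fun v _ =>
        Set.finite_iUnion fun huv => hYfin u v huv
    · exact (U.finite_toSet.prod U.finite_toSet).prod (U.finite_toSet.prod U.finite_toSet)
  refine ⟨U, S, U.finite_toSet, hfin, hU, ⟨?_, fun s hs => hs.2, fun u hu v hv huv => ?_,
    fun u hu u' hu' v hv v' hv' g hg hg' => ?_⟩⟩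
  · rw [eq_top_iff, ← hS₀]
    exact closure_mono fun s hs => ⟨.inl hs, x₀, hx₀, hS₀x₀ s hs⟩
  · rw [← hY u v huv]
    refine closure_mono fun s hs => ?_
    have hsuv : s • u = u ∧ s • v = v :=
      (hY u v huv).le (subset_closure hs)
    refine ⟨⟨.inr (.inl ?_), u, hu, hsuv.1.symm ▸ hu⟩, hsuv⟩
    simp only [Set.mem_iUnion]
    exact ⟨u, hu, v, hv, huv, hs⟩
  · have hs := ht ((u, u'), v, v') g hg hg'
    exact ⟨t ((u, u'), v, v'), ⟨.inr (.inr (Set.mem_image_of_mem t ⟨⟨hu, hu'⟩, hv, hv'⟩)), v, hv,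
      hs.1.symm ▸ hu⟩, hs⟩

/-- The letters of the free group on `S` that carry the vertex `v` of `U` to the vertex `u`. -/
def transportingLetters (U : Set V) (S : Set H) (u v : U) : Set (FreeGroup S) :=
  {d | (∃ s, d = FreeGroup.of s ∨ d = (FreeGroup.of s)⁻¹) ∧
    FreeGroup.lift ((↑) : S → H) d • (v : V) = u}

theorem inv_mem_transportingLetters (u v : U) :
    ∀ d ∈ transportingLetters U S u v, d⁻¹ ∈ transportingLetters U S v u := by
  rintro d ⟨⟨s, hs⟩, hd⟩
  refine ⟨⟨s, hs.symm.imp (by rintro rfl; simp) (by rintro rfl; simp)⟩, ?_⟩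
  rw [map_inv, inv_smul_eq_iff, hd]

theorem finite_transportingLetters (hS : S.Finite) (u v : U) :
    (transportingLetters U S u v).Finite := by
  have := hS.to_subtype
  refine ((Set.finite_range FreeGroup.of).union
    (Set.finite_range fun s : S => (FreeGroup.of s)⁻¹)).subset ?_
  rintro d ⟨⟨s, rfl | rfl⟩, -⟩
  · exact .inl ⟨s, rfl⟩
  · exact .inr ⟨s, rfl⟩

theorem lift_smul_of_generatedGroupoid {u v : U} {x : FreeGroup S}
    (hx : GeneratedGroupoid (transportingLetters U S) u v x) :
    FreeGroup.lift ((↑) : S → H) x • (v : V) = u := by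
  induction hx with
  | one => simp
  | mul_right _ hd ih => rw [map_mul, mul_smul, hd.2, ih]

theorem IsAdapted.exists_generatedGroupoid_of_stabilizer (hS : IsAdapted X U S) {v v' : U}
    (hvv' : X.Adj v v') {g : H} (hg : g ∈ stabilizer H (v : V) ⊓ stabilizer H (v' : V)) :
    ∃ x, GeneratedGroupoid (transportingLetters U S) v v x ∧
      GeneratedGroupoid (transportingLetters U S) v' v' x ∧ FreeGroup.lift ((↑) : S → H) x = g := by
  have hgS := hS.stabilizer_le_closure v v.2 v' v'.2 hvv' hg
  clear hg
  induction hgS using closure_induction with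
  | mem s hs =>
    exact ⟨.of ⟨s, hs.1⟩, .of_mem ⟨⟨_, .inl rfl⟩, by simpa using hs.2.1⟩,
      .of_mem ⟨⟨_, .inl rfl⟩, by simpa using hs.2.2⟩, by simp⟩
  | one => exact ⟨1, .one, .one, map_one _⟩
  | mul g h _ _ ihg ihh =>
    obtain ⟨x, hx, hx', rfl⟩ := ihg
    obtain ⟨y, hy, hy', rfl⟩ := ihh
    exact ⟨x * y, hx.mul hy, hx'.mul hy', map_mul _ _ _⟩
  | inv g _ ih =>
    obtain ⟨x, hx, hx', rfl⟩ := ih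
    exact ⟨x⁻¹, hx.inv inv_mem_transportingLetters, hx'.inv inv_mem_transportingLetters,
      map_inv _ _⟩

theorem IsAdapted.exists_generatedGroupoid (hS : IsAdapted X U S) {u u' v v' : U}
    (hvv' : X.Adj v v') {g : H} (hg : g • (v : V) = u) (hg' : g • (v' : V) = u') :
    ∃ x, GeneratedGroupoid (transportingLetters U S) u v x ∧
      GeneratedGroupoid (transportingLetters U S) u' v' x ∧ FreeGroup.lift ((↑) : S → H) x = g := by
  obtain ⟨s, hsS, hs, hs'⟩ := hS.exists_mem_smul_eq u u.2 u' u'.2 v v.2 v' v'.2 g hg hg'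
  obtain ⟨y, hy, hy', hyg⟩ := hS.exists_generatedGroupoid_of_stabilizer (g := s⁻¹ * g) hvv'
    (mem_inf.2 ⟨by simp [mul_smul, hg, inv_smul_eq_iff, hs],
      by simp [mul_smul, hg', inv_smul_eq_iff, hs']⟩)
  have hsu : FreeGroup.of ⟨s, hsS⟩ ∈ transportingLetters U S u v :=
    ⟨⟨_, .inl rfl⟩, by simpa using hs⟩
  have hsu' : FreeGroup.of ⟨s, hsS⟩ ∈ transportingLetters U S u' v' :=
    ⟨⟨_, .inl rfl⟩, by simpa using hs'⟩
  exact ⟨.of ⟨s, hsS⟩ * y, (GeneratedGroupoid.of_mem hsu).mul hy,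
    (GeneratedGroupoid.of_mem hsu').mul hy', by simp [hyg]⟩

theorem IsAdapted.isTransporterGroupoid (hS : IsAdapted X U S) {N : Subgroup (FreeGroup S)}
    [N.Normal] (hNker : N ≤ (FreeGroup.lift ((↑) : S → H)).ker)
    (hN : ∀ u x, GeneratedGroupoid (transportingLetters U S) u u x →
      FreeGroup.lift ((↑) : S → H) x = 1 → x ∈ N) :
    letI := MulAction.compHom V (FreeGroup.lift ((↑) : S → H))
    IsTransporterGroupoid X fun u v =>
      {x | ∃ y, GeneratedGroupoid (transportingLetters U S) u v y ∧ y⁻¹ * x ∈ N} := by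
  let := MulAction.compHom V (FreeGroup.lift ((↑) : S → H))
  have lift_eq {x y : FreeGroup S} (h : y⁻¹ * x ∈ N) :
      FreeGroup.lift ((↑) : S → H) x = FreeGroup.lift ((↑) : S → H) y := by
    have := MonoidHom.mem_ker.1 (hNker h)
    rwa [map_mul, map_inv, inv_mul_eq_one, eq_comm] at this
  refine ⟨fun u => ⟨1, .one, by simp⟩, ?_, ?_, ?_, ?_⟩
  · rintro u v w x y ⟨x', hx', hx⟩ ⟨y', hy', hy⟩
    refine ⟨x' * y', hx'.mul hy', ?_⟩
    have := mul_mem (Normal.conj_mem ‹_› _ hx y'⁻¹) hy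
    simpa [mul_assoc] using this
  · rintro u v x ⟨y, hy, hx⟩
    refine ⟨y⁻¹, hy.inv inv_mem_transportingLetters, ?_⟩
    have := Normal.conj_mem ‹_› _ (inv_mem hx) y
    simpa [mul_assoc] using this
  · rintro u v x ⟨y, hy, hx⟩
    change FreeGroup.lift ((↑) : S → H) x • (v : V) = u
    rw [lift_eq hx, lift_smul_of_generatedGroupoid hy]
  · rintro u v u' v' x ⟨y, hy, hx⟩ - hvv' hx'
    have hlift : FreeGroup.lift ((↑) : S → H) x • (v : V) = u := by
      rw [lift_eq hx, lift_smul_of_generatedGroupoid hy]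
    obtain ⟨z, hz, hz', hzx⟩ := hS.exists_generatedGroupoid hvv' hlift hx'
    refine ⟨z, hz', ?_⟩
    have hzy : z⁻¹ * y ∈ N := hN v _ ((hz.inv inv_mem_transportingLetters).mul hy) (by
      rw [map_mul, map_inv, hzx, lift_eq hx, inv_mul_cancel])
    simpa [mul_assoc] using mul_mem hzy hx

theorem isFinitelyPresented_of_le_of_coherent {K L : Subgroup H} (hKL : K ≤ L)
    (hL : Group.Coherent L) (hK : K.FG) : IsFinitelyPresented K := by
  have := coherent_iff.1 hL (K.subgroupOf L) ((fg_map_iff_of_injective L.subtype_injective).1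
    (by rwa [map_subgroupOf_eq_of_le hKL]))
  exact .equiv (subgroupOfEquivOfLe hKL)

theorem isFinitelyPresented_of_isTree [Group.FG H] (hX : X.IsTree)
    (hadj : ∀ (g : H) {x y : V}, X.Adj x y → X.Adj (g • x) (g • y))
    (hv : ∀ x : V, Group.Coherent (stabilizer H x))
    (he : ∀ x y, X.Adj x y → (stabilizer H x ⊓ stabilizer H y).FG) : IsFinitelyPresented H := by
  obtain ⟨U, S, hUfin, hSfin, hU, hS⟩ := exists_finite_isAdapted hX.connected he
  have := hUfin.to_subtype
  have := hSfin.to_subtype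
  let p := FreeGroup.lift ((↑) : S → H)
  let Λ := GeneratedGroupoid.vertexGroup (inv_mem_transportingLetters (U := U) (S := S))
  have hΛ (u : U) : (Λ u).FG :=
    GeneratedGroupoid.fg_vertexGroup _ (finite_transportingLetters hSfin) u
  have hΛp (u : U) : (Λ u).map p ≤ stabilizer H (u : V) := by
    rintro _ ⟨x, hx, rfl⟩
    exact lift_smul_of_generatedGroupoid hx
  choose R hRfin hRker hR using fun u => exists_finite_inf_ker_le_normalClosure p (hΛ u)
    (isFinitelyPresented_of_le_of_coherent (hΛp u) (hv u) (fg_map p (hΛ u)))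
  let N := normalClosure (⋃ u, R u)
  have hNker : N ≤ p.ker := normalClosure_le_normal (Set.iUnion_subset hRker)
  have hN (u) (x) (hx : x ∈ Λ u) (hpx : p x = 1) : x ∈ N :=
    normalClosure_mono (Set.subset_iUnion R u) (hR u ⟨hx, hpx⟩)
  let := MulAction.compHom V p
  have hL := hS.isTransporterGroupoid hNker hN
  have hgen : closure (⋃ (u : U) (v : U),
      {x | ∃ y, GeneratedGroupoid (transportingLetters U S) u v y ∧ y⁻¹ * x ∈ N}) = ⊤ := by
    rw [eq_top_iff, ← FreeGroup.closure_range_of]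
    refine closure_mono ?_
    rintro _ ⟨s, rfl⟩
    obtain ⟨v, hvU, hsv⟩ := hS.exists_smul_mem s s.2
    exact Set.mem_iUnion₂.2 ⟨⟨_, hsv⟩, ⟨v, hvU⟩, .of s,
      .of_mem ⟨⟨s, .inl rfl⟩, by simp⟩, by simp⟩
  have hp : Function.Surjective p := by
    rw [← MonoidHom.range_eq_top, FreeGroup.range_lift_eq_closure, Subtype.range_coe,
      hS.closure_eq_top]
  refine .of_surjective p hp ⟨_, Set.finite_iUnion hRfin, le_antisymm hNker fun x hx => ?_⟩
  obtain ⟨u⟩ := hU.nonempty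
  obtain ⟨y, hy, hyx⟩ := hL.mem_of_smul_eq hX.isAcyclic (fun g => hadj (p g)) hU.preconnected hgen
    (show p x • (u : V) = u by rw [MonoidHom.mem_ker.1 hx, one_smul])
  have hpy : p y = 1 := by
    simpa [MonoidHom.mem_ker, MonoidHom.mem_ker.1 hx] using hNker hyx
  simpa only [mul_inv_cancel_left] using N.mul_mem (hN u y hy hpy) hyx

theorem coherent_of_isTree (hX : X.IsTree)
    (hadj : ∀ (g : H) {x y : V}, X.Adj x y → X.Adj (g • x) (g • y))
    (hv : ∀ x : V, Group.Coherent (stabilizer H x))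
    (he : ∀ x y, X.Adj x y → Group.Slender (stabilizer H x ⊓ stabilizer H y : Subgroup H)) :
    Group.Coherent H := by
  refine coherent_iff.2 fun K hK => ?_
  have := (Group.fg_iff_subgroup_fg K).2 hK
  refine isFinitelyPresented_of_isTree hX (fun g => hadj (g : H)) (fun x => ?_) fun x y hxy => ?_
  · exact coherent_of_injective
      (subgroupComap_injective K.subtype_injective (stabilizer H x)) (hv x)
  · exact (Group.fg_iff_subgroup_fg _).1 (Group.fg_def.2 (slender_of_injective
      (subgroupComap_injective K.subtype_injective (stabilizer H x ⊓ stabilizer H y))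
      (he x y hxy) ⊤))

end TreeAction

/-! ### Amalgamated products -/

theorem exists_injective_of_map_le_range {A G H : Type*} [Group A] [Group G] [Group H]
    {f : G →* H} (hf : Function.Injective f) {g : A →* H} (hg : Function.Injective g)
    {B : Subgroup G} (hB : B.map f ≤ g.range) : ∃ k : B →* A, Function.Injective k :=
  ⟨(MonoidHom.ofInjective hg).symm.toMonoidHom.comp
      ((f.comp B.subtype).codRestrict g.range fun b => hB (Subgroup.mem_map_of_mem f b.2)),
    (MonoidHom.ofInjective hg).symm.injective.comp fun _ _ hxy =>
      B.subtype_injective (hf (congrArg Subtype.val hxy))⟩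

section Amalgam

open Monoid

variable {K : Type*} [Group K] {A : Bool → Type*} [∀ i, Group (A i)] {φ : ∀ i, K →* A i}

theorem word_eq_empty_of_mem_range (hφ : ∀ i, Function.Injective (φ i)) {i : Bool}
    {w : CoprodI.Word A} (hw : PushoutI.Reduced φ w) (hi : w.fstIdx ≠ some i)
    (hwi : PushoutI.ofCoprodI w.prod ∈ (PushoutI.of (φ := φ) i).range) : w = .empty := by
  obtain ⟨a, ha⟩ := hwi
  by_cases haφ : a ∈ (φ i).range
  · obtain ⟨k, rfl⟩ := haφ
    exact hw.eq_empty_of_mem_range hφ ⟨k, by rw [← ha, PushoutI.of_apply_eq_base]⟩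
  · have ha1 : a⁻¹ ≠ 1 := fun h => haφ (by rw [inv_eq_one.1 h]; exact one_mem _)
    have hred : PushoutI.Reduced φ (CoprodI.Word.cons a⁻¹ w hi ha1) := by
      intro b hb
      simp only [CoprodI.Word.cons, List.mem_cons] at hb
      rcases hb with rfl | hb
      · simpa using haφ
      · exact hw b hb
    have hempty := hred.eq_empty_of_mem_range hφ (by
      rw [CoprodI.Word.prod_cons, map_mul, PushoutI.ofCoprodI_of, map_inv, ha, inv_mul_cancel]
      exact one_mem _)
    simp [CoprodI.Word.ext_iff, CoprodI.Word.cons, CoprodI.Word.empty] at hempty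

variable (φ) in
/-- The vertices of the Bass–Serre tree of the amalgamated product of `A true` and `A false` over
`K`: the cosets of the two factors. -/
abbrev BassSerreVertex : Type _ := Σ i : Bool, PushoutI φ ⧸ (PushoutI.of (φ := φ) i).range

namespace BassSerreVertex

variable (φ) in
/-- The coset of the factor `A i` represented by `g`, as a vertex of the Bass–Serre tree. -/
def mk (i : Bool) (g : PushoutI φ) : BassSerreVertex φ := ⟨i, QuotientGroup.mk g⟩

theorem exists_eq_mk (x : BassSerreVertex φ) : ∃ i g, x = mk φ i g := by
  obtain ⟨i, q⟩ := x
  obtain ⟨g, rfl⟩ := QuotientGroup.mk_surjective q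
  exact ⟨i, g, rfl⟩

theorem mk_eq_mk {i j : Bool} {g h : PushoutI φ} :
    mk φ i g = mk φ j h ↔ i = j ∧ g⁻¹ * h ∈ (PushoutI.of (φ := φ) i).range := by
  constructor
  · intro heq
    obtain rfl : i = j := congrArg Sigma.fst heq
    exact ⟨rfl, QuotientGroup.eq.1 (eq_of_heq (Sigma.mk.inj_iff.1 heq).2)⟩
  · rintro ⟨rfl, hgh⟩
    exact congrArg (Sigma.mk i) (QuotientGroup.eq.2 hgh)

theorem smul_mk (g h : PushoutI φ) (i : Bool) : g • mk φ i h = mk φ i (g * h) := rfl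

end BassSerreVertex

open BassSerreVertex

variable (φ) in
/-- The Bass–Serre tree of an amalgamated product: each element of the product spans an edge
between the cosets of the two factors that it represents. -/
def bassSerreTree : SimpleGraph (BassSerreVertex φ) where
  Adj x y := ∃ i g, x = mk φ i g ∧ y = mk φ (!i) g
  symm := ⟨by
    rintro _ _ ⟨i, g, rfl, rfl⟩
    exact ⟨!i, g, rfl, by rw [Bool.not_not]⟩⟩
  loopless := ⟨by
    rintro _ ⟨i, g, rfl, h⟩
    simp [mk_eq_mk] at h⟩

theorem bassSerreTree_adj_mk (i : Bool) (g : PushoutI φ) :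
    (bassSerreTree φ).Adj (mk φ i g) (mk φ (!i) g) :=
  ⟨i, g, rfl, rfl⟩

theorem bassSerreTree_adj_smul (g : PushoutI φ) {x y : BassSerreVertex φ}
    (h : (bassSerreTree φ).Adj x y) : (bassSerreTree φ).Adj (g • x) (g • y) := by
  obtain ⟨i, k, rfl, rfl⟩ := h
  exact ⟨i, g * k, rfl, rfl⟩

theorem reachable_mk (i j : Bool) (g : PushoutI φ) :
    (bassSerreTree φ).Reachable (mk φ i g) (mk φ j g) := by
  obtain rfl | rfl : j = i ∨ j = !i := by cases i <;> cases j <;> simp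
  · exact .refl _
  · exact (bassSerreTree_adj_mk i g).reachable

theorem reachable_smul (g : PushoutI φ) {x y : BassSerreVertex φ}
    (h : (bassSerreTree φ).Reachable x y) : (bassSerreTree φ).Reachable (g • x) (g • y) :=
  h.map ⟨(g • ·), bassSerreTree_adj_smul g⟩

theorem reachable_mk_one (g : PushoutI φ) (i : Bool) :
    (bassSerreTree φ).Reachable (mk φ i 1) (mk φ i g) := by
  have reachable_of (j : Bool) (a : A j) :
      (bassSerreTree φ).Reachable (mk φ i 1) (mk φ i (PushoutI.of j a)) := by
    have heq : mk φ j 1 = mk φ j (PushoutI.of j a) := mk_eq_mk.2 ⟨rfl, a, by simp⟩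
    exact (reachable_mk i j 1).trans (heq ▸ reachable_mk j i (PushoutI.of j a))
  induction g using PushoutI.induction_on with
  | of j a => exact reachable_of j a
  | base k =>
    rw [← PushoutI.of_apply_eq_base φ true k]
    exact reachable_of _ _
  | mul x y hx hy =>
    exact hx.trans (by simpa only [smul_mk, mul_one] using reachable_smul x hy)

theorem connected_bassSerreTree : (bassSerreTree φ).Connected := by
  have : Nonempty (BassSerreVertex φ) := ⟨mk φ true 1⟩
  have reachable_base (x : BassSerreVertex φ) : (bassSerreTree φ).Reachable (mk φ true 1) x := by
    obtain ⟨i, g, rfl⟩ := exists_eq_mk x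
    exact (reachable_mk_one g true).trans (reachable_mk true i g)
  exact ⟨fun x y => (reachable_base x).symm.trans (reachable_base y)⟩

theorem exists_reduced_word_of_isTrail {x y z : BassSerreVertex φ} (h : (bassSerreTree φ).Adj x y)
    (p : (bassSerreTree φ).Walk y z) (hp : (p.cons h).IsTrail) :
    ∃ (i j : Bool) (g c : PushoutI φ) (w : CoprodI.Word A),
      x = mk φ i g ∧ y = mk φ (!i) g ∧ z = mk φ j c ∧ PushoutI.Reduced φ w ∧
        w.fstIdx ≠ some i ∧ PushoutI.ofCoprodI w.prod = g⁻¹ * c ∧ w.toList.length = p.length := by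
  induction p generalizing x with
  | nil =>
    obtain ⟨i, g, rfl, rfl⟩ := h
    refine ⟨i, !i, g, g, .empty, rfl, rfl, rfl, fun a ha => ?_, ?_, by simp, rfl⟩
    · simp [CoprodI.Word.empty] at ha
    · simp [CoprodI.Word.fstIdx, CoprodI.Word.empty]
  | @cons y y' z h' p ih =>
    obtain ⟨hp', hxy⟩ := (SimpleGraph.Walk.isTrail_cons _ _).1 hp
    obtain ⟨i', j, g', c, w, hy', rfl, rfl, hred, hfst, hprod, hlen⟩ := ih h' hp'
    obtain ⟨i, g, rfl, rfl⟩ := h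
    obtain ⟨rfl, a, ha⟩ := mk_eq_mk.1 hy'
    have haφ : a ∉ (φ !i).range := by
      rintro ⟨k, rfl⟩
      refine hxy (List.mem_cons.2 (.inl ?_))
      have hg : mk φ i g = mk φ (!!i) g' := by
        rw [Bool.not_not, mk_eq_mk, ← ha, PushoutI.of_apply_eq_base]
        exact ⟨rfl, φ i k, PushoutI.of_apply_eq_base φ i k⟩
      rw [Sym2.eq_swap, hg]
      rfl
    have ha1 : a ≠ 1 := fun h => haφ (h ▸ one_mem _)
    refine ⟨i, j, g, c, .cons a w hfst ha1, rfl, rfl, rfl, fun b hb => ?_, ?_, ?_, ?_⟩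
    · simp only [CoprodI.Word.cons, List.mem_cons] at hb
      rcases hb with rfl | hb
      · exact haφ
      · exact hred b hb
    · simp [CoprodI.Word.fstIdx_cons]
    · rw [CoprodI.Word.prod_cons, map_mul, hprod, PushoutI.ofCoprodI_of, ha]
      group
    · simp [CoprodI.Word.cons, hlen]

theorem isTree_bassSerreTree (hφ : ∀ i, Function.Injective (φ i)) : (bassSerreTree φ).IsTree := by
  refine ⟨connected_bassSerreTree, fun x p hp => ?_⟩
  cases p with
  | nil => exact hp.ne_nil rfl
  | cons h p =>
    obtain ⟨i, j, g, c, w, hx, -, hz, hred, hfst, hprod, hlen⟩ :=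
      exists_reduced_word_of_isTrail h p hp.isTrail
    have hempty : w = .empty := word_eq_empty_of_mem_range hφ hred hfst
      (hprod ▸ (mk_eq_mk.1 (hx.symm.trans hz)).2)
    have hlength := hp.three_le_length
    rw [SimpleGraph.Walk.length_cons, ← hlen, hempty] at hlength
    simp [CoprodI.Word.empty] at hlength

theorem mem_stabilizer_mk {i : Bool} {g h : PushoutI φ} :
    h ∈ MulAction.stabilizer (PushoutI φ) (mk φ i g) ↔
      g⁻¹ * h * g ∈ (PushoutI.of (φ := φ) i).range := by
  rw [MulAction.mem_stabilizer_iff, smul_mk, eq_comm, mk_eq_mk, mul_assoc]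
  simp

theorem coherent_pushoutI (hφ : ∀ i, Function.Injective (φ i))
    (hA : ∀ i, Group.Coherent (A i)) (hK : Group.Slender K) : Group.Coherent (PushoutI φ) := by
  refine coherent_of_isTree (isTree_bassSerreTree hφ) (fun g => bassSerreTree_adj_smul g)
    (fun x => ?_) ?_
  · obtain ⟨i, g, rfl⟩ := exists_eq_mk x
    obtain ⟨k, hk⟩ := exists_injective_of_map_le_range (MulAut.conj g⁻¹).injective
      (f := (MulAut.conj g⁻¹).toMonoidHom) (PushoutI.of_injective hφ i)
      (B := MulAction.stabilizer (PushoutI φ) (mk φ i g)) (by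
        rintro _ ⟨h, hh, rfl⟩
        simpa using mem_stabilizer_mk.1 hh)
    exact coherent_of_injective hk (hA i)
  · rintro _ _ ⟨i, g, rfl, rfl⟩
    obtain ⟨k, hk⟩ := exists_injective_of_map_le_range (MulAut.conj g⁻¹).injective
      (f := (MulAut.conj g⁻¹).toMonoidHom) (PushoutI.base_injective hφ)
      (B := MulAction.stabilizer (PushoutI φ) (mk φ i g) ⊓
        MulAction.stabilizer (PushoutI φ) (mk φ (!i) g)) (by
        rw [← PushoutI.inf_of_range_eq_base_range hφ (Bool.not_ne_self i).symm]
        rintro _ ⟨h, hh, rfl⟩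
        exact ⟨by simpa using mem_stabilizer_mk.1 hh.1, by simpa using mem_stabilizer_mk.1 hh.2⟩)
    exact slender_of_injective hk hK

end Amalgam

/-! ### The geometric representation of a Coxeter group -/

open Real Polynomial.Chebyshev

theorem sin_pi_div_pos {m : ℕ} (hm : 2 ≤ m) : 0 < sin (π / m) := by
  have hm' : (2 : ℝ) ≤ m := by exact_mod_cast hm
  refine sin_pos_of_pos_of_lt_pi (by positivity) ?_
  rw [div_lt_iff₀ (by linarith)]
  nlinarith [pi_pos]

theorem eval_S_two_mul_cos_eq {m : ℕ} (hm : 2 ≤ m) {k : ℤ} {c : ℝ}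
    (h : sin ((k + 1) * (π / m)) = c * sin (π / m)) : (S ℝ k).eval (2 * cos (π / m)) = c :=
  mul_right_cancel₀ (sin_pi_div_pos hm).ne' (by rw [S_two_mul_real_cos, h])

-- The label `0` encodes the label `∞`, whose angle `π / ∞ = 0` is the junk value of `π / 0`.
theorem eval_S_two_mul_cos_nonneg {m k : ℕ} (hm : m ≠ 1) (hk : m = 0 ∨ k ≤ m) :
    0 ≤ (S ℝ (k - 1)).eval (2 * cos (π / m)) := by
  obtain rfl | hk := hk
  · simp [S_eval_two]
  obtain rfl | hm0 := eq_or_ne m 0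
  · simp [S_eval_two]
  have hm' : (0 : ℝ) < m := by positivity
  have hkm : (k : ℝ) ≤ m := by exact_mod_cast hk
  refine nonneg_of_mul_nonneg_left ?_ (sin_pi_div_pos (m := m) (by lia))
  rw [S_two_mul_real_cos]
  push_cast
  rw [sub_add_cancel]
  refine sin_nonneg_of_nonneg_of_le_pi (by positivity) ?_
  rw [← mul_div_assoc, div_le_iff₀ hm', mul_comm]
  exact mul_le_mul_of_nonneg_left hkm pi_pos.le

theorem prod_map_alternatingWord_two_mul {B G : Type*} [Monoid G] (f : B → G) (s t : B) (n : ℕ) :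
    ((CoxeterSystem.alternatingWord s t (2 * n)).map f).prod = (f s * f t) ^ n := by
  induction n with
  | zero => simp [CoxeterSystem.alternatingWord]
  | succ n ih =>
    rw [Nat.mul_succ, CoxeterSystem.alternatingWord_succ', CoxeterSystem.alternatingWord_succ',
      if_neg (by simp), if_pos (by simp), List.map_cons, List.map_cons, List.prod_cons,
      List.prod_cons, ih, ← mul_assoc, pow_succ']

section GeometricRepresentation

variable {B : Type*} [Fintype B] [DecidableEq B] (M : CoxeterMatrix B)

/-- The bilinear form on `B → ℝ` with Gram matrix `-cos (π / M i j)` that the geometric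
representation preserves. The label `M i j = 0` (for `∞`) contributes `-1`, as `π / 0 = 0`. -/
noncomputable def cosineForm : LinearMap.BilinForm ℝ (B → ℝ) :=
  Matrix.toBilin' (Matrix.of fun i j => -cos (π / M i j))

/-- The simple root of index `i`, the `i`-th standard basis vector. -/
def simpleRoot (i : B) : B → ℝ := Pi.single i 1

theorem cosineForm_simpleRoot (i j : B) :
    cosineForm M (simpleRoot i) (simpleRoot j) = -cos (π / M i j) :=
  Matrix.toBilin'_single _ i j

theorem cosineForm_comm (x y : B → ℝ) : cosineForm M x y = cosineForm M y x := by
  simp only [cosineForm, Matrix.toBilin'_apply]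
  rw [Finset.sum_comm]
  refine Finset.sum_congr rfl fun i _ => Finset.sum_congr rfl fun j _ => ?_
  rw [Matrix.of_apply, Matrix.of_apply, M.symmetric i j]
  ring

theorem cosineForm_simpleRoot_self (i : B) : cosineForm M (simpleRoot i) (simpleRoot i) = 1 := by
  simp [cosineForm_simpleRoot]

/-- The reflection of the geometric representation in the simple root of index `s`. -/
noncomputable def simpleReflection (s : B) : (B → ℝ) ≃ₗ[ℝ] (B → ℝ) :=
  Module.reflection (x := simpleRoot s) (f := (2 : ℝ) • cosineForm M (simpleRoot s))
    (by simp [cosineForm_simpleRoot_self])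

theorem simpleReflection_apply (s : B) (v : B → ℝ) :
    simpleReflection M s v = v - (2 * cosineForm M (simpleRoot s) v) • simpleRoot s :=
  Module.reflection_apply _ _

theorem simpleReflection_simpleReflection (s : B) (v : B → ℝ) :
    simpleReflection M s (simpleReflection M s v) = v :=
  Module.involutive_reflection _ v

theorem simpleReflection_simpleRoot (s : B) :
    simpleReflection M s (simpleRoot s) = -simpleRoot s :=
  Module.reflection_apply_self _

theorem cosineForm_simpleReflection (s : B) (x y : B → ℝ) :
    cosineForm M (simpleReflection M s x) (simpleReflection M s y) = cosineForm M x y := by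
  simp only [simpleReflection_apply, map_sub, map_smul, LinearMap.sub_apply, LinearMap.smul_apply,
    cosineForm_simpleRoot_self, smul_eq_mul, cosineForm_comm M _ (simpleRoot s)]
  ring

theorem simpleReflection_smul_add_smul (s t : B) (x y : ℝ) :
    simpleReflection M s (x • simpleRoot s + y • simpleRoot t) =
      (2 * cos (π / M s t) * y - x) • simpleRoot s + y • simpleRoot t := by
  simp only [simpleReflection_apply, map_add, map_smul, cosineForm_simpleRoot_self,
    cosineForm_simpleRoot]
  module

theorem simpleReflection_smul_add_smul' (s t : B) (x y : ℝ) :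
    simpleReflection M t (x • simpleRoot s + y • simpleRoot t) =
      x • simpleRoot s + (2 * cos (π / M s t) * x - y) • simpleRoot t := by
  rw [add_comm, simpleReflection_smul_add_smul, M.symmetric t s, add_comm]

theorem prod_simpleReflection_alternatingWord_apply (s t : B) (k : ℕ) :
    ((CoxeterSystem.alternatingWord s t k).map (simpleReflection M)).prod (simpleRoot s) =
      if Even k then
        (S ℝ k).eval (2 * cos (π / M s t)) • simpleRoot s +
          (S ℝ (k - 1)).eval (2 * cos (π / M s t)) • simpleRoot t
      else
        (S ℝ (k - 1)).eval (2 * cos (π / M s t)) • simpleRoot s +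
          (S ℝ k).eval (2 * cos (π / M s t)) • simpleRoot t := by
  induction k with
  | zero => simp [CoxeterSystem.alternatingWord]
  | succ k ih =>
    rw [CoxeterSystem.alternatingWord_succ', List.map_cons, List.prod_cons, LinearEquiv.mul_apply,
      ih]
    push_cast
    rw [add_sub_cancel_right, S_add_one, Polynomial.eval_sub, Polynomial.eval_mul,
      Polynomial.eval_X]
    by_cases hk : Even k
    · rw [if_pos hk, if_pos hk, if_neg (by simpa [Nat.even_add_one] using hk),
        simpleReflection_smul_add_smul']
    · rw [if_neg hk, if_neg hk, if_pos (by simpa [Nat.even_add_one] using hk),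
        simpleReflection_smul_add_smul]

theorem simpleReflection_mul_pow_simpleRoot {s t : B} (hst : 2 ≤ M s t) :
    ((simpleReflection M s * simpleReflection M t) ^ M s t) (simpleRoot s) = simpleRoot s := by
  have hm : (M s t : ℝ) ≠ 0 := by positivity
  rw [← prod_map_alternatingWord_two_mul, prod_simpleReflection_alternatingWord_apply,
    if_pos (by simp), eval_S_two_mul_cos_eq hst (c := 1), eval_S_two_mul_cos_eq hst (c := 0)]
  · simp
  · rw [zero_mul, show ((((2 * M s t : ℕ) : ℤ) - 1 : ℤ) + 1 : ℝ) * (π / M s t) = 2 * π by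
      push_cast; field_simp; ring, sin_two_pi]
  · rw [one_mul, show ((((2 * M s t : ℕ) : ℤ) : ℝ) + 1) * (π / M s t) = π / M s t + 2 * π by
      push_cast; field_simp; ring, sin_add_two_pi]

theorem simpleReflection_mul_pow_simpleRoot' {s t : B} (hst : 2 ≤ M s t) :
    ((simpleReflection M s * simpleReflection M t) ^ M s t) (simpleRoot t) = simpleRoot t := by
  have hinv : (simpleReflection M s * simpleReflection M t)⁻¹ =
      simpleReflection M t * simpleReflection M s := by
    rw [mul_inv_rev]; rfl
  have h := simpleReflection_mul_pow_simpleRoot M (M.symmetric t s ▸ hst)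
  rw [M.symmetric t s, ← hinv, inv_pow] at h
  exact ((LinearEquiv.symm_apply_eq _).1 h).symm

theorem simpleReflection_mul_pow_of_orthogonal {s t : B} {z : B → ℝ}
    (hs : cosineForm M (simpleRoot s) z = 0) (ht : cosineForm M (simpleRoot t) z = 0) (n : ℕ) :
    ((simpleReflection M s * simpleReflection M t) ^ n) z = z := by
  induction n with
  | zero => rfl
  | succ n ih =>
    rw [pow_succ', LinearEquiv.mul_apply, ih, LinearEquiv.mul_apply, simpleReflection_apply M t,
      ht]
    simp [simpleReflection_apply, hs]

theorem exists_orthogonal_add_smul_add_smul {s t : B} (hst : 2 ≤ M s t) (z : B → ℝ) :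
    ∃ (o : B → ℝ) (x y : ℝ), cosineForm M (simpleRoot s) o = 0 ∧
      cosineForm M (simpleRoot t) o = 0 ∧ z = o + (x • simpleRoot s + y • simpleRoot t) := by
  have hD : 1 - cos (π / M s t) ^ 2 ≠ 0 := by
    rw [← sin_sq]
    exact (pow_pos (sin_pi_div_pos hst) 2).ne'
  set c := cos (π / M s t) with hc
  let a := cosineForm M (simpleRoot s) z
  let b := cosineForm M (simpleRoot t) z
  refine ⟨_, (a + c * b) / (1 - c ^ 2), (b + c * a) / (1 - c ^ 2), ?_, ?_,
    (sub_add_cancel z _).symm⟩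
  · simp only [map_sub, map_add, map_smul, cosineForm_simpleRoot_self, cosineForm_simpleRoot,
      smul_eq_mul, ← hc, a]
    field_simp
    ring
  · simp only [map_sub, map_add, map_smul, cosineForm_simpleRoot_self, cosineForm_simpleRoot,
      smul_eq_mul, M.symmetric t s, ← hc, b]
    field_simp
    ring

theorem isLiftable_simpleReflection : M.IsLiftable (simpleReflection M) := by
  intro s t
  obtain rfl | hst := eq_or_ne s t
  · rw [M.diagonal, pow_one]
    ext v : 1
    exact simpleReflection_simpleReflection M s v
  obtain h0 | h0 := eq_or_ne (M s t) 0
  · rw [h0, pow_zero]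
  have hm : 2 ≤ M s t := by
    have := M.off_diagonal s t hst
    lia
  ext z : 1
  obtain ⟨o, x, y, hos, hot, rfl⟩ := exists_orthogonal_add_smul_add_smul M hm z
  simp only [map_add, map_smul, simpleReflection_mul_pow_simpleRoot M hm,
    simpleReflection_mul_pow_simpleRoot' M hm, simpleReflection_mul_pow_of_orthogonal M hos hot]
  rfl

/-- The geometric (Tits) representation of a Coxeter group. -/
noncomputable def geometricRep : M.Group →* ((B → ℝ) ≃ₗ[ℝ] (B → ℝ)) :=
  M.toCoxeterSystem.lift ⟨simpleReflection M, isLiftable_simpleReflection M⟩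

theorem geometricRep_simple (s : B) : geometricRep M (M.simple s) = simpleReflection M s := by
  rw [← M.toCoxeterSystem_simple]
  exact M.toCoxeterSystem.lift_apply_simple (isLiftable_simpleReflection M) s

theorem geometricRep_mul (v w : M.Group) (x : B → ℝ) :
    geometricRep M (v * w) x = geometricRep M v (geometricRep M w x) := by
  rw [map_mul, LinearEquiv.mul_apply]

theorem geometricRep_one (x : B → ℝ) : geometricRep M 1 x = x := by
  rw [map_one]; rfl

theorem geometricRep_inv_geometricRep (w : M.Group) (x : B → ℝ) :
    geometricRep M w⁻¹ (geometricRep M w x) = x := by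
  rw [← geometricRep_mul, inv_mul_cancel, geometricRep_one]

theorem geometricRep_geometricRep_inv (w : M.Group) (x : B → ℝ) :
    geometricRep M w (geometricRep M w⁻¹ x) = x := by
  rw [← geometricRep_mul, mul_inv_cancel, geometricRep_one]

theorem cosineForm_geometricRep (w : M.Group) (x y : B → ℝ) :
    cosineForm M (geometricRep M w x) (geometricRep M w y) = cosineForm M x y := by
  induction w using M.toCoxeterSystem.simple_induction_left with
  | one => rw [geometricRep_one, geometricRep_one]
  | mul_simple_left w i ih =>
    rw [M.toCoxeterSystem_simple, geometricRep_mul, geometricRep_mul, geometricRep_simple,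
      cosineForm_simpleReflection, ih]

end GeometricRepresentation

/-! ### Roots and parabolic subgroups -/

open CoxeterSystem

section AlternatingSuffix

variable {B W : Type*} [Group W] {M : CoxeterMatrix B} (cs : CoxeterSystem M W)

/-- The element `w` has a reduced expression ending in the alternating word of length `k` in `s`
and `t` whose last letter is `t`. -/
def HasAlternatingSuffix (w : W) (s t : B) (k : ℕ) : Prop :=
  ∃ v, w = v * cs.wordProd (alternatingWord s t k) ∧ cs.length v + k = cs.length w

variable {cs} {w : W} {s t : B} {k : ℕ}

theorem length_wordProd_alternatingWord_le :
    cs.length (cs.wordProd (alternatingWord s t k)) ≤ k :=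
  (cs.length_wordProd_le _).trans (length_alternatingWord s t k).le

theorem HasAlternatingSuffix.of_succ (h : HasAlternatingSuffix cs w s t (k + 1)) :
    HasAlternatingSuffix cs w s t k := by
  obtain ⟨v, hv, hlen⟩ := h
  rw [alternatingWord_succ', wordProd_cons, ← mul_assoc] at hv
  refine ⟨_, hv, le_antisymm ?_ ?_⟩
  · have := cs.length_mul_le v (cs.simple (if Even k then t else s))
    rw [cs.length_simple] at this
    lia
  · nth_rw 1 [hv]
    exact (cs.length_mul_le _ _).trans (Nat.add_le_add_left length_wordProd_alternatingWord_le _)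

theorem HasAlternatingSuffix.of_le {j : ℕ} (h : HasAlternatingSuffix cs w s t k) (hjk : j ≤ k) :
    HasAlternatingSuffix cs w s t j := by
  induction hjk using Nat.decreasingInduction with
  | self => exact h
  | of_succ _ _ ih => exact ih.of_succ

theorem hasAlternatingSuffix_zero : HasAlternatingSuffix cs w s t 0 :=
  ⟨w, by simp [alternatingWord], rfl⟩

theorem hasAlternatingSuffix_one (h : cs.IsRightDescent w t) : HasAlternatingSuffix cs w s t 1 :=
  ⟨w * cs.simple t, by simp [alternatingWord], cs.isRightDescent_iff.1 h⟩

theorem exists_hasAlternatingSuffix_not_succ (cs : CoxeterSystem M W) (w : W) (s t : B) :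
    ∃ k, HasAlternatingSuffix cs w s t k ∧ ¬ HasAlternatingSuffix cs w s t (k + 1) := by
  by_contra! h
  have all (k : ℕ) : HasAlternatingSuffix cs w s t k := by
    induction k with
    | zero => exact hasAlternatingSuffix_zero
    | succ k ih => exact h k ih
  obtain ⟨v, -, hlen⟩ := all (cs.length w + 1)
  lia

theorem HasAlternatingSuffix.lt_of_not_isRightDescent (h : HasAlternatingSuffix cs w s t k)
    (hs : ¬ cs.IsRightDescent w s) (hst : M s t ≠ 0) : k < M s t := by
  by_contra! hle
  obtain ⟨v, hv, hlen⟩ := h.of_le hle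
  obtain ⟨m, hm⟩ := Nat.exists_eq_succ_of_ne_zero hst
  have hbraid := cs.wordProd_braidWord_eq s t
  rw [braidWord, braidWord, M.symmetric t s] at hbraid
  rw [hbraid, hm, alternatingWord_succ, wordProd_concat, ← mul_assoc] at hv
  refine hs ?_
  rw [IsRightDescent, hv, simple_mul_simple_cancel_right, ← hv]
  have := cs.length_mul_le v (cs.wordProd (alternatingWord s t m))
  have : cs.length (cs.wordProd (alternatingWord s t m)) ≤ m :=
    length_wordProd_alternatingWord_le
  lia

theorem exists_eq_mul_wordProd_alternatingWord (hs : ¬ cs.IsRightDescent w s)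
    (ht : cs.IsRightDescent w t) :
    ∃ v k, w = v * cs.wordProd (alternatingWord s t k) ∧ cs.length v < cs.length w ∧
      (M s t = 0 ∨ k < M s t) ∧ ¬ cs.IsRightDescent v s ∧ ¬ cs.IsRightDescent v t := by
  obtain ⟨k, hk, hk'⟩ := exists_hasAlternatingSuffix_not_succ cs w s t
  obtain _ | k := k
  · exact absurd (hasAlternatingSuffix_one ht) hk'
  have hM := or_iff_not_imp_left.2 (hk.lt_of_not_isRightDescent hs)
  obtain ⟨v, hv, hlen⟩ := hk
  have not_descent_next : ¬ cs.IsRightDescent v (if Even (k + 1) then t else s) := fun h => by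
    rw [isRightDescent_iff] at h
    refine hk' ⟨v * cs.simple (if Even (k + 1) then t else s), ?_, by lia⟩
    rw [alternatingWord_succ', wordProd_cons, mul_assoc, simple_mul_simple_cancel_left]
    exact hv
  have not_descent_first : ¬ cs.IsRightDescent v (if Even k then t else s) := fun h => by
    rw [isRightDescent_iff] at h
    rw [alternatingWord_succ', wordProd_cons, ← mul_assoc] at hv
    have hmul := cs.length_mul_le (v * cs.simple (if Even k then t else s))
      (cs.wordProd (alternatingWord s t k))
    rw [← hv] at hmul
    have : cs.length (cs.wordProd (alternatingWord s t k)) ≤ k :=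
      length_wordProd_alternatingWord_le
    lia
  refine ⟨v, k + 1, hv, by lia, hM, ?_⟩
  by_cases hk : Even k
  · rw [if_neg (by simpa [Nat.even_add_one] using hk)] at not_descent_next
    rw [if_pos hk] at not_descent_first
    exact ⟨not_descent_next, not_descent_first⟩
  · rw [if_pos (by simpa [Nat.even_add_one] using hk)] at not_descent_next
    rw [if_neg hk] at not_descent_first
    exact ⟨not_descent_first, not_descent_next⟩

end AlternatingSuffix

section Roots

variable {B : Type*} [DecidableEq B]

theorem simpleRoot_nonneg (s : B) : 0 ≤ simpleRoot s := Pi.single_nonneg.2 zero_le_one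

variable [Fintype B] {M : CoxeterMatrix B}

theorem geometricRep_wordProd (ω : List B) :
    geometricRep M (M.toCoxeterSystem.wordProd ω) = (ω.map (simpleReflection M)).prod := by
  rw [CoxeterSystem.wordProd, map_list_prod, List.map_map]
  congr 2

theorem geometricRep_simpleRoot_nonneg {w : M.Group} {s : B}
    (hs : ¬ M.toCoxeterSystem.IsRightDescent w s) : 0 ≤ geometricRep M w (simpleRoot s) := by
  induction hn : M.toCoxeterSystem.length w using Nat.strong_induction_on generalizing w s with
  | _ n ih =>
  obtain rfl | hw := eq_or_ne w 1
  · rw [geometricRep_one]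
    exact simpleRoot_nonneg s
  obtain ⟨t, ht⟩ := M.toCoxeterSystem.exists_rightDescent_of_ne_one hw
  obtain ⟨v, k, rfl, hlt, hk, hvs, hvt⟩ := exists_eq_mul_wordProd_alternatingWord hs ht
  have hst : M s t ≠ 1 := M.off_diagonal s t (by rintro rfl; exact hs ht)
  have hS := eval_S_two_mul_cos_nonneg hst (hk.imp_right Nat.succ_le_of_lt)
  have hS' := eval_S_two_mul_cos_nonneg hst (hk.imp_right le_of_lt)
  rw [Nat.cast_succ, add_sub_cancel_right] at hS
  rw [geometricRep_mul, geometricRep_wordProd, prod_simpleReflection_alternatingWord_apply]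
  split_ifs
  all_goals
    rw [map_add, map_smul, map_smul]
    refine add_nonneg (smul_nonneg ?_ (ih _ (hn ▸ hlt) hvs rfl))
      (smul_nonneg ?_ (ih _ (hn ▸ hlt) hvt rfl)) <;> assumption

theorem geometricRep_simpleRoot_nonpos {w : M.Group} {s : B}
    (hs : M.toCoxeterSystem.IsRightDescent w s) : geometricRep M w (simpleRoot s) ≤ 0 := by
  rw [isRightDescent_iff_not_isRightDescent_mul] at hs
  have := geometricRep_simpleRoot_nonneg hs
  rwa [geometricRep_mul, M.toCoxeterSystem_simple, geometricRep_simple,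
    simpleReflection_simpleRoot, map_neg, Left.nonneg_neg_iff] at this

variable (M) in
/-- A root: an image of a simple root under the geometric representation. -/
def IsRoot (β : B → ℝ) : Prop := ∃ w s, β = geometricRep M w (simpleRoot s)

theorem isRoot_simpleRoot (s : B) : IsRoot M (simpleRoot s) := ⟨1, s, (geometricRep_one M _).symm⟩

namespace IsRoot

variable {β : B → ℝ}

theorem map (h : IsRoot M β) (w : M.Group) : IsRoot M (geometricRep M w β) := by
  obtain ⟨v, s, rfl⟩ := h
  exact ⟨w * v, s, (geometricRep_mul M _ _ _).symm⟩

theorem map_simpleReflection (h : IsRoot M β) (s : B) : IsRoot M (simpleReflection M s β) :=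
  geometricRep_simple M s ▸ h.map (M.simple s)

theorem neg (h : IsRoot M β) : IsRoot M (-β) := by
  obtain ⟨v, s, rfl⟩ := h
  exact ⟨v * M.simple s, s, by
    rw [geometricRep_mul, geometricRep_simple, simpleReflection_simpleRoot, map_neg]⟩

theorem cosineForm_self (h : IsRoot M β) : cosineForm M β β = 1 := by
  obtain ⟨v, s, rfl⟩ := h
  rw [cosineForm_geometricRep, cosineForm_simpleRoot_self]

theorem nonneg_or_nonpos (h : IsRoot M β) : 0 ≤ β ∨ β ≤ 0 := by
  obtain ⟨v, s, rfl⟩ := h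
  by_cases hs : M.toCoxeterSystem.IsRightDescent v s
  · exact .inr (geometricRep_simpleRoot_nonpos hs)
  · exact .inl (geometricRep_simpleRoot_nonneg hs)

theorem ne_zero (h : IsRoot M β) : β ≠ 0 := by
  rintro rfl
  simpa using h.cosineForm_self

theorem not_nonneg_iff (h : IsRoot M β) : ¬ 0 ≤ β ↔ β ≤ 0 :=
  ⟨h.nonneg_or_nonpos.resolve_left, fun h₁ h₂ => h.ne_zero (le_antisymm h₁ h₂)⟩

theorem not_nonpos_iff (h : IsRoot M β) : ¬ β ≤ 0 ↔ 0 ≤ β :=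
  ⟨h.nonneg_or_nonpos.resolve_right, fun h₁ h₂ => h.ne_zero (le_antisymm h₂ h₁)⟩

theorem exists_geometricRep_eq_reflection (h : IsRoot M β) : ∃ r : M.Group, r * r = 1 ∧
    ∀ v, geometricRep M r v = v - (2 * cosineForm M β v) • β := by
  obtain ⟨w, s, rfl⟩ := h
  refine ⟨w * M.simple s * w⁻¹, ?_, fun v => ?_⟩
  · have hs := M.toCoxeterSystem.simple_mul_simple_self s
    rw [M.toCoxeterSystem_simple] at hs
    simp only [mul_assoc, inv_mul_cancel_left]
    rw [← mul_assoc (M.simple s), hs, one_mul, mul_inv_cancel]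
  · rw [geometricRep_mul, geometricRep_mul, geometricRep_simple, simpleReflection_apply, map_sub,
      map_smul, geometricRep_geometricRep_inv, ← cosineForm_geometricRep M w,
      geometricRep_geometricRep_inv]

theorem simpleReflection_nonneg (h : IsRoot M β) (hβ : 0 ≤ β) {s : B} (hne : β ≠ simpleRoot s) :
    0 ≤ simpleReflection M s β := by
  by_contra hneg
  rw [(h.map_simpleReflection s).not_nonneg_iff] at hneg
  have hzero (i : B) (hi : i ≠ s) : β i = 0 := by
    have := hneg i
    rw [simpleReflection_apply] at this
    simp only [simpleRoot, Pi.sub_apply, Pi.smul_apply, Pi.single_eq_of_ne hi, smul_zero, sub_zero,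
      Pi.zero_apply] at this
    exact le_antisymm this (hβ i)
  have hβs : β = β s • simpleRoot s := by
    ext i
    obtain rfl | hi := eq_or_ne i s
    · simp [simpleRoot]
    · simp [simpleRoot, hzero i hi, Pi.single_eq_of_ne hi]
  have hself := h.cosineForm_self
  rw [hβs, map_smul, map_smul, LinearMap.smul_apply, cosineForm_simpleRoot_self, smul_eq_mul,
    smul_eq_mul, mul_one, mul_self_eq_one_iff] at hself
  have hβs1 : β s = 1 := hself.resolve_right fun h => by
    have := hβ s
    norm_num [h] at this
  rw [hβs1, one_smul] at hβs
  exact hne hβs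

end IsRoot

variable (M) in
/-- The inversion set of `w`: the positive roots that `w` makes negative. -/
def inversionSet (w : M.Group) : Set (B → ℝ) := {β | IsRoot M β ∧ 0 ≤ β ∧ geometricRep M w β ≤ 0}

theorem finite_inversionSet (w : M.Group) : (inversionSet M w).Finite := by
  induction w using M.toCoxeterSystem.simple_induction_right with
  | one =>
    refine Set.finite_empty.subset ?_
    rintro β ⟨h, hpos, hneg⟩
    rw [geometricRep_one] at hneg
    exact h.not_nonneg_iff.2 hneg hpos
  | mul_simple_right w i ih =>
    refine ((ih.image (simpleReflection M i)).insert (simpleRoot i)).subset ?_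
    rintro β ⟨h, hpos, hneg⟩
    rw [geometricRep_mul, M.toCoxeterSystem_simple, geometricRep_simple] at hneg
    refine or_iff_not_imp_left.2 fun hne => ?_
    exact ⟨simpleReflection M i β,
      ⟨h.map_simpleReflection i, h.simpleReflection_nonneg hpos hne, hneg⟩,
      simpleReflection_simpleReflection M i β⟩

theorem eq_one_of_forall_nonneg {w : M.Group}
    (h : ∀ s, 0 ≤ geometricRep M w (simpleRoot s)) : w = 1 := by
  by_contra hw
  obtain ⟨s, hs⟩ := M.toCoxeterSystem.exists_rightDescent_of_ne_one hw
  exact ((isRoot_simpleRoot s).map w).not_nonneg_iff.2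
    (geometricRep_simpleRoot_nonpos hs) (h s)

end Roots

section Parabolic

variable {B B' : Type*} {M : CoxeterMatrix B} {M' : CoxeterMatrix B'}

/-- The homomorphism of Coxeter groups induced by a map of indices that preserves the labels. -/
noncomputable def parabolicMap (f : B' → B) (hf : ∀ i j, M' i j = M (f i) (f j)) :
    M'.Group →* M.Group :=
  M'.toCoxeterSystem.lift ⟨fun i => M.simple (f i), fun i j => by
    rw [hf, ← M.toCoxeterSystem_simple]
    exact M.toCoxeterSystem.simple_mul_simple_pow _ _⟩

theorem parabolicMap_simple (f : B' → B) (hf : ∀ i j, M' i j = M (f i) (f j)) (i : B') :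
    parabolicMap f hf (M'.simple i) = M.simple (f i) := by
  rw [← M'.toCoxeterSystem_simple]
  exact M'.toCoxeterSystem.lift_apply_simple (f := fun i => M.simple (f i)) _ i

variable [Fintype B] [DecidableEq B] [Fintype B'] [DecidableEq B']

theorem geometricRep_parabolicMap (f : B' → B) (hf : ∀ i j, M' i j = M (f i) (f j)) (w : M'.Group)
    (x : B' → ℝ) :
    geometricRep M (parabolicMap f hf w)
        (Fintype.linearCombination ℝ (fun i => simpleRoot (f i)) x) =
      Fintype.linearCombination ℝ (fun i => simpleRoot (f i)) (geometricRep M' w x) := by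
  let E : (B' → ℝ) →ₗ[ℝ] (B → ℝ) := Fintype.linearCombination ℝ fun i => simpleRoot (f i)
  change geometricRep M (parabolicMap f hf w) (E x) = E (geometricRep M' w x)
  have hE (i : B') : E (simpleRoot i) = simpleRoot (f i) := by
    simp [E, simpleRoot, Fintype.linearCombination_apply_single]
  have hform : (cosineForm M).compl₁₂ E E = cosineForm M' := by
    refine LinearMap.ext_basis (Pi.basisFun ℝ B') (Pi.basisFun ℝ B') fun i j => ?_
    rw [Pi.basisFun_apply, Pi.basisFun_apply]
    change cosineForm M (E (simpleRoot i)) (E (simpleRoot j)) =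
      cosineForm M' (simpleRoot i) (simpleRoot j)
    rw [hE, hE, cosineForm_simpleRoot, cosineForm_simpleRoot, hf]
  induction w using M'.toCoxeterSystem.simple_induction_left generalizing x with
  | one => rw [map_one, geometricRep_one, geometricRep_one]
  | mul_simple_left w i ih =>
    rw [map_mul, M'.toCoxeterSystem_simple, parabolicMap_simple, geometricRep_mul,
      geometricRep_mul, ih, geometricRep_simple, geometricRep_simple, simpleReflection_apply,
      simpleReflection_apply, ← hE, ← hform, LinearMap.compl₁₂_apply, map_sub, map_smul]

end Parabolic

theorem parabolicMap_injective {B B' : Type*} [Finite B] [Finite B'] {M : CoxeterMatrix B}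
    {M' : CoxeterMatrix B'} {f : B' → B} (hinj : Function.Injective f)
    (hf : ∀ i j, M' i j = M (f i) (f j)) : Function.Injective (parabolicMap (M := M) f hf) := by
  classical
  cases nonempty_fintype B
  cases nonempty_fintype B'
  refine (injective_iff_map_eq_one _).2 fun w hw => eq_one_of_forall_nonneg fun s => ?_
  have h := geometricRep_parabolicMap f hf w (simpleRoot s)
  rw [hw, geometricRep_one] at h
  have eval_linearCombination (z : B' → ℝ) (i : B') :
      Fintype.linearCombination ℝ (fun i => simpleRoot (f i)) z (f i) = z i := by
    rw [Fintype.linearCombination_apply, Finset.sum_apply, Finset.sum_eq_single i]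
    · simp [simpleRoot]
    · intro j _ hj
      simp [simpleRoot, Pi.single_eq_of_ne (hinj.ne hj).symm]
    · simp
  intro i
  rw [← eval_linearCombination (geometricRep M' w (simpleRoot s)) i, ← h, eval_linearCombination]
  exact simpleRoot_nonneg s i

/-! ### Pairs of roots -/

section Recurrence

theorem exists_neg_of_add_le {d : ℕ → ℝ} {ε : ℝ} (hε : 0 < ε) (h : ∀ k, d (k + 1) + ε ≤ d k) :
    ∃ k, d k < 0 := by
  have linear_bound (k : ℕ) : d k + k * ε ≤ d 0 := by
    induction k with
    | zero => simp
    | succ k ih =>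
      push_cast
      linarith [h k]
  obtain ⟨k, hk⟩ := exists_nat_gt (d 0 / ε)
  rw [div_lt_iff₀ hε] at hk
  exact ⟨k, by linarith [linear_bound k]⟩

theorem monotone_of_nonneg_of_concave {a : ℕ → ℝ} (ha : ∀ k, 0 ≤ a k)
    (hconc : ∀ k, a (k + 2) - a (k + 1) ≤ a (k + 1) - a k) : Monotone a := by
  refine monotone_nat_of_le_succ fun n => ?_
  by_contra! hlt
  have decrement (k : ℕ) : a (n + k + 1) - a (n + k) ≤ a (n + 1) - a n := by
    induction k with
    | zero => rfl
    | succ k ih => exact (hconc _).trans ih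
  obtain ⟨k, hk⟩ := exists_neg_of_add_le (d := fun k => a (n + k)) (sub_pos.2 hlt)
    fun k => by
      rw [← add_assoc]
      linarith [decrement k]
  exact (ha _).not_gt hk

theorem not_forall_pos_of_recurrence {c : ℝ} (hc : c < 2) {a : ℕ → ℝ}
    (hrec : ∀ k, a (k + 2) = c * a (k + 1) - a k) : ¬ ∀ k, 0 < a k := by
  intro ha
  have hcpos : 0 < 2 - c := sub_pos.2 hc
  have hmono : Monotone a := monotone_of_nonneg_of_concave (fun k => (ha k).le) fun k => by
    rw [hrec]
    linarith [mul_pos hcpos (ha (k + 1))]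
  obtain ⟨k, hk⟩ := exists_neg_of_add_le (d := fun k => a (k + 1) - a k)
    (mul_pos hcpos (ha 0)) fun k => by
      rw [hrec]
      linarith [mul_le_mul_of_nonneg_left (hmono (Nat.zero_le (k + 1))) hcpos.le]
  exact (sub_nonneg.2 (hmono k.le_succ)).not_gt hk

theorem nonneg_and_add_le_of_recurrence {c : ℝ} (hc : 2 ≤ c) {x : ℕ → ℝ}
    (hrec : ∀ k, x (k + 2) = c * x (k + 1) - x k) (h0 : 0 ≤ x 0) (h1 : x 0 + x 0 ≤ x 1) (k : ℕ) :
    0 ≤ x k ∧ x 0 + x k ≤ x (k + 1) := by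
  induction k with
  | zero => exact ⟨h0, h1⟩
  | succ k ih =>
    have hk : 0 ≤ x (k + 1) := by linarith
    refine ⟨hk, ?_⟩
    rw [hrec]
    linarith [mul_le_mul_of_nonneg_right hc hk]

end Recurrence

variable {B : Type*} [Fintype B] [DecidableEq B] {M : CoxeterMatrix B}

namespace IsRoot

variable {β γ : B → ℝ}

-- The witness is the product of the reflections in `β` and `γ`.
theorem exists_rotation (hβ : IsRoot M β) (hγ : IsRoot M γ) : ∃ ρ : M.Group,
    geometricRep M ρ β =
      (4 * cosineForm M β γ ^ 2 - 1) • β - (2 * cosineForm M β γ) • γ ∧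
    ∀ k : ℕ, geometricRep M (ρ ^ (k + 2)) β =
      (4 * cosineForm M β γ ^ 2 - 2) • geometricRep M (ρ ^ (k + 1)) β -
        geometricRep M (ρ ^ k) β := by
  obtain ⟨t, -, ht⟩ := hβ.exists_geometricRep_eq_reflection
  obtain ⟨u, -, hu⟩ := hγ.exists_geometricRep_eq_reflection
  have hρβ : geometricRep M (t * u) β =
      (4 * cosineForm M β γ ^ 2 - 1) • β - (2 * cosineForm M β γ) • γ := by
    rw [geometricRep_mul, hu, map_sub, map_smul, ht, ht, hβ.cosineForm_self, cosineForm_comm M γ]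
    module
  have hρρβ : geometricRep M (t * u) (geometricRep M (t * u) β) =
      (4 * cosineForm M β γ ^ 2 - 2) • geometricRep M (t * u) β - β := by
    have hργ : geometricRep M (t * u) γ = (2 * cosineForm M β γ) • β - γ := by
      rw [geometricRep_mul, hu, map_sub, map_smul, ht, hγ.cosineForm_self]
      module
    calc
      _ = (4 * cosineForm M β γ ^ 2 - 1) • geometricRep M (t * u) β -
          (2 * cosineForm M β γ) • geometricRep M (t * u) γ := by
        rw [← map_smul, ← map_smul, ← map_sub, ← hρβ]
      _ = _ := by
        rw [hργ, hρβ]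
        module
  refine ⟨t * u, hρβ, fun k => ?_⟩
  rw [pow_succ, pow_succ, geometricRep_mul, geometricRep_mul, hρρβ, map_sub, map_smul,
    ← geometricRep_mul]

/-- If the cosine were at most `-1`, the translates of `β` by the powers of the rotation of `β` and
`γ` would be infinitely many elements of the finite inversion set of `w`. -/
theorem neg_one_lt_cosineForm_of_inversion (hβ : IsRoot M β) (hγ : IsRoot M γ) (hβ0 : 0 ≤ β)
    (hγ0 : 0 ≤ γ) {w : M.Group} (hwβ : geometricRep M w β ≤ 0)
    (hwγ : geometricRep M w γ ≤ 0) : -1 < cosineForm M β γ := by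
  by_contra! hle
  obtain ⟨ρ, hρ, hrec⟩ := hβ.exists_rotation hγ
  set b := cosineForm M β γ
  set a : ℕ → B → ℝ := fun k => geometricRep M (ρ ^ k) β with ha
  replace hrec : ∀ k, a (k + 2) = (4 * b ^ 2 - 2) • a (k + 1) - a k := hrec
  have ha0 : a 0 = β := by simp only [ha, pow_zero, geometricRep_one]
  have ha1 : a 1 = (4 * b ^ 2 - 1) • β - (2 * b) • γ := by simp only [ha, pow_one, hρ]
  have growth (f : (B → ℝ) →ₗ[ℝ] ℝ) (hfβ : 0 ≤ f β) (hfγ : 0 ≤ f γ) (k : ℕ) :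
      0 ≤ f (a k) ∧ f β + f (a k) ≤ f (a (k + 1)) := by
    rw [← ha0] at hfβ ⊢
    refine nonneg_and_add_le_of_recurrence (x := fun k => f (a k)) (c := 4 * b ^ 2 - 2)
      (by nlinarith) (fun k => ?_) hfβ ?_ k
    · rw [hrec, map_sub, map_smul, smul_eq_mul]
    · rw [ha1, map_sub, map_smul, map_smul, smul_eq_mul, smul_eq_mul, ha0]
      rw [ha0] at hfβ
      nlinarith [mul_nonneg (neg_nonneg.2 (hle.trans (by norm_num) : b ≤ 0)) hfγ,
        mul_nonneg (by nlinarith : 0 ≤ b ^ 2 - 1) hfβ]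
  have hmem (k : ℕ) : a k ∈ inversionSet M w := by
    refine ⟨hβ.map _, fun i => (growth (.proj i) (hβ0 i) (hγ0 i) k).1, fun i => ?_⟩
    refine neg_nonneg.1 (growth (-(LinearMap.proj i ∘ₗ
      (geometricRep M w).toLinearMap)) ?_ ?_ k).1
    exacts [neg_nonneg.2 (hwβ i), neg_nonneg.2 (hwγ i)]
  obtain ⟨i, hi⟩ : ∃ i, 0 < β i := by
    by_contra! h
    exact hβ.not_nonpos_iff.2 hβ0 h
  have hinj : Function.Injective a := fun k l hkl =>
    (strictMono_nat_of_lt_succ fun k => (lt_add_of_pos_left _ hi).trans_le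
      (growth (.proj i) (hβ0 i) (hγ0 i) k).2).injective (congrFun hkl i)
  exact Set.infinite_of_injective_forall_mem hinj hmem (finite_inversionSet w)

theorem neg_one_lt_cosineForm (hβ : IsRoot M β) (hγ : IsRoot M γ) {u v : M.Group}
    (huβ : 0 ≤ geometricRep M u β) (huγ : 0 ≤ geometricRep M u γ)
    (hvβ : geometricRep M v β ≤ 0)
    (hvγ : geometricRep M v γ ≤ 0) : -1 < cosineForm M β γ := by
  rw [← cosineForm_geometricRep M u]
  refine (hβ.map u).neg_one_lt_cosineForm_of_inversion (hγ.map u) huβ huγ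
    (w := v * u⁻¹) ?_ ?_
  · rwa [geometricRep_mul, geometricRep_inv_geometricRep]
  · rwa [geometricRep_mul, geometricRep_inv_geometricRep]

theorem eventually_pow_nonneg_or_nonpos (hβ : IsRoot M β) {w : M.Group}
    (hinj : Function.Injective fun k : ℕ => geometricRep M (w ^ k) β) :
    (∀ᶠ k : ℕ in Filter.atTop, 0 ≤ geometricRep M (w ^ k) β) ∨
      ∀ᶠ k : ℕ in Filter.atTop, geometricRep M (w ^ k) β ≤ 0 := by
  set a : ℕ → B → ℝ := fun k => geometricRep M (w ^ k) β
  have ha (k : ℕ) : IsRoot M (a k) := hβ.map _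
  have hsucc (k : ℕ) : a (k + 1) = geometricRep M w (a k) := by
    rw [← geometricRep_mul, ← pow_succ']
  have hfin := (((finite_inversionSet w).preimage hinj.injOn).union
    ((finite_inversionSet w).preimage (neg_injective.comp hinj).injOn)).eventually_cofinite_notMem
  rw [Nat.cofinite_eq_atTop, Filter.eventually_atTop] at hfin
  obtain ⟨K, hK⟩ := hfin
  have sign_succ (k : ℕ) (hk : K ≤ k) : 0 ≤ a (k + 1) ↔ 0 ≤ a k := by
    have := hK k hk
    simp only [Set.mem_union, Set.mem_preimage, Function.comp_apply, inversionSet,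
      Set.mem_ofPred_eq, map_neg, Left.nonneg_neg_iff, Left.neg_nonpos_iff, not_or, not_and,
      ha k, (ha k).neg, true_imp_iff, ← (ha k).not_nonneg_iff] at this
    rw [← hsucc, ← (ha (k + 1)).not_nonneg_iff] at this
    tauto
  have sign (k : ℕ) (hk : K ≤ k) : 0 ≤ a k ↔ 0 ≤ a K := by
    induction k, hk using Nat.le_induction with
    | base => rfl
    | succ k hk ih => rw [sign_succ k hk, ih]
  by_cases hpos : 0 ≤ a K
  · exact .inl (Filter.eventually_atTop.2 ⟨K, fun k hk => (sign k hk).2 hpos⟩)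
  · exact .inr (Filter.eventually_atTop.2
      ⟨K, fun k hk => (ha k).not_nonneg_iff.1 (mt (sign k hk).1 hpos)⟩)

theorem sum_pos (hβ : IsRoot M β) (hβ0 : 0 ≤ β) : 0 < ∑ i, β i := by
  refine (Finset.sum_nonneg fun i _ => hβ0 i).lt_of_ne fun h => hβ.ne_zero ?_
  funext i
  exact (Finset.sum_eq_zero_iff_of_nonneg fun i _ => hβ0 i).1 h.symm i (Finset.mem_univ i)

end IsRoot

theorem not_eventually_nonneg_of_recurrence {c : ℝ} (hc : c < 2) {a : ℕ → B → ℝ}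
    (ha : ∀ k, IsRoot M (a k)) (hrec : ∀ k, a (k + 2) = c • a (k + 1) - a k) :
    ¬ ∀ᶠ k in Filter.atTop, 0 ≤ a k := by
  intro h
  obtain ⟨K, hK⟩ := Filter.eventually_atTop.1 h
  refine not_forall_pos_of_recurrence hc (a := fun k => ∑ i, a (K + k) i) (fun k => ?_)
    fun k => (ha _).sum_pos (hK _ le_self_add)
  simp only [← add_assoc, hrec, Pi.sub_apply, Pi.smul_apply, smul_eq_mul, Finset.sum_sub_distrib,
    Finset.mul_sum]

theorem cosineForm_eq_cos_of_recurrence {θ : ℝ} {a : ℕ → B → ℝ} (h0 : cosineForm M (a 0) (a 0) = 1)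
    (h1 : cosineForm M (a 0) (a 1) = Real.cos θ)
    (hrec : ∀ k, a (k + 2) = (2 * Real.cos θ) • a (k + 1) - a k) (k : ℕ) :
    cosineForm M (a 0) (a k) = Real.cos (k * θ) := by
  induction k using Nat.twoStepInduction with
  | zero => simpa using h0
  | one => simpa using h1
  | more k ih₁ ih₂ =>
    have : ((k + 2 : ℕ) : ℝ) * θ = (k + 1 : ℕ) * θ + θ := by push_cast; ring
    have : (k : ℝ) * θ = (k + 1 : ℕ) * θ - θ := by push_cast; ring
    rw [hrec, map_sub, map_smul, ih₁, ih₂, smul_eq_mul, ‹((k + 2 : ℕ) : ℝ) * θ = _›, ‹k * θ = _›,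
      Real.cos_add, Real.cos_sub]
    ring

/-- Otherwise the rotation of `β` and `γ` has infinite order, so the translates of `β` by its powers
eventually all have the same sign, although they turn by the fixed angle `2 * θ`. -/
theorem IsRoot.exists_cos_nat_mul_eq_one {β γ : B → ℝ} (hβ : IsRoot M β) (hγ : IsRoot M γ) {θ : ℝ}
    (hθ : cosineForm M β γ = Real.cos θ) (hlt : |Real.cos θ| < 1) :
    ∃ n : ℕ, n ≠ 0 ∧ Real.cos (n * θ) = 1 := by
  obtain ⟨ρ, hρ, hrec⟩ := hβ.exists_rotation hγ
  have hcos : 4 * cosineForm M β γ ^ 2 - 2 = 2 * Real.cos (2 * θ) := by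
    rw [hθ, Real.cos_two_mul]
    ring
  rw [hcos] at hrec
  set a : ℕ → B → ℝ := fun k => geometricRep M (ρ ^ k) β with ha
  replace hrec : ∀ k, a (k + 2) = (2 * Real.cos (2 * θ)) • a (k + 1) - a k := hrec
  have ha0 : a 0 = β := by simp only [ha, pow_zero, geometricRep_one]
  have ha1 : a 1 = (4 * cosineForm M β γ ^ 2 - 1) • β - (2 * cosineForm M β γ) • γ := by
    simp only [ha, pow_one, hρ]
  have hroot (k : ℕ) : IsRoot M (a k) := hβ.map _
  have hangle := cosineForm_eq_cos_of_recurrence (M := M) (hroot 0).cosineForm_self (by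
    rw [ha0, ha1, map_sub, map_smul, map_smul, hβ.cosineForm_self, smul_eq_mul,
      smul_eq_mul]
    linarith) hrec
  have hlt' : 2 * Real.cos (2 * θ) < 2 := by
    have := (sq_lt_one_iff_abs_lt_one _).2 hlt
    rw [Real.cos_two_mul]
    linarith
  have hninj : ¬ Function.Injective a := fun hinj => by
    obtain h | h := hβ.eventually_pow_nonneg_or_nonpos hinj
    · exact not_eventually_nonneg_of_recurrence hlt' hroot hrec h
    · refine not_eventually_nonneg_of_recurrence hlt' (fun k => (hroot k).neg) (fun k => ?_)
        (h.mono fun k => neg_nonneg.2)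
      rw [hrec]
      module
  obtain ⟨i, n, hi⟩ : ∃ i n, a i = a (i + (n + 1)) := by
    simp only [Function.Injective, not_forall] at hninj
    obtain ⟨i, j, hij, hne⟩ := hninj
    obtain h | h := lt_or_gt_of_ne hne
    · exact ⟨i, j - i - 1, by rwa [show i + (j - i - 1 + 1) = j by lia]⟩
    · exact ⟨j, i - j - 1, by rw [show j + (i - j - 1 + 1) = i by lia, hij]⟩
  have hperiod : a 0 = a (n + 1) := by
    simp only [ha, pow_add ρ i, geometricRep_mul] at hi
    exact ha0.trans ((geometricRep M (ρ ^ i)).injective hi)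
  refine ⟨(n + 1) * 2, by lia, ?_⟩
  rw [Nat.cast_mul, Nat.cast_two, mul_assoc, ← hangle, ← hperiod, (hroot 0).cosineForm_self]

/-! ### Roots congruent modulo an integer -/

section AlgebraicIntegers

theorem eq_zero_of_isIntegral_of_norm_lt_one {K : Type*} [Field K] [NumberField K] {x : K}
    (hx : IsIntegral ℤ x) (h : ∀ φ : K →+* ℂ, ‖φ x‖ < 1) : x = 0 := by
  by_contra hx0
  obtain ⟨m, hm, hxm⟩ :=
    NumberField.Embeddings.pow_eq_one_of_norm_le_one K ℂ hx0 hx fun φ => (h φ).le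
  have φ : K →+* ℂ := Classical.arbitrary _
  refine (h φ).ne (Complex.norm_eq_one_of_pow_eq_one (n := m) ?_ hm.ne')
  rw [← map_pow, hxm, map_one]

theorem eq_zero_of_isIntegral_of_add_inv_sub_two_eq {K : Type*} [Field K] [NumberField K] {ζ z : K}
    {n m : ℕ} (hn : n ≠ 0) (hζ : ζ ^ n = 1) (hm : 4 < m) (hz : IsIntegral ℤ z)
    (h : ζ + ζ⁻¹ - 2 = m * z) : z = 0 := by
  refine eq_zero_of_isIntegral_of_norm_lt_one hz fun φ => ?_
  have hφζ : ‖φ ζ‖ = 1 :=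
    Complex.norm_eq_one_of_pow_eq_one (by rw [← map_pow, hζ, map_one]) hn
  have hle : m * ‖φ z‖ ≤ 4 := calc
    m * ‖φ z‖ = ‖φ ζ + (φ ζ)⁻¹ - 2‖ := by
      rw [← Complex.norm_natCast, ← norm_mul, ← map_natCast φ, ← map_mul, ← h, map_sub, map_add,
        map_inv₀, map_ofNat]
    _ ≤ ‖φ ζ‖ + ‖(φ ζ)⁻¹‖ + ‖(2 : ℂ)‖ :=
      (norm_sub_le _ _).trans (add_le_add_left (norm_add_le _ _) _)
    _ = 4 := by
      rw [norm_inv, hφζ]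
      norm_num
  have : (4 : ℝ) < m := by exact_mod_cast hm
  nlinarith [norm_nonneg (φ z)]

theorem exp_mul_I_pow_eq_one {θ : ℝ} {n : ℕ} (h : Real.cos (n * θ) = 1) :
    Complex.exp (θ * Complex.I) ^ n = 1 := by
  obtain ⟨k, hk⟩ := (Real.cos_eq_one_iff _).1 h
  refine (Complex.exp_nat_mul _ n).symm.trans (Complex.exp_eq_one_iff.2 ⟨k, ?_⟩)
  rw [← mul_assoc, ← mul_assoc, ← Complex.ofReal_natCast, ← Complex.ofReal_mul, ← hk]
  push_cast
  ring

/-- The conjugates of `2 * cos θ` lie in `[-2, 2]`, so those of `y` have absolute value less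
than `1`. -/
theorem eq_zero_of_two_mul_cos_sub_two_eq {θ y : ℝ} {n m : ℕ} (hn : n ≠ 0)
    (hcos : Real.cos (n * θ) = 1) (hm : 4 < m) (hy : IsIntegral ℤ y)
    (h : 2 * Real.cos θ - 2 = m * y) : y = 0 := by
  set ζ : ℂ := Complex.exp (θ * Complex.I) with hζ
  have hζn : ζ ^ n = 1 := exp_mul_I_pow_eq_one hcos
  have hζy : ζ + ζ⁻¹ - 2 = m * y := by
    have := congrArg ((↑) : ℝ → ℂ) h
    push_cast [Complex.two_cos] at this
    rw [← this, hζ, ← Complex.exp_neg, neg_mul]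
  have hintegral : IsIntegral ℚ ζ := .of_pow hn.bot_lt (hζn ▸ isIntegral_one)
  let K := IntermediateField.adjoin ℚ {ζ}
  have : FiniteDimensional ℚ K := IntermediateField.adjoin.finiteDimensional hintegral
  have : NumberField K := {}
  let g : K := IntermediateField.AdjoinSimple.gen ℚ ζ
  have hm0 : (m : ℂ) ≠ 0 := Nat.cast_ne_zero.2 (by lia)
  have hz : (((m : K)⁻¹ * (g + g⁻¹ - 2) : K) : ℂ) = y :=
    (congrArg ((m : ℂ)⁻¹ * ·) hζy).trans (inv_mul_cancel_left₀ hm0 _)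
  have hz0 : (m : K)⁻¹ * (g + g⁻¹ - 2) = 0 := by
    refine eq_zero_of_isIntegral_of_add_inv_sub_two_eq (ζ := g) hn (Subtype.ext hζn) hm ?_ ?_
    · rw [← isIntegral_algebraMap_iff (algebraMap K ℂ).injective]
      change IsIntegral ℤ (((m : K)⁻¹ * (g + g⁻¹ - 2) : K) : ℂ)
      rw [hz]
      exact hy.map (Complex.ofRealAm.restrictScalars ℤ)
    · rw [mul_inv_cancel_left₀ (Nat.cast_ne_zero.2 (by lia))]
  rw [hz0] at hz
  exact (Complex.ofReal_eq_zero.1 hz.symm)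

end AlgebraicIntegers

section RootLattice

variable {B : Type*} (M : CoxeterMatrix B)

/-- The ring generated by the coefficients `2 * cos (π / M i j)` of twice the cosine form. -/
noncomputable def coefficientRing : Subalgebra ℤ ℝ :=
  Algebra.adjoin ℤ (Set.range fun p : B × B => 2 * Real.cos (Real.pi / M p.1 p.2))

theorem two_mul_cos_mem_coefficientRing (i j : B) :
    2 * Real.cos (Real.pi / M i j) ∈ coefficientRing M := Algebra.subset_adjoin ⟨(i, j), rfl⟩

instance finite_coefficientRing [Finite B] : Module.Finite ℤ (coefficientRing M) := by
  refine Module.Finite.iff_fg.2 (fg_adjoin_of_finite (Set.finite_range _) ?_)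
  rintro _ ⟨p, rfl⟩
  have := Real.isIntegral_two_mul_cos_rat_mul_pi (1 / M p.1 p.2)
  push_cast at this
  rwa [one_div, inv_mul_eq_div] at this

variable {M} in
theorem isIntegral_of_mem_coefficientRing [Finite B] {x : ℝ} (hx : x ∈ coefficientRing M) :
    IsIntegral ℤ x :=
  (Algebra.IsIntegral.isIntegral (R := ℤ) (⟨x, hx⟩ : coefficientRing M)).map (coefficientRing M).val

/-- The lattice of vectors with coordinates in the coefficient ring. -/
noncomputable def coefficientLattice : Submodule ℤ (B → ℝ) :=
  Submodule.pi Set.univ fun _ => (coefficientRing M).toSubmodule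

variable {M}

theorem mem_coefficientLattice {x : B → ℝ} :
    x ∈ coefficientLattice M ↔ ∀ i, x i ∈ coefficientRing M := by
  simp [coefficientLattice]

instance finite_coefficientLattice [Finite B] : Module.Finite ℤ (coefficientLattice M) :=
  Module.Finite.iff_fg.2 <| Submodule.fg_pi fun _ =>
    Module.Finite.iff_fg.1 (finite_coefficientRing M)

theorem simpleRoot_mem_coefficientLattice [DecidableEq B] (i : B) :
    simpleRoot i ∈ coefficientLattice M := by
  refine mem_coefficientLattice.2 fun j => ?_
  rw [simpleRoot, Pi.single_apply]
  split_ifs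
  exacts [one_mem _, zero_mem _]

variable [Fintype B] [DecidableEq B]

theorem two_mul_cosineForm_mem_coefficientRing {x y : B → ℝ} (hx : x ∈ coefficientLattice M)
    (hy : y ∈ coefficientLattice M) : 2 * cosineForm M x y ∈ coefficientRing M := by
  rw [mem_coefficientLattice] at hx hy
  rw [cosineForm, Matrix.toBilin'_apply, Finset.mul_sum]
  refine sum_mem fun i _ => ?_
  rw [Finset.mul_sum]
  refine sum_mem fun j _ => ?_
  convert mul_mem (hx i) (mul_mem (hy j) (neg_mem (two_mul_cos_mem_coefficientRing M i j))) using 1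
  simp only [Matrix.of_apply]
  ring

theorem geometricRep_mem_coefficientLattice (w : M.Group) {x : B → ℝ}
    (hx : x ∈ coefficientLattice M) : geometricRep M w x ∈ coefficientLattice M := by
  induction w using M.toCoxeterSystem.simple_induction_left with
  | one => rwa [geometricRep_one]
  | mul_simple_left w i ih =>
    rw [geometricRep_mul, M.toCoxeterSystem_simple, geometricRep_simple, simpleReflection_apply]
    refine sub_mem ih (mem_coefficientLattice.2 fun j => mul_mem ?_ ?_)
    · exact two_mul_cosineForm_mem_coefficientRing (simpleRoot_mem_coefficientLattice i) ih
    · exact mem_coefficientLattice.1 (simpleRoot_mem_coefficientLattice i) j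

theorem IsRoot.mem_coefficientLattice {β : B → ℝ} (hβ : IsRoot M β) :
    β ∈ coefficientLattice M := by
  obtain ⟨w, s, rfl⟩ := hβ
  exact geometricRep_mem_coefficientLattice w (simpleRoot_mem_coefficientLattice s)

variable (M) in
/-- The type of roots. -/
abbrev Root : Type _ := {β : B → ℝ // IsRoot M β}

/-- The Coxeter group acts on its roots through the geometric representation. -/
noncomputable instance Root.mulAction : MulAction M.Group (Root M) where
  smul w β := ⟨geometricRep M w β, β.2.map w⟩
  one_smul β := Subtype.ext (geometricRep_one M β)
  mul_smul v w β := Subtype.ext (geometricRep_mul M v w β)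

theorem Root.coe_smul (w : M.Group) (β : Root M) :
    (w • β : Root M) = geometricRep M w (β : B → ℝ) := rfl

/-- The class of a root modulo `m` times the coefficient lattice. -/
noncomputable def rootResidue (m : ℕ) (β : Root M) : ModN (coefficientLattice M) m :=
  ModN.mkQ m ⟨β, β.2.mem_coefficientLattice⟩

variable {m : ℕ} {β γ : Root M}

theorem rootResidue_eq_iff : rootResidue m β = rootResidue m γ ↔
    ∃ x ∈ coefficientLattice M, (β : B → ℝ) = γ + (m : ℝ) • x := by
  refine (Submodule.Quotient.eq _).trans ⟨fun ⟨x, hx⟩ => ⟨x, x.2, ?_⟩, fun ⟨x, hx, h⟩ =>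
    ⟨⟨x, hx⟩, Subtype.ext ?_⟩⟩
  · have := congrArg Subtype.val hx
    simp only [LinearMap.lsmul_apply, natCast_zsmul, Submodule.coe_sub] at this
    rw [Nat.cast_smul_eq_nsmul]
    exact sub_eq_iff_eq_add'.1 this.symm
  · simp [h, Nat.cast_smul_eq_nsmul]

theorem rootResidue_smul_eq (h : rootResidue m β = rootResidue m γ) (w : M.Group) :
    rootResidue m (w • β) = rootResidue m (w • γ) := by
  obtain ⟨x, hx, h⟩ := rootResidue_eq_iff.1 h
  refine rootResidue_eq_iff.2 ⟨_, geometricRep_mem_coefficientLattice w hx, ?_⟩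
  rw [Root.coe_smul, Root.coe_smul, h, map_add, map_smul]

theorem one_le_abs_cosineForm_of_rootResidue_eq (hm : 4 < m)
    (h : rootResidue m β = rootResidue m γ) : 1 ≤ |cosineForm M (β : B → ℝ) γ| := by
  obtain ⟨x, hx, h⟩ := rootResidue_eq_iff.1 h
  by_contra! hlt
  obtain ⟨hlower, hupper⟩ := abs_lt.1 hlt
  have hcos := Real.cos_arccos hlower.le hupper.le
  obtain ⟨n, hn, hperiod⟩ := β.2.exists_cos_nat_mul_eq_one γ.2 hcos.symm (by rwa [hcos])
  have hform : 2 * cosineForm M (β : B → ℝ) γ - 2 = m * (2 * cosineForm M x γ) := by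
    rw [h, map_add, map_smul, LinearMap.add_apply, LinearMap.smul_apply, γ.2.cosineForm_self,
      smul_eq_mul]
    ring
  have hzero := eq_zero_of_two_mul_cos_sub_two_eq hn hperiod hm
    (isIntegral_of_mem_coefficientRing
      (two_mul_cosineForm_mem_coefficientRing hx γ.2.mem_coefficientLattice)) (by rw [hcos, hform])
  rw [hzero] at hform
  linarith

end RootLattice

/-! ### Facing triples of half-spaces -/

section PingPong

open Function Set
open scoped Pointwise

theorem not_fg_coprodI {ι : Type*} [Infinite ι] (H : ι → Type*) [∀ i, Group (H i)]
    [∀ i, Nontrivial (H i)] : ¬ Group.FG (Monoid.CoprodI H) := by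
  classical
  intro hfg
  let toPi : Monoid.CoprodI H →* ∀ i, H i := Monoid.CoprodI.lift fun i => MonoidHom.mulSingle H i
  have hfin (x) : {k | toPi x k ≠ 1}.Finite := by
    induction x using Monoid.CoprodI.induction_on with
    | one => simp
    | of i m =>
      refine (finite_singleton i).subset fun k hk => by_contra fun hki => hk ?_
      rw [Monoid.CoprodI.lift_of, MonoidHom.mulSingle_apply, Pi.mulSingle_eq_of_ne hki]
    | mul x y hx hy =>
      refine (hx.union hy).subset fun k hk => or_iff_not_imp_left.2 fun hxk hyk => hk ?_
      rw [map_mul, Pi.mul_apply, not_not.1 hxk, hyk, one_mul]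
  obtain ⟨S, hS, hSfin⟩ := Group.fg_iff.1 hfg
  obtain ⟨k, hk⟩ := (hSfin.biUnion fun x _ => hfin x).exists_notMem
  obtain ⟨h, hh⟩ := exists_ne (1 : H k)
  have hle : Subgroup.closure S ≤ ((Pi.evalMonoidHom H k).comp toPi).ker :=
    (Subgroup.closure_le _).2 fun x hx => by_contra fun hne => hk (mem_biUnion hx hne)
  have hof : toPi (.of h) k = 1 := by
    rw [hS] at hle
    exact hle (Subgroup.mem_top (.of h))
  rw [Monoid.CoprodI.lift_of, MonoidHom.mulSingle_apply, Pi.mulSingle_eq_same] at hof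
  exact hh hof

variable {G α : Type*} [Group G] [MulAction G α]

theorem eq_of_mem_zpowers_of_mul_self_eq_one {c g : G} (hc : c * c = 1)
    (hg : g ∈ Subgroup.zpowers c) (hne : g ≠ 1) : g = c := by
  obtain ⟨n, rfl⟩ := hg
  have hsq : c ^ (2 : ℤ) = 1 := by rw [zpow_two, hc]
  obtain ⟨m, rfl | rfl⟩ := Int.even_or_odd' n
  · exact absurd (by simp only [zpow_mul, hsq, one_zpow]) hne
  · simp only [zpow_add, zpow_mul, hsq, one_zpow, one_mul, zpow_one]

theorem not_slender_of_pingpong_involutions {ι : Type*} [Infinite ι] {c : ι → G}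
    (hc : ∀ i, c i * c i = 1) {X : ι → Set α} (hX : ∀ i, (X i).Nonempty)
    (hdisj : Pairwise (Disjoint on X)) (hmaps : ∀ i, ∀ x ∉ X i, c i • x ∈ X i) :
    ¬ Group.Slender G := by
  intro hslender
  have hmaps' {i j} (hij : i ≠ j) : c i • X j ⊆ X i := by
    rintro _ ⟨x, hx, rfl⟩
    exact hmaps i x ((hdisj hij).notMem_of_mem_right hx)
  have hne (i) : c i ≠ 1 := by
    intro hi
    obtain ⟨j, hj⟩ := exists_ne i
    have hsub := hmaps' hj.symm
    rw [hi, one_smul] at hsub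
    exact (hX j).ne_empty (subset_eq_empty (hdisj hj le_rfl hsub) rfl)
  have (i : ι) : Nontrivial (Subgroup.zpowers (c i)) :=
    (Subgroup.nontrivial_iff_ne_bot _).2 (Subgroup.zpowers_ne_bot.2 (hne i))
  let f i := (Subgroup.zpowers (c i)).subtype
  have hinj : Injective (Monoid.CoprodI.lift f) := by
    refine Monoid.CoprodI.lift_injective_of_ping_pong f (.inl ?_) X hX hdisj ?_
    · exact (Cardinal.natCast_lt_aleph0 (n := 3)).le.trans (Cardinal.aleph0_le_mk ι)
    · rintro i j hij h hne
      have hci : f i h = c i :=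
        eq_of_mem_zpowers_of_mul_self_eq_one (hc i) h.2 fun h1 => hne (Subtype.ext h1)
      rw [hci]
      exact hmaps' hij
  have := (Group.fg_iff_subgroup_fg _).2 (hslender (Monoid.CoprodI.lift f).range)
  exact not_fg_coprodI _ <|
    Group.fg_of_surjective (f := (MonoidHom.ofInjective hinj).symm.toMonoidHom)
      (MonoidHom.ofInjective hinj).symm.surjective

/-- The conjugates of `c` by the powers of `a * b` play ping-pong on the translates of `C`. -/
theorem not_slender_of_smul_mem {a b c : G} (hc : c * c = 1) {A B C : Set α}
    (hC : C.Nonempty) (hAB : Disjoint A B) (hAC : Disjoint A C) (hBC : Disjoint B C)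
    (ha : ∀ x ∉ A, a • x ∈ A) (hb : ∀ x ∉ B, b • x ∈ B) (hmaps : ∀ x ∉ C, c • x ∈ C) :
    ¬ Group.Slender G := by
  have hab (x) (hx : x ∉ B) : (a * b) • x ∈ A := by
    rw [mul_smul]
    exact ha _ (hAB.notMem_of_mem_right (hb x hx))
  have hpow (n : ℕ) (x) (hx : x ∈ C) : (a * b) ^ (n + 1) • x ∈ A := by
    induction n with
    | zero => rw [zero_add, pow_one]; exact hab x (hBC.notMem_of_mem_right hx)
    | succ n ih => rw [pow_succ', mul_smul]; exact hab _ (hAB.notMem_of_mem_left ih)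
  refine not_slender_of_pingpong_involutions (α := α) (ι := ℕ)
    (c := fun k => (a * b) ^ k * c * ((a * b) ^ k)⁻¹) (X := fun k => (a * b) ^ k • C)
    (fun k => ?_) (fun k => hC.smul_set) ?_ fun k x hx => ?_
  · rw [← sq, conj_pow, sq, hc, mul_one, mul_inv_cancel]
  · rw [pairwise_disjoint_on]
    rintro i j hij
    obtain ⟨n, rfl⟩ := Nat.exists_eq_add_of_lt hij
    rw [add_assoc, pow_add, mul_smul, disjoint_smul_set]
    refine hAC.symm.mono_right ?_
    rintro _ ⟨x, hx, rfl⟩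
    exact hpow n x hx
  · rw [mem_smul_set_iff_inv_smul_mem] at hx ⊢
    simpa only [mul_smul, inv_smul_smul] using hmaps _ hx

end PingPong

section HalfSpaces

open Set

variable {B : Type*} [Fintype B] [DecidableEq B] {M : CoxeterMatrix B}

variable (M) in
/-- The half-space of a root `β`: the chambers, identified with group elements, lying on the
negative side of the wall of `β`. -/
def halfSpace (β : B → ℝ) : Set M.Group := {x | geometricRep M x⁻¹ β ≤ 0}

theorem mem_halfSpace {β : B → ℝ} {x : M.Group} :
    x ∈ halfSpace M β ↔ geometricRep M x⁻¹ β ≤ 0 := .rfl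

variable {β γ δ : B → ℝ}

theorem IsRoot.notMem_halfSpace_iff (hβ : IsRoot M β) {x : M.Group} :
    x ∉ halfSpace M β ↔ 0 ≤ geometricRep M x⁻¹ β := (hβ.map _).not_nonpos_iff

theorem IsRoot.halfSpace_neg (hβ : IsRoot M β) : halfSpace M (-β) = (halfSpace M β)ᶜ := by
  ext x
  rw [mem_compl_iff, hβ.notMem_halfSpace_iff, mem_halfSpace, map_neg, neg_nonpos]

theorem IsRoot.exists_smul_mem_halfSpace (hβ : IsRoot M β) :
    ∃ r : M.Group, r * r = 1 ∧ ∀ x ∉ halfSpace M β, r • x ∈ halfSpace M β := by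
  obtain ⟨r, hr, h⟩ := hβ.exists_geometricRep_eq_reflection
  refine ⟨r, hr, fun x hx => ?_⟩
  have hrβ : geometricRep M r β = -β := by
    rw [h, hβ.cosineForm_self]
    module
  rw [smul_eq_mul, mem_halfSpace, mul_inv_rev, geometricRep_mul, inv_eq_of_mul_eq_one_right hr,
    hrβ, map_neg, neg_nonpos]
  exact hβ.notMem_halfSpace_iff.1 hx

theorem IsRoot.halfSpace_nonempty (hβ : IsRoot M β) : (halfSpace M β).Nonempty := by
  obtain ⟨r, -, hr⟩ := hβ.exists_smul_mem_halfSpace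
  by_cases h1 : (1 : M.Group) ∈ halfSpace M β
  exacts [⟨1, h1⟩, ⟨_, hr 1 h1⟩]

theorem IsRoot.disjoint_halfSpace_or (hβ : IsRoot M β) (hγ : IsRoot M γ)
    (h : cosineForm M β γ ≤ -1) :
    Disjoint (halfSpace M β) (halfSpace M γ) ∨ Disjoint (halfSpace M β)ᶜ (halfSpace M γ)ᶜ := by
  by_contra! hcon
  obtain ⟨x, hxβ, hxγ⟩ := not_disjoint_iff.1 hcon.1
  obtain ⟨y, hyβ, hyγ⟩ := not_disjoint_iff.1 hcon.2
  exact h.not_gt <| hβ.neg_one_lt_cosineForm hγ (hβ.notMem_halfSpace_iff.1 hyβ)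
    (hγ.notMem_halfSpace_iff.1 hyγ) hxβ hxγ

theorem pairwise_disjoint_or_pairwise_disjoint_compl {α : Type*} {X Y Z : Set α}
    (hX : X.Nonempty) (hY : Y.Nonempty) (hZ : Z.Nonempty) (hX' : Xᶜ.Nonempty) (hY' : Yᶜ.Nonempty)
    (hZ' : Zᶜ.Nonempty) (hXY : Disjoint X Y ∨ Disjoint Xᶜ Yᶜ) (hXZ : Disjoint X Z ∨ Disjoint Xᶜ Zᶜ)
    (hYZ : Disjoint Y Z ∨ Disjoint Yᶜ Zᶜ) :
    (Disjoint X Y ∧ Disjoint X Z ∧ Disjoint Y Z) ∨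
      (Disjoint Xᶜ Yᶜ ∧ Disjoint Xᶜ Zᶜ ∧ Disjoint Yᶜ Zᶜ) := by
  simp only [disjoint_left, mem_compl_iff, not_not] at *
  obtain ⟨x, hx⟩ := hX
  obtain ⟨y, hy⟩ := hY
  obtain ⟨z, hz⟩ := hZ
  obtain ⟨x', hx'⟩ := hX'
  obtain ⟨y', hy'⟩ := hY'
  obtain ⟨z', hz'⟩ := hZ'
  grind

theorem not_slender_of_disjoint_halfSpace (hβ : IsRoot M β) (hγ : IsRoot M γ) (hδ : IsRoot M δ)
    (hβγ : Disjoint (halfSpace M β) (halfSpace M γ))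
    (hβδ : Disjoint (halfSpace M β) (halfSpace M δ))
    (hγδ : Disjoint (halfSpace M γ) (halfSpace M δ)) : ¬ Group.Slender M.Group := by
  obtain ⟨a, -, ha⟩ := hβ.exists_smul_mem_halfSpace
  obtain ⟨b, -, hb⟩ := hγ.exists_smul_mem_halfSpace
  obtain ⟨c, hc, hmaps⟩ := hδ.exists_smul_mem_halfSpace
  exact not_slender_of_smul_mem hc hδ.halfSpace_nonempty hβγ hβδ hγδ ha hb hmaps

theorem not_slender_of_cosineForm_le_neg_one (hβ : IsRoot M β) (hγ : IsRoot M γ) (hδ : IsRoot M δ)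
    (hβγ : cosineForm M β γ ≤ -1) (hβδ : cosineForm M β δ ≤ -1) (hγδ : cosineForm M γ δ ≤ -1) :
    ¬ Group.Slender M.Group := by
  have hcompl {η : B → ℝ} (hη : IsRoot M η) : (halfSpace M η)ᶜ.Nonempty :=
    hη.halfSpace_neg ▸ hη.neg.halfSpace_nonempty
  obtain ⟨h₁, h₂, h₃⟩ | ⟨h₁, h₂, h₃⟩ := pairwise_disjoint_or_pairwise_disjoint_compl
    hβ.halfSpace_nonempty hγ.halfSpace_nonempty hδ.halfSpace_nonempty (hcompl hβ) (hcompl hγ)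
    (hcompl hδ) (hβ.disjoint_halfSpace_or hγ hβγ) (hβ.disjoint_halfSpace_or hδ hβδ)
    (hγ.disjoint_halfSpace_or hδ hγδ)
  · exact not_slender_of_disjoint_halfSpace hβ hγ hδ h₁ h₂ h₃
  · rw [← hβ.halfSpace_neg] at h₁ h₂
    rw [← hγ.halfSpace_neg] at h₁ h₃
    rw [← hδ.halfSpace_neg] at h₂ h₃
    exact not_slender_of_disjoint_halfSpace hβ.neg hγ.neg hδ.neg h₁ h₂ h₃

end HalfSpaces

/-! ### Slender Coxeter groups are virtually abelian -/

section Crossing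

variable {B : Type*} [Fintype B] [DecidableEq B] {M : CoxeterMatrix B}

/-- The signed number (`1`, `0` or `-1`) of times that one crosses the hyperplane orthogonal to `β`,
in the direction of `-β`, when moving from the fundamental chamber to its translate by `w`. -/
noncomputable def crossing (w : M.Group) (β : Root M) : ℤ :=
  Set.indicator {γ : Root M | (γ : B → ℝ) ≤ 0} 1 (w⁻¹ • β) -
    Set.indicator {γ : Root M | (γ : B → ℝ) ≤ 0} 1 β

theorem crossing_mul (v w : M.Group) (β : Root M) :
    crossing (v * w) β = crossing v β + crossing w (v⁻¹ • β) := by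
  rw [crossing, crossing, crossing, mul_inv_rev, mul_smul]
  ring

theorem crossing_pos_iff {w : M.Group} {β : Root M} :
    0 < crossing w β ↔ 0 ≤ (β : B → ℝ) ∧ geometricRep M w⁻¹ β ≤ 0 := by
  rw [← β.2.not_nonpos_iff, ← Root.coe_smul, crossing]
  by_cases h : (β : B → ℝ) ≤ 0 <;> by_cases h' : ((w⁻¹ • β : Root M) : B → ℝ) ≤ 0 <;>
    simp [h, h', Set.indicator]

theorem crossing_neg_iff {w : M.Group} {β : Root M} :
    crossing w β < 0 ↔ (β : B → ℝ) ≤ 0 ∧ 0 ≤ geometricRep M w⁻¹ β := by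
  rw [← Root.coe_smul, ← (w⁻¹ • β).2.not_nonpos_iff, crossing]
  by_cases h : (β : B → ℝ) ≤ 0 <;> by_cases h' : ((w⁻¹ • β : Root M) : B → ℝ) ≤ 0 <;>
    simp [h, h', Set.indicator]

theorem finite_support_crossing (w : M.Group) : (Function.support (crossing w)).Finite := by
  have hfin := ((finite_inversionSet (M := M) w⁻¹).union
    ((finite_inversionSet (M := M) w⁻¹).image Neg.neg)).preimage
      (Subtype.val_injective (p := IsRoot M)).injOn
  refine hfin.subset fun β (hβ : crossing w β ≠ 0) => ?_
  obtain hneg | hpos := hβ.lt_or_gt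
  · obtain ⟨hneg, hpos⟩ := crossing_neg_iff.1 hneg
    exact .inr ⟨-β, ⟨β.2.neg, neg_nonneg.2 hneg, by rwa [map_neg, neg_nonpos]⟩, neg_neg _⟩
  · exact .inl ⟨β.2, crossing_pos_iff.1 hpos⟩

theorem eq_one_of_forall_crossing_eq_zero {w : M.Group} (h : ∀ β, crossing w β = 0) : w = 1 := by
  rw [← inv_eq_one]
  refine eq_one_of_forall_nonneg fun s => ?_
  let β : Root M := ⟨simpleRoot s, isRoot_simpleRoot s⟩
  by_contra hneg
  refine (h β).not_gt (crossing_pos_iff.2 ⟨?_, (β.2.map w⁻¹).not_nonneg_iff.1 hneg⟩)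
  exact Pi.single_nonneg.2 zero_le_one

theorem crossing_nonneg_of_pos {w : M.Group} {β γ : Root M}
    (h : 1 ≤ cosineForm M (β : B → ℝ) γ) (hβ : 0 < crossing w β) : 0 ≤ crossing w γ := by
  by_contra! hγ
  obtain ⟨hβ, hwβ⟩ := crossing_pos_iff.1 hβ
  obtain ⟨hγ, hwγ⟩ := crossing_neg_iff.1 hγ
  have := β.2.neg_one_lt_cosineForm γ.2.neg (u := 1) (by rwa [geometricRep_one])
    (by rwa [geometricRep_one, neg_nonneg]) hwβ (by rwa [map_neg, neg_nonpos])
  rw [map_neg] at this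
  linarith

/-- The total signed number of hyperplanes of `Ψ` crossed on the way from the fundamental chamber
to its translate by `w`. -/
noncomputable def crossingNumber (Ψ : Set (Root M)) (w : M.Group) : ℤ :=
  ∑ᶠ β ∈ Ψ, crossing w β

variable {Ψ : Set (Root M)}

theorem crossingNumber_mul {v : M.Group} (hv : ∀ β, v • β ∈ Ψ ↔ β ∈ Ψ) (w : M.Group) :
    crossingNumber Ψ (v * w) = crossingNumber Ψ v + crossingNumber Ψ w := by
  have hbij : Set.BijOn (v⁻¹ • ·) Ψ Ψ := by
    refine ⟨fun β hβ => ?_, (MulAction.injective v⁻¹).injOn, fun β hβ => ?_⟩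
    · rwa [← hv, smul_inv_smul]
    · exact ⟨v • β, (hv β).2 hβ, inv_smul_smul v β⟩
  have hfin : (Function.support fun β => crossing w (v⁻¹ • β)).Finite :=
    (finite_support_crossing w).preimage (MulAction.injective v⁻¹).injOn
  simp only [crossingNumber, crossing_mul]
  rw [finsum_mem_add_distrib' ((finite_support_crossing v).inter_of_right Ψ)
    (hfin.inter_of_right Ψ), finsum_mem_eq_of_bijOn (v⁻¹ • ·) hbij fun _ _ => rfl]

theorem crossing_eq_zero_of_crossingNumber_eq_zero
    (hΨ : ∀ β ∈ Ψ, ∀ γ ∈ Ψ, 1 ≤ cosineForm M (β : B → ℝ) γ) {w : M.Group}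
    (hw : crossingNumber Ψ w = 0) {β : Root M} (hβ : β ∈ Ψ) : crossing w β = 0 := by
  have hfin := (finite_support_crossing w).inter_of_right Ψ
  rw [crossingNumber, ← finsum_mem_inter_support, finsum_mem_eq_finite_toFinset_sum _ hfin] at hw
  have hzero : ∀ γ ∈ hfin.toFinset, crossing w γ = 0 := by
    by_cases hpos : ∃ γ ∈ Ψ, 0 < crossing w γ
    · obtain ⟨γ, hγ, hpos⟩ := hpos
      refine (Finset.sum_eq_zero_iff_of_nonneg fun δ hδ => ?_).1 hw
      exact crossing_nonneg_of_pos (hΨ γ hγ δ (hfin.mem_toFinset.1 hδ).1) hpos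
    · push Not at hpos
      exact (Finset.sum_eq_zero_iff_of_nonpos fun δ hδ =>
        hpos δ (hfin.mem_toFinset.1 hδ).1).1 hw
  by_contra hne
  exact hne (hzero β (hfin.mem_toFinset.2 ⟨hβ, hne⟩))

end Crossing

section Parallel

variable {B : Type*} [Fintype B] [DecidableEq B] {M : CoxeterMatrix B}

/-- Being congruent and on the same side: the hyperplanes of two such roots are equal or disjoint,
and the roots point in the same direction. The modulus may be any integer greater than `4`. -/
def IsParallel (β γ : Root M) : Prop :=
  rootResidue 5 β = rootResidue 5 γ ∧ 1 ≤ cosineForm M (β : B → ℝ) γ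

theorem IsParallel.smul {β γ : Root M} (h : IsParallel β γ) (w : M.Group) :
    IsParallel (w • β) (w • γ) :=
  ⟨rootResidue_smul_eq h.1 w, (cosineForm_geometricRep M w β γ).symm ▸ h.2⟩

theorem IsParallel.symm {β γ : Root M} (h : IsParallel β γ) : IsParallel γ β :=
  ⟨h.1.symm, cosineForm_comm M (β : B → ℝ) γ ▸ h.2⟩

theorem cosineForm_le_neg_one_of_not_isParallel {β γ : Root M}
    (hres : rootResidue 5 β = rootResidue 5 γ) (h : ¬ IsParallel β γ) :
    cosineForm M (β : B → ℝ) γ ≤ -1 := by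
  obtain hpos | hneg := le_abs.1 (one_le_abs_cosineForm_of_rootResidue_eq (by norm_num) hres)
  · exact absurd ⟨hres, hpos⟩ h
  · linarith

theorem IsParallel.trans (hS : Group.Slender M.Group) {β γ δ : Root M} (hβγ : IsParallel β γ)
    (hγδ : IsParallel γ δ) : IsParallel β δ := by
  by_contra hβδ
  refine not_slender_of_cosineForm_le_neg_one β.2 γ.2.neg δ.2 ?_
    (cosineForm_le_neg_one_of_not_isParallel (hβγ.1.trans hγδ.1) hβδ) ?_ hS
  · rw [map_neg]
    exact neg_le_neg hβγ.2
  · rw [map_neg, LinearMap.neg_apply]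
    exact neg_le_neg hγδ.2

/-- The setoid of parallel roots. -/
def parallelSetoid (hS : Group.Slender M.Group) : Setoid (Root M) where
  r := IsParallel
  iseqv :=
    { refl := fun β => ⟨rfl, β.2.cosineForm_self.ge⟩
      symm := IsParallel.symm
      trans := IsParallel.trans hS }

theorem finite_quotient_parallelSetoid (hS : Group.Slender M.Group) :
    Finite (Quotient (parallelSetoid hS)) := by
  by_contra hinf
  rw [not_finite_iff_infinite] at hinf
  let residue (q : Quotient (parallelSetoid hS)) := rootResidue 5 q.out
  obtain ⟨r, hr⟩ := Finite.exists_infinite_fiber residue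
  let e := Infinite.natEmbedding (residue ⁻¹' {r})
  have hform {i j : ℕ} (hij : i ≠ j) :
      cosineForm M ((e i).1.out : B → ℝ) ((e j).1.out : B → ℝ) ≤ -1 := by
    refine cosineForm_le_neg_one_of_not_isParallel ((e i).2.trans (e j).2.symm) fun h => hij ?_
    exact e.injective (Subtype.ext (Quotient.out_equiv_out.1 h))
  exact not_slender_of_cosineForm_le_neg_one (e 0).1.out.2 (e 1).1.out.2 (e 2).1.out.2
    (hform (by decide)) (hform (by decide)) (hform (by decide)) hS

/-- The action of a slender Coxeter group on the classes of parallel roots. -/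
noncomputable def parallelAction (hS : Group.Slender M.Group) :
    M.Group →* Function.End (Quotient (parallelSetoid hS)) where
  toFun w := Quotient.map (w • ·) fun _ _ h => IsParallel.smul h w
  map_one' := funext <| Quotient.ind fun β => congrArg _ (one_smul M.Group β)
  map_mul' v w := funext <| Quotient.ind fun β => congrArg _ (mul_smul v w β)

theorem finiteIndex_ker_parallelAction (hS : Group.Slender M.Group) :
    (parallelAction hS).ker.FiniteIndex := by
  have := finite_quotient_parallelSetoid hS
  have : Finite (Function.End (Quotient (parallelSetoid hS))) :=
    inferInstanceAs (Finite (Quotient (parallelSetoid hS) → Quotient (parallelSetoid hS)))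
  rw [← MonoidHom.ker_toHomUnits]
  infer_instance

/-- The crossing numbers of the classes of parallel roots. -/
noncomputable def crossingHom (hS : Group.Slender M.Group) :
    (parallelAction hS).ker →* (Quotient (parallelSetoid hS) → Multiplicative ℤ) :=
  MonoidHom.mk' (fun w q => .ofAdd (crossingNumber (Quotient.mk _ ⁻¹' {q}) (w : M.Group)))
    fun v w => funext fun q => congrArg Multiplicative.ofAdd <| crossingNumber_mul (fun β => by
      have : (⟦(v : M.Group) • β⟧ : Quotient (parallelSetoid hS)) = ⟦β⟧ := congrFun v.2 ⟦β⟧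
      rw [Set.mem_preimage, Set.mem_preimage, this]) _

theorem crossingHom_injective (hS : Group.Slender M.Group) :
    Function.Injective (crossingHom hS) := by
  refine (injective_iff_map_eq_one _).2 fun w hw => Subtype.ext ?_
  refine eq_one_of_forall_crossing_eq_zero fun β => ?_
  have hzero : crossingNumber (Quotient.mk (parallelSetoid hS) ⁻¹' {⟦β⟧}) (w : M.Group) = 0 :=
    ofAdd_eq_one.1 (congrFun hw ⟦β⟧)
  refine crossing_eq_zero_of_crossingNumber_eq_zero (fun γ hγ δ hδ => ?_) hzero rfl
  exact (Quotient.exact (hγ.trans hδ.symm) : IsParallel γ δ).2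

end Parallel

theorem hereditarilyFinitelyPresented_of_slender {B : Type*} [Finite B] {M : CoxeterMatrix B}
    (hS : Group.Slender M.Group) : HereditarilyFinitelyPresented M.Group := by
  classical
  have := Fintype.ofFinite B
  have := finite_quotient_parallelSetoid hS
  have := finiteIndex_ker_parallelAction hS
  exact .of_finiteIndex _ <|
    .of_injective (.pi (.of_isCyclic (Multiplicative ℤ))) (crossingHom_injective hS)

/-! ### Clique separators of chordal graphs -/

section InducedPath

variable {V W : Type*} {Γ : SimpleGraph V} {n m : ℕ} {p q : ℕ → V}

variable (Γ n p) in
/-- The vertices `p 0, …, p n` form an induced path of length `n`. The values of `p` beyond `n` are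
irrelevant. -/
structure IsInducedPath : Prop where
  ne ⦃i j : ℕ⦄ : i < j → j ≤ n → p i ≠ p j
  adj_iff ⦃i j : ℕ⦄ : i < j → j ≤ n → (Γ.Adj (p i) (p j) ↔ j = i + 1)

variable (Γ n p) in
/-- The vertices `p 0, …, p (n - 1)` form an induced cycle of length `n`. The values of `p` from `n`
on are irrelevant. -/
structure IsInducedCycle : Prop where
  ne ⦃i j : ℕ⦄ : i < j → j < n → p i ≠ p j
  adj_iff ⦃i j : ℕ⦄ : i < j → j < n → (Γ.Adj (p i) (p j) ↔ j = i + 1 ∨ i = 0 ∧ j + 1 = n)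

theorem IsInducedPath.map {Γ' : SimpleGraph W} (h : IsInducedPath Γ n p) (f : Γ ↪g Γ') :
    IsInducedPath Γ' n (f ∘ p) where
  ne _ _ hij hj := f.injective.ne (h.ne hij hj)
  adj_iff _ _ hij hj := f.map_adj_iff.trans (h.adj_iff hij hj)

theorem cycleGraph_adj_iff_of_lt {i j : Fin n} (hij : i < j) :
    (SimpleGraph.cycleGraph n).Adj i j ↔ (j : ℕ) = i + 1 ∨ (i : ℕ) = 0 ∧ (j : ℕ) + 1 = n := by
  have hlt : n - (j : ℕ) + i < n := by lia
  rw [SimpleGraph.cycleGraph_adj', Fin.sub_val_of_le hij.le, Fin.val_sub, Nat.mod_eq_of_lt hlt]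
  lia

theorem IsInducedCycle.nonempty_embedding (h : IsInducedCycle Γ n p) :
    Nonempty (SimpleGraph.cycleGraph n ↪g Γ) := by
  refine ⟨⟨⟨fun i => p i, fun i j hij => ?_⟩, fun {i j} => ?_⟩⟩
  · obtain hlt | heq | hlt := lt_trichotomy i j
    exacts [absurd hij (h.ne hlt j.2), heq, absurd hij.symm (h.ne hlt i.2)]
  · change Γ.Adj (p i) (p j) ↔ _
    obtain hlt | rfl | hlt := lt_trichotomy i j
    · rw [h.adj_iff hlt j.2, cycleGraph_adj_iff_of_lt hlt]
    · simp only [SimpleGraph.irrefl]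
    · rw [Γ.adj_comm, (SimpleGraph.cycleGraph n).adj_comm, h.adj_iff hlt i.2,
        cycleGraph_adj_iff_of_lt hlt]

theorem exists_isInducedPath {x y : V} (h : Γ.Reachable x y) :
    ∃ (n : ℕ) (p : ℕ → V), IsInducedPath Γ n p ∧ p 0 = x ∧ p n = y := by
  obtain ⟨w, hw⟩ := h.exists_walk_length_eq_dist
  have hdist (i : ℕ) (hi : i ≤ w.length) : Γ.dist x (w.getVert i) = i := by
    have htake := SimpleGraph.dist_le (w.take i)
    have hdrop := SimpleGraph.dist_le (w.drop i)
    rw [SimpleGraph.Walk.take_length] at htake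
    rw [SimpleGraph.Walk.drop_length] at hdrop
    have := (w.take i).reachable.dist_triangle_left y
    lia
  refine ⟨w.length, w.getVert, ⟨fun i j hij hj heq => ?_, fun i j hij hj => ⟨fun hadj => ?_, ?_⟩⟩,
    w.getVert_zero, w.getVert_length⟩
  · have := hdist i (by lia)
    rw [heq, hdist j hj] at this
    lia
  · have := (w.take i).reachable.dist_triangle_left (w.getVert j)
    rw [hdist i (by lia), hdist j hj, SimpleGraph.dist_eq_one_iff_adj.2 hadj] at this
    lia
  · rintro rfl
    exact w.adj_getVert_succ hj

/-- The cyclic sequence that runs through `p 0, …, p n` and then backwards through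
`q (m - 1), …, q 1`. -/
def glueCycle (n m : ℕ) (p q : ℕ → V) (k : ℕ) : V := if k ≤ n then p k else q (n + m - k)

theorem glueCycle_of_ge (hend : p n = q m) {k : ℕ} (hk : n ≤ k) :
    glueCycle n m p q k = q (n + m - k) := by
  obtain rfl | hlt := hk.eq_or_lt
  · rw [glueCycle, if_pos le_rfl, hend, Nat.add_sub_cancel_left]
  · exact if_neg hlt.not_ge

theorem IsInducedPath.isInducedCycle_glueCycle (hp : IsInducedPath Γ n p) (hq : IsInducedPath Γ m q)
    (hstart : p 0 = q 0) (hend : p n = q m) (hn : 2 ≤ n) (hm : 2 ≤ m)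
    (hne : ∀ i j, 0 < i → i < n → 0 < j → j < m → p i ≠ q j)
    (hadj : ∀ i j, 0 < i → i < n → 0 < j → j < m → ¬ Γ.Adj (p i) (q j)) :
    IsInducedCycle Γ (n + m) (glueCycle n m p q) := by
  have hp' {k : ℕ} (hk : k ≤ n) : glueCycle n m p q k = p k := if_pos hk
  have hq' {k : ℕ} (hk : n ≤ k) : glueCycle n m p q k = q (n + m - k) := glueCycle_of_ge hend hk
  refine ⟨fun i j hij hj => ?_, fun i j hij hj => ?_⟩
  · obtain hjn | hnj := le_or_gt j n
    · rw [hp' (hij.le.trans hjn), hp' hjn]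
      exact hp.ne hij hjn
    obtain hni | hin := le_or_gt n i
    · rw [hq' hni, hq' hnj.le]
      exact (hq.ne (by lia) (by lia)).symm
    rw [hp' hin.le, hq' hnj.le]
    obtain rfl | hi := i.eq_zero_or_pos
    · rw [hstart]
      exact hq.ne (by lia) (by lia)
    · exact hne _ _ hi hin (by lia) (by lia)
  · obtain hjn | hnj := le_or_gt j n
    · rw [hp' (hij.le.trans hjn), hp' hjn, hp.adj_iff hij hjn]
      lia
    obtain hni | hin := le_or_gt n i
    · rw [hq' hni, hq' hnj.le, Γ.adj_comm, hq.adj_iff (by lia) (by lia)]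
      lia
    rw [hp' hin.le, hq' hnj.le]
    obtain rfl | hi := i.eq_zero_or_pos
    · rw [hstart, hq.adj_iff (by lia) (by lia)]
      lia
    · exact iff_of_false (hadj _ _ hi hin (by lia) (by lia)) (by lia)

end InducedPath

section Separator

variable {V : Type*} {Γ : SimpleGraph V} {S : Set V} {a b x y : V}

theorem reachable_induce_of_mem_componentCompl (C : Γ.ComponentCompl S) {T : Set V}
    (hCT : (C : Set V) ⊆ T) {u v : V} (hu : u ∈ C) (hv : v ∈ C) :
    (Γ.induce T).Reachable ⟨u, hCT hu⟩ ⟨v, hCT hv⟩ := by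
  classical
  obtain ⟨huS, hu⟩ := hu
  obtain ⟨hvS, hv⟩ := hv
  obtain ⟨w⟩ := SimpleGraph.ConnectedComponent.exact (hu.trans hv.symm)
  refine ((w.map (SimpleGraph.Embedding.induce Sᶜ).toHom).induce T fun z hz => hCT ?_).reachable
  rw [SimpleGraph.Walk.support_map, List.mem_map] at hz
  obtain ⟨z, hz, rfl⟩ := hz
  exact ⟨z.2, (SimpleGraph.ConnectedComponent.sound (w.takeUntil z hz).reachable).symm.trans hu⟩

theorem exists_isInducedPath_of_componentCompl (C : Γ.ComponentCompl S)
    (hx : ∃ u ∈ C, Γ.Adj u x) (hy : ∃ v ∈ C, Γ.Adj v y) :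
    ∃ (n : ℕ) (p : ℕ → V), IsInducedPath Γ n p ∧ p 0 = x ∧ p n = y ∧
      ∀ i, 0 < i → i < n → p i ∈ C := by
  obtain ⟨u, hu, hux⟩ := hx
  obtain ⟨v, hv, hvy⟩ := hy
  let T : Set V := insert x (insert y C)
  have hCT : (C : Set V) ⊆ T := fun _ hz => .inr (.inr hz)
  let x' : T := ⟨x, .inl rfl⟩
  let y' : T := ⟨y, .inr (.inl rfl)⟩
  have hxu : (Γ.induce T).Adj x' ⟨u, hCT hu⟩ := hux.symm
  have hvy' : (Γ.induce T).Adj ⟨v, hCT hv⟩ y' := hvy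
  obtain ⟨n, p, hp, h0, hn⟩ := exists_isInducedPath <| hxu.reachable.trans <|
    (reachable_induce_of_mem_componentCompl C hCT hu hv).trans hvy'.reachable
  refine ⟨n, _, hp.map (SimpleGraph.Embedding.induce T), congrArg _ h0, congrArg _ hn,
    fun i hi hin => ?_⟩
  obtain h | h | h := (p i).2
  · exact absurd (h0.trans (Subtype.ext h.symm)) (hp.ne hi hin.le)
  · exact absurd (Subtype.ext (h.trans (congrArg Subtype.val hn).symm)) (hp.ne hin le_rfl)
  · exact h

theorem adj_of_noInducedCycleGT3 (hΓ : Γ.NoInducedCycleGT3) {C D : Γ.ComponentCompl S}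
    (hCD : C ≠ D) (hxy : x ≠ y) (hxC : ∃ u ∈ C, Γ.Adj u x) (hyC : ∃ u ∈ C, Γ.Adj u y)
    (hxD : ∃ u ∈ D, Γ.Adj u x) (hyD : ∃ u ∈ D, Γ.Adj u y) : Γ.Adj x y := by
  by_contra hnadj
  obtain ⟨n, p, hp, hp0, hpn, hpC⟩ := exists_isInducedPath_of_componentCompl C hxC hyC
  obtain ⟨m, q, hq, hq0, hqm, hqD⟩ := exists_isInducedPath_of_componentCompl D hxD hyD
  have two_le {k : ℕ} {r : ℕ → V} (hr : IsInducedPath Γ k r) (h0 : r 0 = x) (hk : r k = y) :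
      2 ≤ k := by
    by_contra! hlt
    obtain rfl | rfl : k = 0 ∨ k = 1 := by lia
    · exact hxy (h0.symm.trans hk)
    · rw [← h0, ← hk] at hnadj
      exact hnadj ((hr.adj_iff one_pos le_rfl).2 rfl)
  have hdisj := Set.disjoint_left.1 (SimpleGraph.ComponentCompl.pairwise_disjoint hCD)
  have hcycle := hp.isInducedCycle_glueCycle hq (hp0.trans hq0.symm) (hpn.trans hqm.symm)
    (two_le hp hp0 hpn) (two_le hq hq0 hqm)
    (fun i j hi hin hj hjm heq => hdisj (hpC i hi hin) (heq ▸ hqD j hj hjm))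
    (fun i j hi hin hj hjm hadj => hdisj (SimpleGraph.ComponentCompl.mem_of_adj _ _ (hpC i hi hin)
      (SimpleGraph.ComponentCompl.notMem_of_mem (hqD j hj hjm)) hadj) (hqD j hj hjm))
  have := two_le hp hp0 hpn
  have := two_le hq hq0 hqm
  exact (hΓ (n + m) (by lia)).false hcycle.nonempty_embedding.some

variable (Γ S a b) in
/-- The set `S` of vertices separates the vertices `a` and `b`, which do not belong to it. -/
structure IsSeparator : Prop where
  left_notMem : a ∉ S
  right_notMem : b ∉ S
  exists_mem (w : Γ.Walk a b) : ∃ v ∈ w.support, v ∈ S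

theorem IsSeparator.symm (h : IsSeparator Γ S a b) : IsSeparator Γ S b a where
  left_notMem := h.right_notMem
  right_notMem := h.left_notMem
  exists_mem w := by simpa using h.exists_mem w.reverse

theorem isSeparator_compl_pair (hab : a ≠ b) (hadj : ¬ Γ.Adj a b) : IsSeparator Γ {a, b}ᶜ a b where
  left_notMem := by simp
  right_notMem := by simp
  exists_mem w := by
    obtain ⟨d, hd, hfst, hsnd⟩ := w.exists_boundary_dart {a} rfl hab.symm
    refine ⟨d.snd, w.dart_snd_mem_support_of_mem_darts hd, ?_⟩
    rintro (h | h)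
    · exact hsnd h
    · exact hadj (hfst ▸ h ▸ d.adj)

theorem IsSeparator.notMem_componentComplMk (h : IsSeparator Γ S a b) :
    b ∉ Γ.componentComplMk h.left_notMem := by
  rintro ⟨hb, hcomp⟩
  obtain ⟨w⟩ := SimpleGraph.ConnectedComponent.exact hcomp.symm
  obtain ⟨v, hv, hvS⟩ := h.exists_mem (w.map (SimpleGraph.Embedding.induce Sᶜ).toHom)
  obtain ⟨v, -, rfl⟩ := List.mem_map.1 (SimpleGraph.Walk.support_map _ w ▸ hv)
  exact v.2 hvS

theorem exists_adj_of_minimal_isSeparator (h : Minimal (IsSeparator Γ · a b) S) (hx : x ∈ S) :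
    ∃ u ∈ Γ.componentComplMk h.prop.left_notMem, Γ.Adj u x := by
  obtain ⟨w, hw⟩ : ∃ w : Γ.Walk a b, ∀ v ∈ w.support, v ∉ S \ {x} := by
    by_contra! hcon
    exact (h.le_of_le ⟨fun ha => h.prop.left_notMem ha.1, fun hb => h.prop.right_notMem hb.1, hcon⟩
      Set.sdiff_subset hx).2 rfl
  obtain ⟨d, hd, hfst, hsnd⟩ := w.exists_boundary_dart (Γ.componentComplMk h.prop.left_notMem)
    (Γ.componentComplMk_mem _) h.prop.notMem_componentComplMk
  have hsndS : d.snd ∈ S := by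
    by_contra hS
    exact hsnd (SimpleGraph.ComponentCompl.mem_of_adj _ _ hfst hS d.adj)
  have hsndx : d.snd = x := by
    by_contra hne
    exact hw _ (w.dart_snd_mem_support_of_mem_darts hd) ⟨hsndS, hne⟩
  exact ⟨d.fst, hfst, hsndx ▸ d.adj⟩

theorem isClique_of_minimal_isSeparator (hΓ : Γ.NoInducedCycleGT3)
    (h : Minimal (IsSeparator Γ · a b) S) : Γ.IsClique S := by
  have h' : Minimal (IsSeparator Γ · b a) S :=
    ⟨h.prop.symm, fun _ hT hTS => h.le_of_le hT.symm hTS⟩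
  have hne : Γ.componentComplMk h.prop.left_notMem ≠ Γ.componentComplMk h'.prop.left_notMem :=
    fun heq => h.prop.notMem_componentComplMk (heq ▸ Γ.componentComplMk_mem _)
  exact fun x hx y hy hxy => adj_of_noInducedCycleGT3 hΓ hne hxy
    (exists_adj_of_minimal_isSeparator h hx) (exists_adj_of_minimal_isSeparator h hy)
    (exists_adj_of_minimal_isSeparator h' hx) (exists_adj_of_minimal_isSeparator h' hy)

/-- Dirac's theorem: `S` is a minimal set separating two nonadjacent vertices `a` and `b`, and
`U true` consists of `S` and of the component of `a` in the complement of `S`. -/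
theorem exists_isClique_iInter [Finite V] (hΓ : Γ.NoInducedCycleGT3) (hab : a ≠ b)
    (hadj : ¬ Γ.Adj a b) : ∃ U : Bool → Set V, (∀ i, U i ≠ Set.univ) ∧ (∀ v, ∃ i, v ∈ U i) ∧
      (∀ v w, Γ.Adj v w → ∃ i, v ∈ U i ∧ w ∈ U i) ∧ Γ.IsClique (⋂ i, U i) := by
  obtain ⟨S, -, hS⟩ := exists_minimal_le_of_wellFoundedLT (IsSeparator Γ · a b) _
    (isSeparator_compl_pair hab hadj)
  let C : Set V := Γ.componentComplMk hS.prop.left_notMem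
  have haC : a ∈ C := Γ.componentComplMk_mem _
  have hbC : b ∉ C := hS.prop.notMem_componentComplMk
  have hmem {u v : V} (hu : u ∈ C) (huv : Γ.Adj u v) : v ∈ C ∪ S :=
    or_iff_not_imp_right.2 fun hv => SimpleGraph.ComponentCompl.mem_of_adj _ _ hu hv huv
  refine ⟨fun i => cond i (C ∪ S) Cᶜ, Bool.forall_bool.2 ⟨?_, ?_⟩, fun v => ?_,
    fun v w hvw => ?_, ?_⟩
  · exact (Set.ne_univ_iff_exists_notMem _).2 ⟨a, not_not_intro haC⟩
  · exact (Set.ne_univ_iff_exists_notMem _).2 ⟨b, not_or_intro hbC hS.prop.right_notMem⟩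
  · by_cases hv : v ∈ C
    · exact ⟨true, .inl hv⟩
    · exact ⟨false, hv⟩
  · by_cases hv : v ∈ C
    · exact ⟨true, .inl hv, hmem hv hvw⟩
    by_cases hw : w ∈ C
    · exact ⟨true, hmem hw hvw.symm, .inl hw⟩
    · exact ⟨false, hv, hw⟩
  · refine (isClique_of_minimal_isSeparator hΓ hS).subset fun v hv => ?_
    rw [Set.mem_iInter] at hv
    exact (hv true).resolve_left (hv false)

end Separator

/-! ### Splitting along a clique separator -/

open Monoid (PushoutI)

section Restrict

variable {V : Type*}

theorem groupHom_ext {M : CoxeterMatrix V} {G : Type*} [Group G] {f g : M.Group →* G}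
    (h : ∀ v, f (M.simple v) = g (M.simple v)) : f = g :=
  M.toCoxeterSystem.ext_simple fun v => by rw [M.toCoxeterSystem_simple, h v]

variable (M : CoxeterMatrix V)

/-- The homomorphism between the Coxeter groups of two nested sets of vertices that extends their
inclusion. -/
noncomputable def restrictInclusion {S T : Set V} (h : S ⊆ T) :
    (M.restrict S).Group →* (M.restrict T).Group :=
  parabolicMap (Set.inclusion h) fun _ _ => rfl

/-- The homomorphism from the Coxeter group of a set of vertices to that of the whole graph that
extends the inclusion. -/
noncomputable def restrictSubtype (S : Set V) : (M.restrict S).Group →* M.Group :=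
  parabolicMap Subtype.val fun _ _ => rfl

theorem restrictInclusion_simple {S T : Set V} (h : S ⊆ T) (v : S) :
    restrictInclusion M h ((M.restrict S).simple v) =
      (M.restrict T).simple (Set.inclusion h v) :=
  parabolicMap_simple ..

theorem restrictSubtype_simple (S : Set V) (v : S) :
    restrictSubtype M S ((M.restrict S).simple v) = M.simple v :=
  parabolicMap_simple ..

theorem restrictSubtype_comp_restrictInclusion {S T : Set V} (h : S ⊆ T) :
    (restrictSubtype M T).comp (restrictInclusion M h) = restrictSubtype M S :=
  groupHom_ext fun v => by
    rw [MonoidHom.comp_apply, restrictInclusion_simple, restrictSubtype_simple,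
      restrictSubtype_simple, Set.coe_inclusion]

theorem restrictInclusion_injective [Finite V] {S T : Set V} (h : S ⊆ T) :
    Function.Injective (restrictInclusion M h) :=
  parabolicMap_injective (Set.inclusion_injective h) _

end Restrict

section Amalgam

variable {V : Type*} (M : CoxeterMatrix V) (U : Bool → Set V)

/-- The amalgamated product of the Coxeter groups of two sets of vertices over that of their
intersection. -/
abbrev IntersectionAmalgam : Type _ :=
  PushoutI fun i => restrictInclusion M (Set.iInter_subset U i)

/-- The homomorphism from the amalgamated product to the Coxeter group of the whole graph induced by
the inclusions of the two sets of vertices. -/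
noncomputable def amalgamToGroup : IntersectionAmalgam M U →* M.Group :=
  PushoutI.lift (fun i => restrictSubtype M (U i)) (restrictSubtype M (⋂ i, U i))
    fun _ => restrictSubtype_comp_restrictInclusion M _

/-- The image in the amalgamated product of the generator `v`, seen in the factor `i`. -/
noncomputable def amalgamSimple (i : Bool) {v : V} (hv : v ∈ U i) : IntersectionAmalgam M U :=
  PushoutI.of i ((M.restrict (U i)).simple ⟨v, hv⟩)

variable {U}

theorem amalgamToGroup_amalgamSimple (i : Bool) {v : V} (hv : v ∈ U i) :
    amalgamToGroup M U (amalgamSimple M U i hv) = M.simple v := by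
  rw [amalgamToGroup, amalgamSimple, PushoutI.lift_of, restrictSubtype_simple]

theorem amalgamSimple_eq {i j : Bool} {v : V} (hi : v ∈ U i) (hj : v ∈ U j) :
    amalgamSimple M U i hi = amalgamSimple M U j hj := by
  obtain rfl | hij := eq_or_ne i j
  · rfl
  have hv : v ∈ ⋂ k, U k := Set.mem_iInter.2 fun k => by
    cases i <;> cases j <;> cases k <;> trivial
  have eq_base {k : Bool} (hk : v ∈ U k) : amalgamSimple M U k hk =
      PushoutI.base _ ((M.restrict (⋂ k, U k)).simple ⟨v, hv⟩) := by
    rw [← PushoutI.of_apply_eq_base _ k, restrictInclusion_simple]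
    rfl
  rw [eq_base hi, eq_base hj]

theorem amalgamSimple_mul_amalgamSimple_pow (i : Bool) {v w : V} (hv : v ∈ U i) (hw : w ∈ U i) :
    (amalgamSimple M U i hv * amalgamSimple M U i hw) ^ M v w = 1 := by
  have h := (M.restrict (U i)).toCoxeterSystem.simple_mul_simple_pow ⟨v, hv⟩ ⟨w, hw⟩
  rw [CoxeterMatrix.toCoxeterSystem_simple] at h
  rw [amalgamSimple, amalgamSimple, ← map_mul, ← map_pow]
  exact (congrArg _ h).trans (map_one _)

variable {M} in
theorem exists_injective_intersectionAmalgam (hU : ∀ v, ∃ i, v ∈ U i)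
    (hM : ∀ v w, (¬ ∃ i, v ∈ U i ∧ w ∈ U i) → M v w = 0) :
    ∃ g : M.Group →* IntersectionAmalgam M U, Function.Injective g := by
  choose c hc using hU
  have hlift : M.IsLiftable fun v => amalgamSimple M U (c v) (hc v) := fun v w => by
    by_cases h : ∃ i, v ∈ U i ∧ w ∈ U i
    · obtain ⟨i, hv, hw⟩ := h
      change (amalgamSimple M U (c v) (hc v) * amalgamSimple M U (c w) (hc w)) ^ M v w = 1
      rw [amalgamSimple_eq M (hc v) hv, amalgamSimple_eq M (hc w) hw,
        amalgamSimple_mul_amalgamSimple_pow]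
    · rw [hM v w h, pow_zero]
  let g := M.toCoxeterSystem.lift ⟨_, hlift⟩
  have hg : (amalgamToGroup M U).comp g = .id _ := groupHom_ext fun v => by
    rw [MonoidHom.comp_apply, ← M.toCoxeterSystem_simple, M.toCoxeterSystem.lift_apply_simple hlift,
      amalgamToGroup_amalgamSimple, M.toCoxeterSystem_simple, MonoidHom.id_apply]
  exact ⟨g, Function.LeftInverse.injective (DFunLike.congr_fun hg)⟩

variable {M} in
theorem coherent_of_cover [Finite V] (hU : ∀ v, ∃ i, v ∈ U i)
    (hM : ∀ v w, (¬ ∃ i, v ∈ U i ∧ w ∈ U i) → M v w = 0)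
    (hcoh : ∀ i, Group.Coherent (M.restrict (U i)).Group)
    (hslender : Group.Slender (M.restrict (⋂ i, U i)).Group) : Group.Coherent M.Group := by
  obtain ⟨g, hg⟩ := exists_injective_intersectionAmalgam hU hM
  exact coherent_of_injective hg <|
    coherent_pushoutI (fun _ => restrictInclusion_injective M _) hcoh hslender

end Amalgam

section Clique

variable {V : Type*} [Finite V] {Γ : SimpleGraph V} {M : CoxeterMatrix V}

theorem coherent_of_eq_top (hΓ : Γ = ⊤)
    (hclique : ∀ S : Set V, Γ.IsClique S → Group.Slender (M.restrict S).Group) :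
    Group.Coherent M.Group := by
  have hslender := hclique Set.univ (by rw [hΓ]; exact fun _ _ _ _ => id)
  exact (hereditarilyFinitelyPresented_of_slender <| slender_of_injective (parabolicMap_injective
    (M := M.restrict Set.univ) (f := (⟨·, trivial⟩)) (fun _ _ h => congrArg Subtype.val h)
    fun _ _ => rfl) hslender).coherent

theorem slender_restrict_restrict
    (hclique : ∀ S : Set V, Γ.IsClique S → Group.Slender (M.restrict S).Group) (U : Set V)
    (T : Set U) (hT : (Γ.induce U).IsClique T) :
    Group.Slender ((M.restrict U).restrict T).Group := by
  have himage : Γ.IsClique (Subtype.val '' T) := by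
    rintro _ ⟨x, hx, rfl⟩ _ ⟨y, hy, rfl⟩ hxy
    exact hT hx hy fun h => hxy (congrArg _ h)
  let f : T → (Subtype.val '' T : Set V) := fun t => ⟨t, t, t.2, rfl⟩
  have hf : Function.Injective f := fun s t h => by
    simpa [f, Subtype.ext_iff] using h
  exact slender_of_injective (parabolicMap_injective (M := M.restrict (Subtype.val '' T)) hf
    fun _ _ => rfl) (hclique _ himage)

end Clique

end CoxeterCoherence

open CoxeterCoherence in
theorem coxeterGroup_coherent_of_noInducedCycleGT3_of_cliques_slender_general
    {V : Type*} [Finite V] (Γ : SimpleGraph V) (M : CoxeterMatrix V)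
    (hM : ∀ v w, v ≠ w → ¬ Γ.Adj v w → M v w = 0)
    (hchordal : Γ.NoInducedCycleGT3)
    (hclique : ∀ S : Set V, Γ.IsClique S → Group.Slender (M.restrict S).Group) :
    Group.Coherent M.Group := by
  induction hn : Nat.card V using Nat.strong_induction_on generalizing V with
  | _ n ih =>
    obtain hΓ | hΓ := eq_or_ne Γ ⊤
    · exact coherent_of_eq_top hΓ hclique
    obtain ⟨a, b, hab, hadj⟩ := SimpleGraph.ne_top_iff_exists_not_adj.1 hΓ
    obtain ⟨U, hne, hcover, hedge, hinter⟩ := exists_isClique_iInter hchordal hab hadj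
    have hzero (v w : V) (hvw : ¬ ∃ i, v ∈ U i ∧ w ∈ U i) : M v w = 0 := by
      refine hM v w ?_ (mt (hedge v w) hvw)
      rintro rfl
      exact hvw (by simpa using hcover v)
    refine coherent_of_cover hcover hzero (fun i => ?_) (hclique _ hinter)
    have hcard : Nat.card (U i) < n :=
      hn ▸ (Nat.card_coe_set_eq (U i)).trans_lt (Set.ncard_lt_card (hne i))
    exact ih _ hcard (Γ.induce (U i)) (M.restrict (U i))
      (fun v w hvw => hM v w (Subtype.coe_ne_coe.2 hvw))
      (fun k hk => ⟨fun e => (hchordal k hk).false (e.trans (SimpleGraph.Embedding.induce _))⟩)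
      (slender_restrict_restrict hclique (U i)) rfl

/-- If the Coxeter graph `Γ` (with edge labels in `{2,3,4,...}` recorded by
the Coxeter matrix `M`) has no induced cycle of length greater than `3`, and the Coxeter group
of every complete induced subgraph of `Γ` is slender, then the Coxeter group `C(Γ)` is
coherent. -/
theorem coxeterGroup_coherent_of_noInducedCycleGT3_of_cliques_slender
    {V : Type} [Fintype V] (Γ : SimpleGraph V) (M : CoxeterMatrix V)
    (hM : M.IsMatrixOf Γ)
    (hchordal : Γ.NoInducedCycleGT3)
    (hclique : ∀ S : Set V, Γ.IsClique S → Group.Slender (M.restrict S).Group) :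
    Group.Coherent M.Group :=
  coxeterGroup_coherent_of_noInducedCycleGT3_of_cliques_slender_general Γ M hM.2 hchordal hclique
end

section
/- Let Γ = (V,E) be a finite simplicial graph with an edge labeling ψ : E → {2,3,4,...}. If Γ is a tree, then the Coxeter group C(Γ) is coherent. -/
/-!
Each edge `v — w` of a forest spans a finite dihedral group, and folding the forest onto that edge
is an endomorphism of the Coxeter group `W` with this image. The common kernel `N` of these
endomorphisms therefore has finite index.

`N` is free: some surjection `π : L → W` from a free group splits over `N`, which embeds `N` in `L`.
By a nonabelian Shapiro lemma, splitting `π` over `N` amounts to finding a homomorphism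
`W → L ≀ᵣ (W ⧸ N)` covering the identity of `W`. Such a homomorphism is a choice of one involution
per vertex subject to one relation per edge, so on a forest it can be built edge by edge once a
choice at `v` extends across an edge `v — w`. It does: an involution over a nontrivial element of
`Q = W ⧸ N` is a value of a homomorphism `Q → L ≀ᵣ Q` conjugate to the standard one, and the value
of that homomorphism at the other vertex satisfies the edge relation, which already holds in `Q`.

A group `H` with a free subgroup of finite index is coherent. Its subgroups inherit this property,
so let `H` be finitely generated and `F → H` a surjection from a free group of finite rank. It
splits over the free subgroup, and the kernel of a surjection `q` with section `s` from a finitely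
generated group is normally generated by the elements `x⁻¹ * s (q x)`, for `x` a generator.
-/

section FinitePresentation

variable {A F H : Type*} [Group A] [Group F] [Group H]

theorem ker_isFinitelyNormallyGenerated_of_section [Group.FG A] (q : A →* H) (s : H →* A)
    (hs : q.comp s = MonoidHom.id H) : q.ker.IsFinitelyNormallyGenerated := by
  obtain ⟨S, hS⟩ := Group.FG.out (G := A)
  let R : Set A := (fun x ↦ x⁻¹ * s (q x)) '' S
  refine ⟨R, S.finite_toSet.image _, le_antisymm ?_ fun x hx ↦ ?_⟩
  · refine Subgroup.normalClosure_le_normal ?_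
    rintro _ ⟨x, -, rfl⟩
    simp [MonoidHom.mem_ker, show q (s (q x)) = q x from DFunLike.congr_fun hs (q x)]
  · have hmk : QuotientGroup.mk' (Subgroup.normalClosure R) =
        (QuotientGroup.mk' (Subgroup.normalClosure R)).comp (s.comp q) :=
      MonoidHom.eq_of_eqOn_dense hS fun y hy ↦
        QuotientGroup.eq.mpr (Subgroup.subset_normalClosure ⟨y, hy, rfl⟩)
    rw [← QuotientGroup.ker_mk' (Subgroup.normalClosure R), MonoidHom.mem_ker, hmk]
    simp [MonoidHom.mem_ker.mp hx]

theorem exists_section_of_isFreeGroup [IsFreeGroup H] {q : A →* H} (hq : Function.Surjective q) :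
    ∃ s : H →* A, q.comp s = MonoidHom.id H :=
  ⟨IsFreeGroup.lift fun a ↦ Function.surjInv hq (IsFreeGroup.of a), IsFreeGroup.ext_hom fun a ↦ by
    simp [IsFreeGroup.lift_of, Function.surjInv_eq]⟩

theorem isFinitelyNormallyGenerated_map_of_normal {N : Subgroup A}
    (hN : N.IsFinitelyNormallyGenerated) (f : A →* F) [(N.map f).Normal] :
    (N.map f).IsFinitelyNormallyGenerated := by
  obtain ⟨S, hfin, rfl⟩ := hN
  refine ⟨f '' S, hfin.image f, le_antisymm ?_ ?_⟩
  · exact Subgroup.normalClosure_le_normal (Set.image_mono Subgroup.subset_normalClosure)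
  · rw [Subgroup.map_le_iff_le_comap]
    exact Subgroup.normalClosure_le_normal fun x hx ↦
      Subgroup.subset_normalClosure (Set.mem_image_of_mem f hx)

theorem ker_isFinitelyNormallyGenerated_of_finiteIndex_isFreeGroup [Group.FG F] {f : F →* H}
    (hf : Function.Surjective f) (N : Subgroup H) [N.FiniteIndex] [IsFreeGroup N] :
    f.ker.IsFinitelyNormallyGenerated := by
  have : (N.comap f).FiniteIndex :=
    ⟨by rw [N.index_comap_of_surjective hf]; exact Subgroup.FiniteIndex.index_ne_zero⟩
  obtain ⟨s, hs⟩ := exists_section_of_isFreeGroup (f.subgroupComap_surjective_of_surjective N hf)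
  have hker : (f.subgroupComap N).ker.map (N.comap f).subtype = f.ker := by
    have : (f.subgroupComap N).ker = f.ker.subgroupOf (N.comap f) := by
      ext x
      exact Subtype.ext_iff
    rw [this, Subgroup.map_subgroupOf_eq_of_le (f.ker_le_comap N)]
  have : ((f.subgroupComap N).ker.map (N.comap f).subtype).Normal := hker ▸ inferInstance
  exact hker ▸ isFinitelyNormallyGenerated_map_of_normal
    (ker_isFinitelyNormallyGenerated_of_section _ s hs) _

theorem isFinitelyPresented_of_finiteIndex_isFreeGroup [hH : Group.FG H] (N : Subgroup H)
    [N.FiniteIndex] [IsFreeGroup N] : Group.IsFinitelyPresented H := by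
  obtain ⟨α, _, f, hf⟩ := Group.fg_iff_exists_freeGroup_hom_surjective_finite.mp hH
  exact .of_surjective f hf (ker_isFinitelyNormallyGenerated_of_finiteIndex_isFreeGroup hf N)

theorem isFreeGroup_of_injective [IsFreeGroup F] {j : H →* F} (hj : Function.Injective j) :
    IsFreeGroup H :=
  .ofMulEquiv (j.ofInjective hj).symm

theorem coherent_of_finiteIndex_isFreeGroup (K : Subgroup H) [K.FiniteIndex] [IsFreeGroup K] :
    Group.Coherent H := by
  intro J hJ
  have : Group.FG J := (Group.fg_iff_subgroup_fg J).mpr hJ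
  have : IsFreeGroup (K.subgroupOf J) :=
    isFreeGroup_of_injective (j := J.subtype.subgroupComap K) fun x y h ↦
      Subtype.ext (Subtype.ext (congrArg K.subtype h))
  have := isFinitelyPresented_of_finiteIndex_isFreeGroup (K.subgroupOf J)
  obtain ⟨n, rels, hfin, ⟨e⟩⟩ := Group.IsFinitelyPresented.exists_mulEquiv_presentedGroup (G := J)
  exact ⟨n, rels, hfin, ⟨e.symm⟩⟩

end FinitePresentation

section WreathProduct

open RegularWreathProduct

variable {L C Q : Type*} [Group L] [Group C] [Group Q]

/-- `T : L ≀ᵣ Q` covers `c` if each coordinate of `T` is a lift of `c` along `π`. A homomorphism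
`Φ : C →* L ≀ᵣ Q` with `Φ c` covering `c` for all `c` is what replaces a section of `π` over the
kernel of `C →* Q`. -/
def Covers (π : L →* C) (T : L ≀ᵣ Q) (c : C) : Prop :=
  ∀ x, π (T.left x) = c

namespace Covers

variable {π : L →* C} {S T : L ≀ᵣ Q} {b c : C}

theorem one : Covers π (1 : L ≀ᵣ Q) 1 := fun _ ↦ map_one π

theorem mul (hS : Covers π S b) (hT : Covers π T c) : Covers π (S * T) (b * c) := fun x ↦ by
  rw [mul_left, Pi.mul_apply, map_mul, hS, hT]

end Covers

/-- The coordinate at `1` is multiplicative on elements that do not permute the coordinates, and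
`π` recovers `k` from it, so it embeds the kernel in `L`. -/
theorem isFreeGroup_ker_of_covers [IsFreeGroup L] {π : L →* C} {Φ : C →* L ≀ᵣ Q}
    (hΦ : ∀ c, Covers π (Φ c) c) : IsFreeGroup (rightHom.comp Φ).ker := by
  let j : (rightHom.comp Φ).ker →* L :=
    { toFun k := (Φ k).left 1
      map_one' := by simp
      map_mul' k l := by
        have hk : (Φ k).right = 1 := k.2
        simp [hk] }
  refine isFreeGroup_of_injective (j := j) fun k l hkl ↦ Subtype.ext ?_
  calc (k : C) = π ((Φ k).left 1) := (hΦ k 1).symm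
    _ = π ((Φ l).left 1) := congrArg π hkl
    _ = l := hΦ l 1

/-- The conjugate by `⟨P, 1⟩` of the standard homomorphism `Q →* L ≀ᵣ Q`. When `P` lifts
`γ : Q →* C` along `π`, it covers `γ`. -/
def gaugeHom (P : Q → L) : Q →* L ≀ᵣ Q :=
  (MulAut.conj ⟨P, 1⟩).toMonoidHom.comp inl

theorem gaugeHom_left (P : Q → L) (q x : Q) :
    (gaugeHom P q).left x = P x * (P (q⁻¹ * x))⁻¹ := by
  simp [gaugeHom, MulAut.conj_apply]

theorem gaugeHom_right (P : Q → L) (q : Q) : (gaugeHom P q).right = q := by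
  simp [gaugeHom, MulAut.conj_apply]

theorem covers_gaugeHom {π : L →* C} {γ : Q →* C} {P : Q → L} (hP : ∀ x, π (P x) = γ x) (q : Q) :
    Covers π (gaugeHom P q) (γ q) := fun x ↦ by
  simp [gaugeHom_left, hP]

theorem exists_set_mem_iff_mul_notMem {q : Q} (hq : q * q = 1) (hq' : q ≠ 1) :
    ∃ A : Set Q, ∀ x, x ∈ A ↔ q * x ∉ A := by
  refine ⟨{x | WellOrderingRel x (q * x)}, fun x ↦ ?_⟩
  have hqx : q * (q * x) = x := by rw [← mul_assoc, hq, one_mul]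
  have hne : x ≠ q * x := fun h ↦ hq' (mul_eq_right.mp h.symm)
  simp only [Set.mem_ofPred_eq, hqx]
  exact ⟨fun h ↦ asymm h, fun h ↦
    (trichotomous_of WellOrderingRel x (q * x)).resolve_right (by tauto)⟩

/-- The equation `gaugeHom P T.right = T` determines `P` at `T.right * x` from `P` at `x`, so `P`
can be prescribed on one point of each orbit of the fixed-point free involution
`x ↦ T.right * x`. -/
theorem exists_gaugeHom_eq {π : L →* C} (hπ : Function.Surjective π) (γ : Q →* C) {T : L ≀ᵣ Q}
    (hTT : T * T = 1) (hne : T.right ≠ 1) (hT : Covers π T (γ T.right)) :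
    ∃ P : Q → L, (∀ x, π (P x) = γ x) ∧ gaugeHom P T.right = T := by
  classical
  have hqq : T.right * T.right = 1 := congrArg right hTT
  have hinv : T.right⁻¹ = T.right := inv_eq_of_mul_eq_one_left hqq
  have hqqx (x : Q) : T.right * (T.right * x) = x := by rw [← mul_assoc, hqq, one_mul]
  have hleft (x : Q) : T.left x * T.left (T.right * x) = 1 := by
    simpa [hinv] using congrFun (congrArg left hTT) x
  obtain ⟨A, hA⟩ := exists_set_mem_iff_mul_notMem hqq hne
  let σ : C → L := Function.surjInv hπ
  have hσ (c : C) : π (σ c) = c := Function.surjInv_eq hπ c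
  refine ⟨fun x ↦ if x ∈ A then σ (γ x) else T.left x * σ (γ (T.right * x)), fun x ↦ ?_, ?_⟩
  · by_cases hx : x ∈ A
    · simp [hx, hσ]
    · simp only [hx, if_false]
      rw [map_mul, hT, hσ, ← map_mul, hqqx]
  · refine RegularWreathProduct.ext (funext fun x ↦ ?_) (gaugeHom_right _ _)
    simp only [gaugeHom_left, hinv, hqqx]
    by_cases hx : x ∈ A
    · simp [hx, (hA x).mp hx, eq_inv_of_mul_eq_one_left (hleft x)]
    · simp [hx, not_not.mp (mt (hA x).mpr hx)]

/-- The elements `T` of `L ≀ᵣ Q` with `T * T = 1` which lie over `q` and cover `c`: the admissible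
images of a Coxeter generator `c` whose class in the finite quotient is `q`. -/
def InvolutiveLift (π : L →* C) (c : C) (q : Q) : Type _ :=
  {T : L ≀ᵣ Q // T * T = 1 ∧ T.right = q ∧ Covers π T c}

namespace InvolutiveLift

variable {π : L →* C} {c c' : C} {q q' : Q} {γ : Q →* C}

/-- The involutive lift of `c = γ q` obtained by evaluating `gaugeHom P` at `q`. -/
def ofGauge {P : Q → L} (hP : ∀ x, π (P x) = γ x) (hc : γ q = c) (hq : q * q = 1) :
    InvolutiveLift π c q :=
  ⟨gaugeHom P q, by rw [← map_mul, hq, map_one], gaugeHom_right P q, hc ▸ covers_gaugeHom hP q⟩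

theorem nonempty (hπ : Function.Surjective π) (hc : γ q = c) (hq : q * q = 1) :
    Nonempty (InvolutiveLift π c q) :=
  ⟨ofGauge (P := fun x ↦ Function.surjInv hπ (γ x)) (fun _ ↦ Function.surjInv_eq hπ _) hc hq⟩

theorem exists_mul_pow_eq_one (hπ : Function.Surjective π) (hc : γ q = c) (hc' : γ q' = c')
    (hq : q ≠ 1) (hq' : q' * q' = 1) {m : ℕ} (hm : (q * q') ^ m = 1) (T : InvolutiveLift π c q) :
    ∃ T' : InvolutiveLift π c' q', (T.1 * T'.1) ^ m = 1 := by
  obtain ⟨T, hTT, rfl, hT⟩ := T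
  obtain ⟨P, hP, hPT⟩ := exists_gaugeHom_eq hπ γ hTT hq (hc ▸ hT)
  refine ⟨ofGauge hP hc' hq', ?_⟩
  calc (T * gaugeHom P q') ^ m = (gaugeHom P T.right * gaugeHom P q') ^ m := by rw [hPT]
    _ = gaugeHom P ((T.right * q') ^ m) := by rw [map_pow, map_mul]
    _ = 1 := by rw [hm, map_one]

end InvolutiveLift

end WreathProduct

section Forest

variable {V : Type*} {Γ : SimpleGraph V} {X : V → Type*}

/-- Transport of a point of the fibre over `u` along a walk from `u`, by a map for each edge. -/
def walkTransport (step : ∀ v w, Γ.Adj v w → X v → X w) : ∀ {u v}, Γ.Walk u v → X u → X v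
  | _, _, .nil, x => x
  | _, _, .cons h p, x => walkTransport step p (step _ _ h x)

theorem walkTransport_concat (step : ∀ v w, Γ.Adj v w → X v → X w) {u v w : V}
    (p : Γ.Walk u v) (h : Γ.Adj v w) (x : X u) :
    walkTransport step (p.concat h) x = step _ _ h (walkTransport step p x) := by
  induction p with
  | nil => rfl
  | cons h' _ ih => exact ih h (step _ _ h' x)

theorem eq_concat_or_eq_concat_of_isAcyclic (hΓ : Γ.IsAcyclic) {u v w : V} (h : Γ.Adj v w)
    {p : Γ.Walk u v} {q : Γ.Walk u w} (hp : p.IsPath) (hq : q.IsPath) :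
    q = p.concat h ∨ p = q.concat h.symm := by
  by_cases hv : v ∈ q.support
  · exact .inl (hΓ.path_concat hp hq h hv)
  · exact .inr (hΓ.path_concat hq hp h.symm
      (hΓ.mem_support_of_ne_mem_support_of_adj_of_isPath hp hq h hv))

theorem exists_family_of_isAcyclic (hΓ : Γ.IsAcyclic) [∀ v, Nonempty (X v)]
    (R : ∀ v w, X v → X w → Prop) (hR : ∀ v w x y, R v w x y → R w v y x)
    (hext : ∀ v w, Γ.Adj v w → ∀ x, ∃ y, R v w x y) :
    ∃ a : ∀ v, X v, ∀ v w, Γ.Adj v w → R v w (a v) (a w) := by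
  choose step hstep using hext
  let root (v : V) : V := (Γ.connectedComponentMk v).out
  have hroot (v : V) : ∃ p : Γ.Walk (root v) v, p.IsPath :=
    (SimpleGraph.ConnectedComponent.exact (Quot.out_eq _)).exists_isPath
  have htransport {u v w : V} (h : Γ.Adj v w) (p : Γ.Walk u v) (q : Γ.Walk u w) (hp : p.IsPath)
      (hq : q.IsPath) (x : X u) :
      R v w (walkTransport step p x) (walkTransport step q x) := by
    obtain rfl | rfl := eq_concat_or_eq_concat_of_isAcyclic hΓ h hp hq
    · exact walkTransport_concat step p h x ▸ hstep _ _ h _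
    · exact walkTransport_concat step q h.symm x ▸ hR _ _ _ _ (hstep _ _ h.symm _)
  choose path hpath using hroot
  refine ⟨fun v ↦ walkTransport step (path v) (Classical.arbitrary _), fun v w h ↦ ?_⟩
  have hvw : root w = root v :=
    congrArg Quot.out (SimpleGraph.ConnectedComponent.sound h.symm.reachable)
  suffices ∀ r, r = root v → ∀ q : Γ.Walk r w, q.IsPath →
      R v w (walkTransport step (path v) (Classical.arbitrary _))
        (walkTransport step q (Classical.arbitrary _)) from this _ hvw _ (hpath w)
  rintro _ rfl q hq
  exact htransport h _ q (hpath v) hq _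

end Forest

section Involutions

variable {G : Type*} [Group G] {a b : G}

theorem mem_zpowers_or_mul_mem_zpowers_of_mem_closure_pair (ha : a * a = 1) (hb : b * b = 1)
    {y : G} (hy : y ∈ Subgroup.closure {a, b}) :
    y ∈ Subgroup.zpowers (a * b) ∨ a * y ∈ Subgroup.zpowers (a * b) := by
  have hinv (x : G) (hx : x = a ∨ x = b) : x⁻¹ = x := by
    obtain rfl | rfl := hx
    exacts [inv_eq_of_mul_eq_one_left ha, inv_eq_of_mul_eq_one_left hb]
  have hab : a * b ∈ Subgroup.zpowers (a * b) := Subgroup.mem_zpowers _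
  have hby (y : G) : b * y = (a * b)⁻¹ * (a * y) := by
    rw [mul_inv_rev, hinv a (.inl rfl), hinv b (.inr rfl), mul_assoc, ← mul_assoc a, ha, one_mul]
  have hmul (x : G) (hx : x = a ∨ x = b) (y : G)
      (hy : y ∈ Subgroup.zpowers (a * b) ∨ a * y ∈ Subgroup.zpowers (a * b)) :
      x * y ∈ Subgroup.zpowers (a * b) ∨ a * (x * y) ∈ Subgroup.zpowers (a * b) := by
    obtain rfl | rfl := hx
    · rwa [← mul_assoc, ha, one_mul, or_comm]
    · rwa [← mul_assoc a, Subgroup.mul_mem_cancel_left _ hab, hby,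
        Subgroup.mul_mem_cancel_left _ (inv_mem hab), or_comm]
  induction hy using Subgroup.closure_induction_left with
  | one => exact .inl (one_mem _)
  | mul_left x hx y _ ih => exact hmul x hx y ih
  | inv_mul_cancel x hx y _ ih => exact (hinv x hx).symm ▸ hmul x hx y ih

theorem finite_closure_pair_of_mul_self_eq_one (ha : a * a = 1) (hb : b * b = 1)
    (hab : IsOfFinOrder (a * b)) : (Subgroup.closure {a, b} : Set G).Finite := by
  have hfin := finite_zpowers.mpr hab
  exact (hfin.union (hfin.preimage (mul_right_injective a).injOn)).subset fun _ ↦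
    mem_zpowers_or_mul_mem_zpowers_of_mem_closure_pair ha hb

theorem mul_pow_eq_one_swap {n : ℕ} (h : (a * b) ^ n = 1) :
    (b * a) ^ n = 1 := by
  have hconj : b * a = b * (a * b) * b⁻¹ := by group
  rw [hconj, conj_pow, h, mul_one, mul_inv_cancel]

end Involutions

section Coxeter

open RegularWreathProduct

variable {V W : Type*} [Group W] {M : CoxeterMatrix V} {Γ : SimpleGraph V}

theorem isLiftable_of_forall_adj (hM : M.IsMatrixOf Γ) {G : Type*} [Monoid G] {f : V → G}
    (hsq : ∀ v, f v * f v = 1) (hf : ∀ v w, Γ.Adj v w → (f v * f w) ^ M v w = 1) :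
    M.IsLiftable f := by
  intro v w
  obtain rfl | hne := eq_or_ne v w
  · rw [hsq, one_pow]
  · by_cases h : Γ.Adj v w
    · exact hf v w h
    · rw [hM.2 v w hne h, pow_zero]

theorem simple_ne_one (cs : CoxeterSystem M W) (v : V) : cs.simple v ≠ 1 := fun h ↦ by
  simpa [h] using cs.length_simple v

open Classical in
/-- The simple reflection `v` or `w`, according to the side of the edge `s(v, w)` on which `u`
lies. When `s(v, w)` is a bridge, this folds the graph onto that edge. -/
noncomputable def foldSimple (cs : CoxeterSystem M W) (Γ : SimpleGraph V) (v w u : V) : W :=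
  if (Γ.deleteEdges {s(v, w)}).Reachable v u then cs.simple v else cs.simple w

theorem foldSimple_left (cs : CoxeterSystem M W) (v w : V) :
    foldSimple cs Γ v w v = cs.simple v :=
  if_pos .rfl

theorem foldSimple_right (cs : CoxeterSystem M W) (hM : M.IsMatrixOf Γ) (hΓ : Γ.IsAcyclic)
    {v w : V} (h : M v w ≠ 0) : foldSimple cs Γ v w w = cs.simple w := by
  obtain rfl | hne := eq_or_ne v w
  · exact foldSimple_left cs v v
  · exact if_neg (SimpleGraph.isAcyclic_iff_forall_adj_isBridge.mp hΓ
      (not_not.mp (mt (hM.2 v w hne) h)))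

theorem foldSimple_eq_or_eq (cs : CoxeterSystem M W) (v w u : V) :
    foldSimple cs Γ v w u = cs.simple v ∨ foldSimple cs Γ v w u = cs.simple w := by
  unfold foldSimple
  split_ifs <;> simp

theorem foldSimple_eq_of_adj (cs : CoxeterSystem M W) {v w x y : V} (h : Γ.Adj x y)
    (hxy : s(x, y) ≠ s(v, w)) : foldSimple cs Γ v w x = foldSimple cs Γ v w y := by
  have hadj : (Γ.deleteEdges {s(v, w)}).Adj x y := by simp [h, hxy]
  have hiff : (Γ.deleteEdges {s(v, w)}).Reachable v x ↔
      (Γ.deleteEdges {s(v, w)}).Reachable v y :=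
    ⟨fun hx ↦ hx.trans hadj.reachable, fun hy ↦ hy.trans hadj.symm.reachable⟩
  unfold foldSimple
  classical exact if_congr hiff rfl rfl

theorem foldSimple_mul_self (cs : CoxeterSystem M W) (v w u : V) :
    foldSimple cs Γ v w u * foldSimple cs Γ v w u = 1 := by
  obtain h | h := foldSimple_eq_or_eq cs v w u <;> rw [h, cs.simple_mul_simple_self]

theorem foldSimple_mul_pow (cs : CoxeterSystem M W) (v w x y : V) :
    (foldSimple cs Γ v w x * foldSimple cs Γ v w y) ^ M v w = 1 := by
  obtain hx | hx := foldSimple_eq_or_eq cs v w x <;>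
    obtain hy | hy := foldSimple_eq_or_eq cs v w y <;>
    rw [hx, hy]
  · rw [cs.simple_mul_simple_self, one_pow]
  · exact cs.simple_mul_simple_pow v w
  · exact cs.simple_mul_simple_pow' v w
  · rw [cs.simple_mul_simple_self, one_pow]

theorem isLiftable_foldSimple (cs : CoxeterSystem M W) (hM : M.IsMatrixOf Γ) (v w : V) :
    M.IsLiftable (foldSimple cs Γ v w) := by
  refine isLiftable_of_forall_adj hM (foldSimple_mul_self cs v w) fun x y h ↦ ?_
  by_cases hxy : s(x, y) = s(v, w)
  · obtain ⟨rfl, rfl⟩ | ⟨rfl, rfl⟩ := Sym2.eq_iff.mp hxy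
    · exact foldSimple_mul_pow cs x y x y
    · rw [M.symmetric]
      exact foldSimple_mul_pow cs y x x y
  · rw [foldSimple_eq_of_adj cs h hxy, foldSimple_mul_self, one_pow]

/-- The endomorphism of `W` folding `Γ` onto `s(v, w)`; for an edge of a forest it is a retraction
onto the subgroup generated by the two simple reflections. -/
noncomputable def foldHom (cs : CoxeterSystem M W) (hM : M.IsMatrixOf Γ) (v w : V) : W →* W :=
  cs.lift ⟨foldSimple cs Γ v w, isLiftable_foldSimple cs hM v w⟩

theorem foldHom_simple (cs : CoxeterSystem M W) (hM : M.IsMatrixOf Γ) (v w u : V) :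
    foldHom cs hM v w (cs.simple u) = foldSimple cs Γ v w u :=
  cs.lift_apply_simple _ u

theorem finite_range_foldHom (cs : CoxeterSystem M W) (hM : M.IsMatrixOf Γ) {v w : V}
    (h : M v w ≠ 0) : Finite (foldHom cs hM v w).range := by
  have hle : (foldHom cs hM v w).range ≤ Subgroup.closure {cs.simple v, cs.simple w} := by
    rw [MonoidHom.range_eq_map, ← cs.subgroup_closure_range_simple, MonoidHom.map_closure,
      Subgroup.closure_le]
    rintro _ ⟨_, ⟨u, rfl⟩, rfl⟩
    rw [foldHom_simple]
    exact Subgroup.subset_closure (foldSimple_eq_or_eq cs v w u)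
  exact (finite_closure_pair_of_mul_self_eq_one (cs.simple_mul_simple_self v)
    (cs.simple_mul_simple_self w) (isOfFinOrder_iff_pow_eq_one.mpr
      ⟨M v w, Nat.pos_of_ne_zero h, cs.simple_mul_simple_pow v w⟩)).subset hle

theorem exists_finiteIndex_le_ker_fixing_simple [Finite V] (cs : CoxeterSystem M W)
    (hM : M.IsMatrixOf Γ) (hΓ : Γ.IsAcyclic) :
    ∃ N : Subgroup W, N.Normal ∧ N.FiniteIndex ∧ ∀ v w, M v w ≠ 0 →
      ∃ φ : W →* W, N ≤ φ.ker ∧ φ (cs.simple v) = cs.simple v ∧ φ (cs.simple w) = cs.simple w := by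
  let fold (e : {e : V × V // M e.1 e.2 ≠ 0}) : W →* W := foldHom cs hM e.1.1 e.1.2
  have hfin (e) : (fold e).ker.FiniteIndex :=
    have := finite_range_foldHom cs hM e.2
    Subgroup.finiteIndex_ker _
  refine ⟨⨅ e, (fold e).ker, Subgroup.normal_iInf_normal fun e ↦ inferInstance,
    Subgroup.finiteIndex_iInf hfin, fun v w h ↦ ⟨fold ⟨(v, w), h⟩, iInf_le _ _, ?_, ?_⟩⟩
  · exact (foldHom_simple cs hM v w v).trans (foldSimple_left cs v w)
  · exact (foldHom_simple cs hM v w w).trans (foldSimple_right cs hM hΓ h)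

theorem exists_wreath_lift (cs : CoxeterSystem M W) (hM : M.IsMatrixOf Γ) (hΓ : Γ.IsAcyclic)
    {L Q : Type*} [Group L] [Group Q] {π : L →* W} (hπ : Function.Surjective π) {ρ : W →* Q}
    (hρ : ∀ v w, M v w ≠ 0 →
      ∃ γ : Q →* W, γ (ρ (cs.simple v)) = cs.simple v ∧ γ (ρ (cs.simple w)) = cs.simple w) :
    ∃ Φ : W →* L ≀ᵣ Q, ∀ g, Covers π (Φ g) g := by
  have hsq (v : V) : ρ (cs.simple v) * ρ (cs.simple v) = 1 := by
    rw [← map_mul, cs.simple_mul_simple_self, map_one]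
  have hne (v : V) : ρ (cs.simple v) ≠ 1 := fun h ↦ by
    obtain ⟨γ, hγ, -⟩ := hρ v v (by simp)
    exact simple_ne_one cs v (by rw [← hγ, h, map_one])
  have (v : V) : Nonempty (InvolutiveLift π (cs.simple v) (ρ (cs.simple v))) := by
    obtain ⟨γ, hγ, -⟩ := hρ v v (by simp)
    exact InvolutiveLift.nonempty hπ hγ (hsq v)
  obtain ⟨T, hT⟩ := exists_family_of_isAcyclic hΓ
    (X := fun v ↦ InvolutiveLift π (cs.simple v) (ρ (cs.simple v)))
    (fun v w S T ↦ (S.1 * T.1) ^ M v w = 1)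
    (fun v w S T h ↦ by rw [M.symmetric]; exact mul_pow_eq_one_swap h)
    (fun v w h ↦ by
      obtain ⟨γ, hv, hw⟩ := hρ v w (by have := hM.1 v w h; omega)
      exact InvolutiveLift.exists_mul_pow_eq_one hπ hv hw (hne v) (hsq w)
        (by rw [← map_mul, ← map_pow, cs.simple_mul_simple_pow, map_one]))
  refine ⟨cs.lift ⟨fun v ↦ (T v).1, isLiftable_of_forall_adj hM (fun v ↦ (T v).2.1) hT⟩,
    fun g ↦ ?_⟩
  induction g using cs.simple_induction_left with
  | one => rw [map_one]; exact .one
  | mul_simple_left g v hg =>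
    rw [map_mul, cs.lift_apply_simple]
    exact (T v).2.2.2.mul hg

theorem exists_finiteIndex_isFreeGroup [Finite V] (cs : CoxeterSystem M W)
    (hM : M.IsMatrixOf Γ) (hΓ : Γ.IsAcyclic) :
    ∃ K : Subgroup W, K.FiniteIndex ∧ IsFreeGroup K := by
  obtain ⟨N, _, _, hN⟩ := exists_finiteIndex_le_ker_fixing_simple cs hM hΓ
  have hπ : Function.Surjective (FreeGroup.lift (id : W → W)) := fun g ↦
    ⟨FreeGroup.of g, FreeGroup.lift_apply_of⟩
  obtain ⟨Φ, hΦ⟩ := exists_wreath_lift cs hM hΓ hπ (ρ := QuotientGroup.mk' N) fun v w h ↦ by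
    obtain ⟨φ, hφ, hv, hw⟩ := hN v w h
    exact ⟨QuotientGroup.lift N φ hφ, hv, hw⟩
  exact ⟨(rightHom.comp Φ).ker, inferInstance, isFreeGroup_ker_of_covers hΦ⟩

end Coxeter

theorem coxeterGroup_coherent_of_isTree_general {V : Type*} [Finite V] (Γ : SimpleGraph V)
    (M : CoxeterMatrix V) (hM : M.IsMatrixOf Γ) (hΓ : Γ.IsAcyclic) :
    Group.Coherent M.Group := by
  obtain ⟨K, _, _⟩ := exists_finiteIndex_isFreeGroup M.toCoxeterSystem hM hΓ
  exact coherent_of_finiteIndex_isFreeGroup K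

/-- If the Coxeter graph `Γ` (with edge labels in `{2,3,4,...}` recorded by
the Coxeter matrix `M`) is a tree, then the Coxeter group `C(Γ)` is coherent. -/
theorem coxeterGroup_coherent_of_isTree
    {V : Type} [Fintype V] (Γ : SimpleGraph V) (M : CoxeterMatrix V)
    (hM : M.IsMatrixOf Γ)
    (htree : Γ.IsTree) :
    Group.Coherent M.Group :=
  coxeterGroup_coherent_of_isTree_general Γ M hM htree.isAcyclic
end
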